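/- Let m be a non-negative integer and let x > 0 be real with x not an integer. Then ∑_{n=1}^∞ σ_{2m+1/2}(n) n^{−1/2} e^{−2π√(2nx)} sin(π/4 + 2π√(2nx)) = ζ(1/2−2m)/(2π√x) − (2m)!·ζ(−1/2−2m)/(√2·(2πx)^{2m+1}) + (1/√2)·ζ(1/2)·ζ(−2m) + (√x/π^{2m+1/2}) ∑_{n=1}^∞ σ_{2m+1/2}(n) n^{−2m−3/2} [ −((2m)!/√π)·(n/(2x))^{2m+3/2}·( (1+in/x)^{−(2m+1)} + (1−in/x)^{−(2m+1)} ) + ((−1)^m n/(2^{2m} π x))·Γ(2m+1/2)·W_m(n,x) ], where W_m(n,x) denotes the convergent series ₃F₂(1/4, 3/4, 1; 1/4−m, 3/4−m; −n²/x²) when n < x, and denotes its analytic continuation 1 − ₃F₂(1/4+m, 3/4+m, 1; 1/4, 3/4; −x²/n²) (a convergent series since x < n) when n > x. -/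

import Mathlib

open Complex Finset
open scoped Real BigOperators Classical

/-- Generalized divisor sum `σ_r(n) = ∑_{d ∣ n} d^r` with real exponent. -/
noncomputable def rsigma (r : ℝ) (n : ℕ) : ℝ := ∑ d ∈ n.divisors, (d : ℝ) ^ r

/-- Rising factorial `(a)_k`. -/
noncomputable def poch (a : ℂ) (k : ℕ) : ℂ := ∏ i ∈ Finset.range k, (a + i)

/-- Generalized hypergeometric series `₃F₂`. -/
noncomputable def F32 (a₁ a₂ a₃ b₁ b₂ z : ℂ) : ℂ :=
  ∑' k : ℕ, poch a₁ k * poch a₂ k * poch a₃ k /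
    (poch b₁ k * poch b₂ k * (k.factorial : ℂ)) * z ^ k

/-- `W_m(n,x)`: the series `₃F₂(1/4,3/4,1;1/4−m,3/4−m;−n²/x²)` for `n < x`, and its
analytic continuation `1 − ₃F₂(1/4+m,3/4+m,1;1/4,3/4;−x²/n²)` for `n > x`. -/
noncomputable def Wm (m : ℕ) (n : ℕ) (x : ℝ) : ℂ :=
  if (n : ℝ) < x then
    F32 (1 / 4) (3 / 4) 1 (1 / 4 - (m : ℂ)) (3 / 4 - (m : ℂ)) (-(n : ℂ) ^ 2 / (x : ℂ) ^ 2)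
  else
    1 - F32 (1 / 4 + (m : ℂ)) (3 / 4 + (m : ℂ)) 1 (1 / 4) (3 / 4) (-(x : ℂ) ^ 2 / (n : ℂ) ^ 2)


noncomputable section

namespace Coal

open MeasureTheory Set Filter Topology

lemma hs_of {α : Type*} {f g : α → ℂ} {a b : ℂ} (h : HasSum f a) (hf : ∀ i, f i = g i) (hab : a = b) :
    HasSum g b := by
  subst hab; exact (funext hf : f = g) ▸ h

def kap : ℂ := exp ((π / 8 : ℝ) * I)

def om : ℂ := kap ^ 2

lemma kap_pow4 : kap ^ 4 = I := by
  rw [kap, ← Complex.exp_nat_mul]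
  rw [show ((4 : ℕ) : ℂ) * (((π / 8 : ℝ) : ℂ) * I) = π / 2 * I by push_cast; ring]
  exact Complex.exp_pi_div_two_mul_I

lemma om_sq : om ^ 2 = I := by rw [om, ← pow_mul]; exact kap_pow4

lemma norm_kap : ‖kap‖ = 1 := by rw [kap, Complex.norm_exp_ofReal_mul_I]

lemma norm_om : ‖om‖ = 1 := by rw [om, norm_pow, norm_kap, one_pow]

lemma kap_ne : kap ≠ 0 := by rw [← norm_ne_zero_iff, norm_kap]; exact one_ne_zero

lemma om_ne : om ≠ 0 := by rw [← norm_ne_zero_iff, norm_om]; exact one_ne_zero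

lemma kap_re : 0 < kap.re := by
  rw [kap, Complex.exp_ofReal_mul_I_re]
  apply Real.cos_pos_of_mem_Ioo
  constructor <;> linarith [Real.pi_pos]

lemma kap_im : 0 < kap.im := by
  rw [kap, Complex.exp_ofReal_mul_I_im]
  apply Real.sin_pos_of_pos_of_lt_pi <;> linarith [Real.pi_pos]

lemma om_eq : om = ((√2 / 2 : ℝ) : ℂ) * (1 + I) := by
  have : om = exp ((π / 4 : ℝ) * I) := by
    rw [om, kap, ← Complex.exp_nat_mul]
    congr 1; push_cast; ring
  rw [this, Complex.exp_mul_I, ← Complex.ofReal_cos, ← Complex.ofReal_sin, Real.cos_pi_div_four,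
    Real.sin_pi_div_four]
  ring

lemma om_re : om.re = √2 / 2 := by rw [om_eq, Complex.re_ofReal_mul]; simp

lemma om_im : om.im = √2 / 2 := by rw [om_eq, Complex.im_ofReal_mul]; simp

lemma om_re_pos : 0 < om.re := by rw [om_re]; positivity

/-- `∑_{d ≥ 1} d^{2m} e^{-2π d u}` -/
def GG (m : ℕ) (u : ℂ) : ℂ := ∑' d : ℕ, ((d : ℂ) + 1) ^ (2 * m) * exp (-(2 * π * ((d : ℂ) + 1) * u))

/-- symmetric pair of poles -/
def PP (m : ℕ) (y : ℝ) (w : ℂ) : ℂ :=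
  ((w + I * y)⁻¹) ^ (2 * m + 1) + ((w - I * y)⁻¹) ^ (2 * m + 1)

/-- `p`-th derivative in `y` of `2w/(w²+y²)` -/
def DD (p : ℕ) (y : ℝ) (w : ℂ) : ℂ :=
  I * ((-1) ^ p * (p.factorial : ℂ)) * (((y + I * w)⁻¹) ^ (p + 1) - ((y - I * w)⁻¹) ^ (p + 1))

def CC (m : ℕ) : ℂ := ((2 * m).factorial : ℂ) / (2 * π) ^ (2 * m + 1)

def P0 (m : ℕ) : ℂ := if m = 0 then -1 / 2 else 0

lemma P0_eq (m : ℕ) : P0 m = riemannZeta (-2 * m) := by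
  rcases Nat.eq_zero_or_pos m with h | h
  · subst h; simp [P0, riemannZeta_zero]; try norm_num
  · obtain ⟨k, rfl⟩ : ∃ k, m = k + 1 := ⟨m - 1, by omega⟩
    rw [P0, if_neg (by omega)]
    have := riemannZeta_neg_two_mul_nat_add_one k
    rw [← this]; push_cast; ring_nf

lemma PP_eq (m : ℕ) (y : ℝ) (w : ℂ) :
    PP m y w = (-1) ^ m / ((2 * m).factorial : ℂ) * DD (2 * m) y w := by
  have h1 : (y + I * w)⁻¹ = -I * (w - I * y)⁻¹ := by
    rw [show (y : ℂ) + I * w = I * (w - I * y) by ring_nf; simp, mul_inv, Complex.inv_I]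
  have h2 : (y - I * w)⁻¹ = I * (w + I * y)⁻¹ := by
    rw [show (y : ℂ) - I * w = -I * (w + I * y) by ring_nf; simp, mul_inv, inv_neg, Complex.inv_I]
    ring
  have hf : ((2 * m).factorial : ℂ) ≠ 0 := by exact_mod_cast Nat.factorial_ne_zero _
  have hI : I ^ (2 * m) = (-1) ^ m := by rw [pow_mul, Complex.I_sq]
  have hmm : ((-1 : ℂ)) ^ m * (-1) ^ m = 1 := by rw [← mul_pow]; simp
  rw [DD, PP, h1, h2, mul_pow, mul_pow, neg_pow I, pow_succ I, pow_succ (-1 : ℂ), hI, pow_mul (-1 : ℂ)]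
  generalize (w + I * y)⁻¹ = a at *
  generalize (w - I * y)⁻¹ = b at *
  have h3 : ((-1 : ℂ) ^ 2) ^ m = 1 := by norm_num
  rw [h3]
  field_simp
  linear_combination (-(a ^ (2 * m + 1) + b ^ (2 * m + 1))) * hmm + 
    ((-1) ^ m * (-1) ^ m * (a ^ (2 * m + 1) + b ^ (2 * m + 1))) * Complex.I_sq

end Coal

end

noncomputable section

namespace Coal

open MeasureTheory Set Filter Topology


lemma GG_term (m d : ℕ) (u : ℂ) : ((d : ℂ) + 1) ^ (2 * m) * exp (-(2 * π * ((d : ℂ) + 1) * u)) =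
    ((d + 1 : ℕ) : ℂ) ^ (2 * m) * exp (-(2 * π * u)) ^ (d + 1) := by
  rw [← Complex.exp_nat_mul]; push_cast; congr 2; ring

lemma norm_q_lt {u : ℂ} (hu : 0 < u.re) : ‖exp (-(2 * π * u))‖ < 1 := by
  rw [Complex.norm_exp, Real.exp_lt_one_iff]
  have : (-(2 * (π : ℂ) * u)).re = -(2 * π * u.re) := by simp
  rw [this]; have := Real.pi_pos; have := mul_pos this hu; linarith

lemma GG_summable_norm (m : ℕ) {u : ℂ} (hu : 0 < u.re) :
    Summable fun d : ℕ => ‖((d : ℂ) + 1) ^ (2 * m) * exp (-(2 * π * ((d : ℂ) + 1) * u))‖ := by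
  have := (summable_nat_add_iff 1).mpr
    (summable_norm_pow_mul_geometric_of_norm_lt_one (R := ℂ) (2 * m) (norm_q_lt hu))
  refine this.congr fun d => ?_
  rw [GG_term]

lemma GG_eq (m : ℕ) {u : ℂ} (hu : 0 < u.re) :
    ∑' n : ℕ, (n : ℂ) ^ (2 * m) * exp (-(2 * π * u)) ^ n = (if m = 0 then 1 else 0) + GG m u := by
  rw [((summable_norm_pow_mul_geometric_of_norm_lt_one (R := ℂ) (2 * m) (norm_q_lt hu)).of_norm).tsum_eq_zero_add]
  congr 1
  · rcases Nat.eq_zero_or_pos m with h | h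
    · simp [h]
    · simp [h.ne', show 2 * m ≠ 0 by omega]
  · rw [GG]; congr 1; ext d; rw [GG_term]

lemma GG_expand (m : ℕ) {u : ℂ} (hu : 0 < u.re) :
    HasSum (fun j : ℕ => CC m * PP m ((j : ℝ) + 1) u)
      (GG m u - P0 m - CC m * (u⁻¹) ^ (2 * m + 1)) := by
  have hz : 0 < (I * u).im := by simpa using hu
  let z : UpperHalfPlane := ⟨I * u, hz⟩
  have hzc : (z : ℂ) = I * u := rfl
  have hq : exp (2 * π * I * z) = exp (-(2 * π * u)) := by
    rw [hzc]; congr 1; linear_combination (2 * π * u) * Complex.I_sq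
  have hpi : (π : ℂ) ≠ 0 := by exact_mod_cast Real.pi_ne_zero
  have hu0 : u ≠ 0 := by rintro rfl; simp at hu
  rcases Nat.eq_zero_or_pos m with h | h
  · subst h
    have h1 := (summable_cotTerm (UpperHalfPlane.coe_mem_integerComplement z)).hasSum
    have h2 := cot_series_rep' (UpperHalfPlane.coe_mem_integerComplement z)
    unfold cotTerm at h1
    rw [← h2, pi_mul_cot_pi_q_exp, hq] at h1
    have h3 := GG_eq 0 hu
    simp only [mul_zero, pow_zero, one_mul, if_true] at h3
    rw [h3] at h1
    have h4 := h1.mul_left (CC 0 * I)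
    refine hs_of h4 (fun j => ?_) ?_
    · symm
      rw [hzc, PP]
      have e1 : I * u - ((j : ℂ) + 1) = I * (u + I * (((j : ℝ) + 1 : ℝ) : ℂ)) := by
        push_cast; linear_combination ((j : ℂ) + 1) * (-Complex.I_sq)
      have e2 : I * u + ((j : ℂ) + 1) = I * (u - I * (((j : ℝ) + 1 : ℝ) : ℂ)) := by
        push_cast; linear_combination ((j : ℂ) + 1) * (Complex.I_sq)
      rw [e1, e2, one_div, one_div, mul_inv, mul_inv, Complex.inv_I]
      simp only [mul_zero, zero_add, pow_one]
      generalize (u + I * (((j : ℝ) + 1 : ℝ) : ℂ))⁻¹ = a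
      generalize (u - I * (((j : ℝ) + 1 : ℝ) : ℂ))⁻¹ = b
      linear_combination (CC 0 * (a + b)) * (Complex.I_sq)
    · symm
      rw [hzc, one_div, mul_inv, Complex.inv_I]
      simp only [CC, P0, if_true]
      simp
      field_simp
      linear_combination (-1 + 2 * u * π * GG 0 u + π * u) * Complex.I_sq
  · have h1 := EisensteinSeries.qExpansion_identity (k := 2 * m) (by omega) z
    rw [hq, GG_eq m hu, if_neg h.ne', zero_add] at h1
    have hs : Summable fun n : ℤ => 1 / ((z : ℂ) + n) ^ (2 * m + 1) := by
      have := EisensteinSeries.linear_right_summable (z : ℂ) 1 (k := 2 * m + 1) (by omega)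
      refine this.congr fun n => ?_
      rw [one_div, Int.cast_one, one_mul]
      norm_cast
    have h2 := hs.hasSum.nat_add_neg
    rw [h1] at h2
    have h3 := (hasSum_nat_add_iff' 1).mpr h2
    have h4 := h3.mul_left (CC m * I * (-1) ^ m)
    have hf : ((2 * m).factorial : ℂ) ≠ 0 := by exact_mod_cast Nat.factorial_ne_zero _
    have hmm : ((-1 : ℂ)) ^ m * (-1) ^ m = 1 := by rw [← mul_pow]; simp
    have hI : I ^ (2 * m + 1) = (-1) ^ m * I := by rw [pow_succ, pow_mul, Complex.I_sq]
    have hinv : ∀ a : ℂ, 1 / (I * a) ^ (2 * m + 1) = -((-1) ^ m * I * (a⁻¹) ^ (2 * m + 1)) := by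
      intro a
      have hneg : ((-1 : ℂ) ^ m)⁻¹ = (-1) ^ m := by rw [← inv_pow]; norm_num
      rw [mul_pow, hI, one_div, mul_inv, mul_inv, hneg, Complex.inv_I, inv_pow]; ring
    refine hs_of h4 (fun j => ?_) ?_
    · symm
      rw [hzc, PP]
      have e1 : I * u + ((-((j + 1 : ℕ) : ℤ) : ℤ) : ℂ) = I * (u + I * (((j : ℝ) + 1 : ℝ) : ℂ)) := by
        push_cast; linear_combination ((j : ℂ) + 1) * (-Complex.I_sq)
      have e2 : I * u + (((j + 1 : ℕ) : ℤ) : ℂ) = I * (u - I * (((j : ℝ) + 1 : ℝ) : ℂ)) := by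
        push_cast; linear_combination ((j : ℂ) + 1) * (Complex.I_sq)
      rw [e1, e2, hinv, hinv]
      generalize ((u + I * (((j : ℝ) + 1 : ℝ) : ℂ))⁻¹ ^ (2 * m + 1)) = a
      generalize ((u - I * (((j : ℝ) + 1 : ℝ) : ℂ))⁻¹ ^ (2 * m + 1)) = b
      linear_combination (CC m * (a + b)) * (Complex.I_sq) * ((-1) ^ m * (-1) ^ m) - CC m * (a + b) * hmm
    · symm
      have e3 : (-2 * (π : ℂ) * I) ^ (2 * m + 1) = -((2 * π) ^ (2 * m + 1) * ((-1) ^ m * I)) := by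
        rw [← hI, show -2 * (π : ℂ) * I = -((2 * π) * I) by ring, Odd.neg_pow ⟨m, rfl⟩, mul_pow]
      rw [e3]
      simp only [Finset.range_one, Finset.sum_singleton, Nat.cast_zero, Int.cast_zero, neg_zero, add_zero]
      rw [hzc, hinv, P0, if_neg h.ne']
      have h2p : (2 * (π : ℂ)) ^ (2 * m + 1) ≠ 0 := by simpa using hpi
      have hC : CC m * ((2 * π) ^ (2 * m + 1) / ((2 * m).factorial : ℂ)) = 1 := by
        rw [CC]; field_simp
      generalize u⁻¹ ^ (2 * m + 1) = a
      have e4 : -((2 * (π : ℂ)) ^ (2 * m + 1) * ((-1) ^ m * I)) / ((2 * m).factorial : ℂ) * GG m u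
        = -(((2 * π) ^ (2 * m + 1) / ((2 * m).factorial : ℂ)) * ((-1) ^ m * I)) * GG m u := by ring
      rw [e4]
      generalize ((2 * (π : ℂ)) ^ (2 * m + 1) / ((2 * m).factorial : ℂ)) = c at *
      linear_combination (-(GG m u)) * hC + (CC m * c * GG m u - CC m * a) * ((-1) ^ m * (-1) ^ m) * Complex.I_sq
        + (-CC m * c * GG m u + CC m * a) * hmm
end Coal
end

noncomputable section

namespace Coal

open MeasureTheory Set Filter Topology

lemma pow_diff {A B : ℂ} {R : ℝ} (hA : ‖A‖ ≤ R) (hB : ‖B‖ ≤ R) (p : ℕ) :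
    ‖A ^ (p + 1) - B ^ (p + 1)‖ ≤ (p + 1) * R ^ p * ‖A - B‖ := by
  have hR : 0 ≤ R := (norm_nonneg _).trans hA
  induction p with
  | zero => simp
  | succ p ih =>
    have e : A ^ (p + 1 + 1) - B ^ (p + 1 + 1) = A * (A ^ (p + 1) - B ^ (p + 1)) + (A - B) * B ^ (p + 1) := by
      ring
    rw [e]
    calc _ ≤ ‖A‖ * ‖A ^ (p + 1) - B ^ (p + 1)‖ + ‖A - B‖ * ‖B‖ ^ (p + 1) := by
          refine (norm_add_le _ _).trans ?_
          rw [norm_mul, norm_mul, norm_pow]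
      _ ≤ R * ((p + 1) * R ^ p * ‖A - B‖) + ‖A - B‖ * R ^ (p + 1) := by gcongr
      _ = _ := by push_cast; ring

lemma den1 {y ρ : ℝ} (hy : 0 < y) (hρ : 0 ≤ ρ) : y / √2 ≤ ‖(y : ℂ) + I * (om * ρ)‖ := by
  have h2 : √2 ^ 2 = 2 := Real.sq_sqrt (by norm_num)
  have hs : (0:ℝ) < √2 := by positivity
  apply le_of_sq_le_sq _ (norm_nonneg _)
  rw [← Complex.normSq_eq_norm_sq, Complex.normSq_apply, om_eq, div_pow, h2]
  simp
  have e : (y + -(√2 / 2 * ρ)) * (y + -(√2 / 2 * ρ)) + √2 / 2 * ρ * (√2 / 2 * ρ)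
      = (ρ - √2 / 2 * y) ^ 2 + y ^ 2 / 2 := by
    linear_combination (ρ ^ 2 / 2 - y ^ 2 / 4) * h2
  rw [e]
  linarith [sq_nonneg (ρ - √2 / 2 * y)]

lemma den2 {y ρ : ℝ} (hy : 0 < y) (hρ : 0 ≤ ρ) : y / √2 ≤ ‖(y : ℂ) - I * (om * ρ)‖ := by
  have h2 : √2 ^ 2 = 2 := Real.sq_sqrt (by norm_num)
  have hs : (0:ℝ) < √2 := by positivity
  apply le_of_sq_le_sq _ (norm_nonneg _)
  rw [← Complex.normSq_eq_norm_sq, Complex.normSq_apply, om_eq, div_pow, h2]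
  simp
  nlinarith [mul_nonneg (mul_nonneg hs.le hy.le) hρ, sq_nonneg y, sq_nonneg ρ]

lemma den1_ne {y ρ : ℝ} (hy : 0 < y) (hρ : 0 ≤ ρ) : (y : ℂ) + I * (om * ρ) ≠ 0 := by
  have := den1 hy hρ
  have h : 0 < y / √2 := by positivity
  exact norm_pos_iff.mp (h.trans_le this)

lemma den2_ne {y ρ : ℝ} (hy : 0 < y) (hρ : 0 ≤ ρ) : (y : ℂ) - I * (om * ρ) ≠ 0 := by
  have := den2 hy hρ
  have h : 0 < y / √2 := by positivity
  exact norm_pos_iff.mp (h.trans_le this)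

lemma den_mul (y ρ : ℝ) : ((y : ℂ) + I * (om * ρ)) * ((y : ℂ) - I * (om * ρ)) = y ^ 2 + I * ρ ^ 2 := by
  linear_combination (-(om ^ 2 * ρ ^ 2)) * Complex.I_sq + ρ ^ 2 * om_sq

lemma den3 (y ρ : ℝ) : y ^ 2 ≤ ‖(y : ℂ) ^ 2 + I * ρ ^ 2‖ := by
  have := Complex.abs_re_le_norm ((y : ℂ) ^ 2 + I * ρ ^ 2)
  have h : ((y : ℂ) ^ 2 + I * ρ ^ 2) = ((y ^ 2 : ℝ) : ℂ) + ((ρ ^ 2 : ℝ) : ℂ) * I := by push_cast; ring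
  rw [h] at this ⊢
  simp only [Complex.add_re, Complex.ofReal_re, Complex.re_ofReal_mul, Complex.I_re, mul_zero, add_zero] at this
  exact (le_abs_self _).trans this

lemma den4 (y ρ : ℝ) : ρ ^ 2 ≤ ‖(y : ℂ) ^ 2 + I * ρ ^ 2‖ := by
  have := Complex.abs_im_le_norm ((y : ℂ) ^ 2 + I * ρ ^ 2)
  have h : ((y : ℂ) ^ 2 + I * ρ ^ 2) = ((y ^ 2 : ℝ) : ℂ) + ((ρ ^ 2 : ℝ) : ℂ) * I := by push_cast; ring
  rw [h] at this ⊢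
  simp only [Complex.add_im, Complex.ofReal_im, Complex.im_ofReal_mul, Complex.I_im, mul_one, zero_add] at this
  exact (le_abs_self _).trans this

lemma DD_bound (p : ℕ) {y ρ : ℝ} (hy : 0 < y) (hρ : 0 ≤ ρ) :
    ‖DD p y (om * ρ)‖ ≤ p.factorial * ((p + 1) * (√2 / y) ^ p * (2 * (ρ / ‖(y : ℂ) ^ 2 + I * ρ ^ 2‖))) := by
  have h1 := den1 hy hρ
  have h2 := den2 hy hρ
  have n1 := den1_ne hy hρ
  have n2 := den2_ne hy hρ
  have hp : 0 < y / √2 := by positivity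
  rw [DD, norm_mul, norm_mul, Complex.norm_I, one_mul, norm_mul, norm_pow, norm_neg, norm_one, one_pow,
    one_mul, Complex.norm_natCast]
  gcongr
  refine (pow_diff (R := √2 / y) ?_ ?_ p).trans ?_
  · rw [norm_inv, ← inv_div]; exact inv_anti₀ hp h1
  · rw [norm_inv, ← inv_div]; exact inv_anti₀ hp h2
  · gcongr
    rw [inv_sub_inv n1 n2, den_mul, norm_div, ← mul_div_assoc]
    gcongr
    rw [show (y : ℂ) - I * (om * ρ) - (y + I * (om * ρ)) = -(2 * I * om * ρ) by ring, norm_neg, norm_mul,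
      norm_mul, norm_mul, norm_om, Complex.norm_I, Complex.norm_real, Real.norm_of_nonneg hρ]
    simp

/-- majorant profile -/
def AA (ρ : ℝ) : ℝ := min ρ (ρ ^ (1 / 4 : ℝ))

lemma AA_nonneg {ρ : ℝ} (hρ : 0 ≤ ρ) : 0 ≤ AA ρ := le_min hρ (by positivity)

lemma AA_cont : Continuous AA := by
  unfold AA
  exact continuous_id.min (Real.continuous_rpow_const (by norm_num))

lemma frac_bound {y ρ : ℝ} (hy : 1 ≤ y) (hρ : 0 < ρ) :
    ρ / ‖(y : ℂ) ^ 2 + I * ρ ^ 2‖ ≤ y ^ (-(5 / 4) : ℝ) * AA ρ := by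
  have h3 := den3 y ρ
  have h4 := den4 y ρ
  set B := ‖(y : ℂ) ^ 2 + I * ρ ^ 2‖
  have hy0 : 0 < y := by linarith
  have hB : 0 < B := lt_of_lt_of_le (by positivity) h3
  rw [AA, mul_min_of_nonneg _ _ (by positivity), le_min_iff]
  constructor
  · rw [div_le_iff₀ hB]
    calc ρ = y ^ (-(5 / 4) : ℝ) * ρ * y ^ (5 / 4 : ℝ) := by
          rw [mul_right_comm, ← Real.rpow_add hy0]; norm_num
      _ ≤ y ^ (-(5 / 4) : ℝ) * ρ * y ^ (2 : ℝ) := by gcongr <;> norm_num [hy]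
      _ ≤ _ := by rw [Real.rpow_two]; gcongr
  · rw [div_le_iff₀ hB]
    have e : B = B ^ (5 / 8 : ℝ) * B ^ (3 / 8 : ℝ) := by
      rw [← Real.rpow_add hB]; norm_num
    calc ρ = y ^ (-(5 / 4) : ℝ) * ρ ^ (1 / 4 : ℝ) * ((y ^ 2) ^ (5 / 8 : ℝ) * (ρ ^ 2) ^ (3 / 8 : ℝ)) := by
          rw [← Real.rpow_natCast, ← Real.rpow_natCast, ← Real.rpow_mul hy0.le, ← Real.rpow_mul hρ.le]
          rw [mul_mul_mul_comm, ← Real.rpow_add hy0, ← Real.rpow_add hρ]; norm_num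
      _ ≤ y ^ (-(5 / 4) : ℝ) * ρ ^ (1 / 4 : ℝ) * (B ^ (5 / 8 : ℝ) * B ^ (3 / 8 : ℝ)) := by gcongr
      _ = _ := by rw [← e]

def KK (m : ℕ) : ℝ := (2 * m + 1) * √2 ^ (2 * m) * 2

lemma KK_nonneg (m : ℕ) : 0 ≤ KK m := by unfold KK; positivity

lemma PP_bound (m : ℕ) {y ρ : ℝ} (hy : 1 ≤ y) (hρ : 0 < ρ) :
    ‖PP m y (om * ρ)‖ ≤ KK m * y ^ (-(5 / 4) : ℝ) * AA ρ := by
  have hf : (0:ℝ) < ((2 * m).factorial : ℝ) := by exact_mod_cast Nat.factorial_pos _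
  have hy0 : 0 < y := by linarith
  have h := DD_bound (2 * m) hy0 hρ.le
  have h2 := frac_bound hy hρ
  rw [PP_eq, norm_mul, norm_div, norm_pow, norm_neg, norm_one, one_pow, Complex.norm_natCast,
    one_div, inv_mul_le_iff₀ hf]
  refine h.trans (mul_le_mul_of_nonneg_left ?_ hf.le)
  calc (((2 * m : ℕ) : ℝ) + 1) * (√2 / y) ^ (2 * m) * (2 * (ρ / ‖(y : ℂ) ^ 2 + I * ρ ^ 2‖))
      ≤ (((2 * m : ℕ) : ℝ) + 1) * (√2) ^ (2 * m) * (2 * (y ^ (-(5 / 4) : ℝ) * AA ρ)) := by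
        gcongr
        exact div_le_self (by positivity) hy
    _ = _ := by rw [KK]; push_cast; ring

lemma AA_int1 {x : ℝ} (hx : 0 < x) : IntegrableOn (fun v : ℝ => AA (x / v ^ 2)) (Ioi 0) := by
  have hm : AEStronglyMeasurable (fun v : ℝ => AA (x / v ^ 2)) volume :=
    (AA_cont.measurable.comp (by fun_prop)).aestronglyMeasurable
  rw [← Ioc_union_Ioi_eq_Ioi (zero_le_one' ℝ)]
  apply IntegrableOn.union
  · have h1 : IntegrableOn (fun v : ℝ => x ^ (1 / 4 : ℝ) * v ^ (-(1 / 2) : ℝ)) (Ioc 0 1) := by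
      have := (intervalIntegral.intervalIntegrable_rpow' (a := 0) (b := 1) (r := -(1/2)) (by norm_num)).1
      exact this.const_mul _
    refine h1.mono' hm.restrict ?_
    filter_upwards [ae_restrict_mem measurableSet_Ioc] with v hv
    have hv0 := hv.1
    rw [Real.norm_of_nonneg (AA_nonneg (by positivity))]
    refine (min_le_right _ _).trans (le_of_eq ?_)
    rw [Real.div_rpow hx.le (by positivity), ← Real.rpow_natCast, ← Real.rpow_mul hv0.le, div_eq_mul_inv,
      ← Real.rpow_neg hv0.le]
    norm_num
  · have h1 : IntegrableOn (fun v : ℝ => x * v ^ (-2 : ℝ)) (Ioi 1) :=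
      (integrableOn_Ioi_rpow_of_lt (by norm_num) one_pos).const_mul _
    refine h1.mono' hm.restrict ?_
    filter_upwards [ae_restrict_mem measurableSet_Ioi] with v hv
    have hv0 : 0 < v := lt_trans one_pos hv
    rw [Real.norm_of_nonneg (AA_nonneg (by positivity))]
    refine (min_le_left _ _).trans (le_of_eq ?_)
    rw [div_eq_mul_inv, Real.rpow_neg hv0.le, Real.rpow_two]

lemma AA_int2 {x : ℝ} (hx : 0 < x) :
    IntegrableOn (fun v : ℝ => AA (v ^ 2) * AA (x / v ^ 2)) (Ioi 0) := by
  have hm : AEStronglyMeasurable (fun v : ℝ => AA (v ^ 2) * AA (x / v ^ 2)) volume :=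
    ((AA_cont.measurable.comp (by fun_prop)).mul
      (AA_cont.measurable.comp (by fun_prop))).aestronglyMeasurable
  rw [← Ioc_union_Ioi_eq_Ioi (zero_le_one' ℝ)]
  apply IntegrableOn.union
  · refine ((AA_int1 hx).mono_set Ioc_subset_Ioi_self).mono' hm.restrict ?_
    filter_upwards [ae_restrict_mem measurableSet_Ioc] with v hv
    have hv0 := hv.1
    have h1 := AA_nonneg (ρ := v ^ 2) (by positivity)
    have h2 := AA_nonneg (ρ := x / v ^ 2) (by positivity)
    rw [Real.norm_of_nonneg (by positivity)]
    have : AA (v ^ 2) ≤ 1 := (min_le_left _ _).trans (by have := hv.2; nlinarith)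
    nlinarith
  · have h1 : IntegrableOn (fun v : ℝ => x * v ^ (-(3 / 2) : ℝ)) (Ioi 1) :=
      (integrableOn_Ioi_rpow_of_lt (by norm_num) one_pos).const_mul _
    refine h1.mono' hm.restrict ?_
    filter_upwards [ae_restrict_mem measurableSet_Ioi] with v hv
    have hv0 : 0 < v := lt_trans one_pos hv
    have h1 := AA_nonneg (ρ := v ^ 2) (by positivity)
    have h2 := AA_nonneg (ρ := x / v ^ 2) (by positivity)
    rw [Real.norm_of_nonneg (by positivity)]
    calc AA (v ^ 2) * AA (x / v ^ 2) ≤ ((v ^ 2) ^ (1 / 4 : ℝ)) * (x / v ^ 2) :=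
          mul_le_mul (min_le_right _ _) (min_le_left _ _) h2 (by positivity)
      _ = x * (v ^ (1 / 2 : ℝ) * v ^ (-2 : ℝ)) := by
          have e : (v ^ 2) ^ (1 / 4 : ℝ) = v ^ (1 / 2 : ℝ) := by
            rw [← Real.rpow_natCast, ← Real.rpow_mul hv0.le]; norm_num
          rw [e, Real.rpow_neg hv0.le, Real.rpow_two]; ring
      _ = _ := by rw [← Real.rpow_add hv0]; norm_num
end Coal
end

noncomputable section

namespace Coal

open MeasureTheory Set Filter Topology


def phi (a b v : ℝ) : ℝ := b * v - a / v

lemma phi_deriv (a b : ℝ) {v : ℝ} (hv : 0 < v) : HasDerivAt (phi a b) (b + a / v ^ 2) v := by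
  have h1 : HasDerivAt (fun v : ℝ => b * v) b v := by simpa using (hasDerivAt_id v).const_mul b
  have h2 : HasDerivAt (fun v : ℝ => a / v) (-(a / v ^ 2)) v := by
    exact ((hasDerivAt_inv hv.ne').const_mul a).congr_deriv (by ring)
  exact (h1.sub h2).congr_deriv (by ring)

lemma phi_inj {a b : ℝ} (ha : 0 < a) (hb : 0 < b) : InjOn (phi a b) (Ioi 0) := by
  apply StrictMonoOn.injOn
  intro u hu v hv huv
  have hu : 0 < u := hu
  have h1 : a / v < a / u := div_lt_div_of_pos_left ha hu huv
  have h2 : b * u < b * v := by gcongr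
  simp only [phi]; linarith

lemma phi_image {a b : ℝ} (ha : 0 < a) (hb : 0 < b) : Set.image (phi a b) (Ioi 0) = univ := by
  ext u
  simp only [mem_image, mem_univ, iff_true]
  have hs : √(u ^ 2 + 4 * a * b) ^ 2 = u ^ 2 + 4 * a * b := Real.sq_sqrt (by positivity)
  have hpos : 0 < u + √(u ^ 2 + 4 * a * b) := by
    have : |u| < √(u ^ 2 + 4 * a * b) := by
      apply Real.lt_sqrt_of_sq_lt; rw [sq_abs]; have := mul_pos ha hb; nlinarith
    have := neg_abs_le u
    linarith
  refine ⟨(u + √(u ^ 2 + 4 * a * b)) / (2 * b), by simp only [Set.mem_Ioi]; positivity, ?_⟩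
  set s := √(u ^ 2 + 4 * a * b)
  simp only [phi]
  field_simp
  linear_combination hs

lemma glasser {c : ℂ} (hc : 0 < c.re) {a b : ℝ} (ha : 0 < a) (hb : 0 < b) :
    IntegrableOn (fun v : ℝ => exp (-c * (phi a b v : ℂ) ^ 2)) (Ioi 0) ∧
    ∫ v in Ioi (0:ℝ), exp (-c * (phi a b v : ℂ) ^ 2) = (π / c) ^ (1 / 2 : ℂ) / (2 * b) := by
  set g : ℝ → ℂ := fun u => exp (-c * (u : ℂ) ^ 2) with hg
  have hgi : Integrable g := integrable_cexp_neg_mul_sq hc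
  have hgI : ∫ u, g u = (π / c) ^ (1 / 2 : ℂ) := integral_gaussian_complex hc
  have hd : ∀ v ∈ Ioi (0:ℝ), HasDerivWithinAt (phi a b) (b + a / v ^ 2) (Ioi 0) v :=
    fun v hv => (phi_deriv a b hv).hasDerivWithinAt
  have hi1 := integrableOn_image_iff_integrableOn_abs_deriv_smul measurableSet_Ioi hd (phi_inj ha hb) g
  have hI1 := integral_image_eq_integral_abs_deriv_smul measurableSet_Ioi hd (phi_inj ha hb) g
  rw [phi_image ha hb] at hi1 hI1
  rw [integrableOn_univ] at hi1
  rw [setIntegral_univ, hgI] at hI1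
  have hA := hi1.mp hgi
  have habs : ∀ v ∈ Ioi (0:ℝ), |b + a / v ^ 2| = b + a / v ^ 2 := fun v hv => by
    have : (0:ℝ) < v := hv
    rw [abs_of_pos]; positivity
  have hmeas : AEStronglyMeasurable (fun v : ℝ => g (phi a b v)) (volume.restrict (Ioi 0)) := by
    have : Measurable (fun v : ℝ => g (phi a b v)) := by
      apply Measurable.comp (by fun_prop)
      unfold phi; fun_prop
    exact this.aestronglyMeasurable
  have hF : IntegrableOn (fun v : ℝ => g (phi a b v)) (Ioi 0) := by
    refine Integrable.mono (hA.const_mul ((b : ℂ)⁻¹)) hmeas ?_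
    filter_upwards [ae_restrict_mem measurableSet_Ioi] with v hv
    rw [habs v hv, norm_mul, norm_smul, norm_inv, Complex.norm_real, Real.norm_of_nonneg hb.le,
      ← mul_assoc]
    have hv0 : (0:ℝ) < v := hv
    have h0 : 0 ≤ a / v ^ 2 := by positivity
    rw [Real.norm_of_nonneg (by positivity)]
    refine le_mul_of_one_le_left (norm_nonneg _) ?_
    rw [inv_mul_eq_div, one_le_div hb]; linarith
  refine ⟨hF, ?_⟩
  -- the inversion
  have hd2 : ∀ v ∈ Ioi (0:ℝ), HasDerivWithinAt (fun v : ℝ => a / b / v) (-(a / b / v ^ 2)) (Ioi 0) v := by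
    intro v hv
    have hv : (0:ℝ) < v := hv
    have h2 : HasDerivAt (fun v : ℝ => a / b / v) (-(a / b / v ^ 2)) v :=
      ((hasDerivAt_inv hv.ne').const_mul (a / b)).congr_deriv (by ring)
    exact h2.hasDerivWithinAt
  have hinj : InjOn (fun v : ℝ => a / b / v) (Ioi 0) := by
    intro u hu v hv h
    have hu : (0:ℝ) < u := hu
    have hv : (0:ℝ) < v := hv
    have h : a / b / u = a / b / v := h
    field_simp at h
    exact h.symm
  have him : Set.image (fun v : ℝ => a / b / v) (Set.Ioi 0) = Set.Ioi 0 := by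
    ext u
    constructor
    · rintro ⟨v, hv, rfl⟩
      have hv : (0:ℝ) < v := hv
      simp only [Set.mem_Ioi]; positivity
    · intro hu
      have hu : (0:ℝ) < u := hu
      refine ⟨a / b / u, by simp only [Set.mem_Ioi]; positivity, ?_⟩
      simp only; field_simp
  have hI2 := integral_image_eq_integral_abs_deriv_smul measurableSet_Ioi hd2 hinj (fun v => g (phi a b v))
  rw [him] at hI2
  have hI3 : ∫ v in Ioi (0:ℝ), g (phi a b v) = ∫ v in Ioi (0:ℝ), (a / b / v ^ 2 : ℝ) • g (phi a b v) := by
    rw [hI2]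
    refine setIntegral_congr_fun measurableSet_Ioi fun v hv => ?_
    have hv : (0:ℝ) < v := hv
    have e : phi a b (a / b / v) = - phi a b v := by
      simp only [phi]; field_simp; ring
    simp only [e, hg]
    rw [abs_neg, abs_of_pos (by positivity)]
    simp
  have hsplit : ∫ v in Ioi (0:ℝ), |b + a / v ^ 2| • g (phi a b v) =
      b * (∫ v in Ioi (0:ℝ), g (phi a b v)) + b * ∫ v in Ioi (0:ℝ), (a / b / v ^ 2 : ℝ) • g (phi a b v) := by
    have hi3 : IntegrableOn (fun v : ℝ => (b:ℂ) * (a / b / v ^ 2 : ℝ) • g (phi a b v)) (Ioi 0) := by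
      refine IntegrableOn.congr_fun (hA.sub (hF.const_mul (b:ℂ))) ?_ measurableSet_Ioi
      intro v hv
      have hv0 : (0:ℝ) < v := hv
      simp only [Pi.sub_apply, habs v hv]
      simp only [Complex.real_smul]; push_cast
      have : (v:ℂ) ≠ 0 := by exact_mod_cast hv0.ne'
      have : (b:ℂ) ≠ 0 := by exact_mod_cast hb.ne'
      field_simp; ring
    rw [← integral_const_mul, ← integral_const_mul, ← integral_add (hF.const_mul (b:ℂ)) hi3]
    refine setIntegral_congr_fun measurableSet_Ioi fun v hv => ?_
    have hv0 : (0:ℝ) < v := hv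
    simp only [habs v hv]
    simp only [Complex.real_smul]; push_cast
    have : (v:ℂ) ≠ 0 := by exact_mod_cast hv0.ne'
    have : (b:ℂ) ≠ 0 := by exact_mod_cast hb.ne'
    field_simp
  rw [hsplit, ← hI3] at hI1
  have : (b:ℂ) ≠ 0 := by exact_mod_cast hb.ne'
  change ∫ v in Ioi (0:ℝ), g (phi a b v) = _
  rw [hI1]; field_simp; ring
end Coal
end

noncomputable section

namespace Coal

open MeasureTheory Set Filter Topology


lemma gl2 {c : ℂ} (hc : 0 < c.re) {E D : ℝ} (hE : 0 < E) (hD : 0 < D) :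
    IntegrableOn (fun v : ℝ => exp (-c * (E * v ^ 2 + D / v ^ 2))) (Ioi 0) ∧
    ∫ v in Ioi (0:ℝ), exp (-c * (E * v ^ 2 + D / v ^ 2)) =
      exp (-c * (2 * √(E * D) : ℝ)) * ((π / c) ^ (1 / 2 : ℂ) / (2 * √E)) := by
  have hg := glasser hc (Real.sqrt_pos.mpr hD) (Real.sqrt_pos.mpr hE)
  have e : ∀ v ∈ Ioi (0:ℝ), exp (-c * (2 * √(E * D) : ℝ)) * exp (-c * (phi (√D) (√E) v : ℂ) ^ 2) =
      exp (-c * (E * v ^ 2 + D / v ^ 2)) := by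
    intro v hv
    have hv : (0:ℝ) < v := hv
    rw [← Complex.exp_add]
    congr 1
    have h1 : (phi (√D) (√E) v) ^ 2 = E * v ^ 2 + D / v ^ 2 - 2 * √(E * D) := by
      rw [phi, Real.sqrt_mul hE.le]
      have := Real.sq_sqrt hD.le
      have := Real.sq_sqrt hE.le
      field_simp
      ring_nf
      simp only [Real.sq_sqrt hD.le, Real.sq_sqrt hE.le]
      ring
    have h2 : (phi (√D) (√E) v : ℂ) ^ 2 = E * v ^ 2 + D / v ^ 2 - (2 * √(E * D) : ℝ) := by
      rw [← Complex.ofReal_pow, h1]; push_cast; ring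
    rw [h2]; ring
  constructor
  · exact IntegrableOn.congr_fun (hg.1.const_mul (exp (-c * (2 * √(E * D) : ℝ)))) e measurableSet_Ioi
  · rw [← setIntegral_congr_fun measurableSet_Ioi e, integral_const_mul, hg.2]

lemma exp_norm (c : ℂ) (E D v : ℝ) : ‖exp (-c * (E * v ^ 2 + D / v ^ 2))‖ =
    Real.exp (-c.re * (E * v ^ 2 + D / v ^ 2)) := by
  rw [Complex.norm_exp]
  congr 1
  rw [show (E * v ^ 2 + D / v ^ 2 : ℂ) = ((E * v ^ 2 + D / v ^ 2 : ℝ) : ℂ) by push_cast; ring,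
    Complex.re_mul_ofReal]; simp

lemma gl3 {c : ℂ} (hc : 0 < c.re) {E D : ℝ} (hE : 0 < E) (hD : 0 < D) :
    ∫ v in Ioi (0:ℝ), ‖exp (-c * (E * v ^ 2 + D / v ^ 2))‖ =
      Real.exp (-c.re * (2 * √(E * D))) * (√(π / c.re) / (2 * √E)) := by
  have h := (gl2 (c := (c.re : ℂ)) (by simpa using hc) hE hD).2
  have e : ∀ v : ℝ, exp (-(c.re : ℂ) * (E * v ^ 2 + D / v ^ 2)) =
    ((‖exp (-c * (E * v ^ 2 + D / v ^ 2))‖ : ℝ) : ℂ) := by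
    intro v; rw [exp_norm]; push_cast; rfl
  simp only [e] at h
  rw [integral_complex_ofReal] at h
  apply Complex.ofReal_injective
  have e2 : ((√(π / c.re) : ℝ) : ℂ) = ((π : ℂ) / (c.re : ℂ)) ^ (1 / 2 : ℂ) := by
    rw [Real.sqrt_eq_rpow, Complex.ofReal_cpow (by positivity)]
    push_cast; rfl
  rw [h, ← e2]
  push_cast; rfl

lemma exp_neg_le (n : ℕ) {t : ℝ} (ht : 0 < t) : Real.exp (-t) ≤ n.factorial / t ^ n := by
  have := Real.pow_div_factorial_le_exp t ht.le n
  rw [Real.exp_neg, ← inv_div]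
  exact inv_anti₀ (by positivity) this

lemma summ_lhs (m : ℕ) {q : ℝ} (hq : 0 < q) :
    Summable (fun p : ℕ × ℕ => ((p.1 : ℝ) + 1) ^ (2 * m) * Real.exp (-(q * √(((p.2 : ℝ) + 1) * ((p.1 : ℝ) + 1))))) := by
  have h1 : Summable (fun n : ℕ => (((n : ℝ) + 1) ^ 2)⁻¹) := by
    have := (summable_nat_add_iff 1).mpr (Real.summable_nat_pow_inv.mpr (by norm_num : 1 < 2))
    simpa using this
  have h2 := h1.mul_of_nonneg h1 (fun n => by positivity) (fun n => by positivity)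
  refine Summable.of_nonneg_of_le (fun p => by positivity) (fun p => ?_)
    (h2.mul_left (((4 * m + 4).factorial : ℝ) / q ^ (4 * m + 4)))
  set D : ℝ := (p.1 : ℝ) + 1
  set E : ℝ := (p.2 : ℝ) + 1
  have hD : 1 ≤ D := by simp [D]
  have hE : 1 ≤ E := by simp [E]
  have hs : √(E * D) ^ (4 * m + 4) = (E * D) ^ (2 * m + 2) := by
    rw [show 4 * m + 4 = 2 * (2 * m + 2) by ring, pow_mul, Real.sq_sqrt (by positivity)]
  have := exp_neg_le (4 * m + 4) (t := q * √(E * D)) (by positivity)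
  rw [mul_pow, hs] at this
  calc D ^ (2 * m) * Real.exp (-(q * √(E * D))) ≤ D ^ (2 * m) *
      (((4 * m + 4).factorial : ℝ) / (q ^ (4 * m + 4) * (E * D) ^ (2 * m + 2))) := by gcongr
    _ = ((4 * m + 4).factorial : ℝ) / q ^ (4 * m + 4) * ((D ^ 2)⁻¹ * (E ^ (2 * m + 2))⁻¹) := by
      rw [mul_pow, pow_add D]; field_simp
    _ ≤ _ := by
      gcongr
      omega

lemma sqrt_half_om : (π / (2 * π * om)) ^ (1 / 2 : ℂ) = kap⁻¹ * (√2 : ℂ)⁻¹ := by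
  have h2 : (√2 : ℂ) ^ 2 = 2 := by rw [← Complex.ofReal_pow, Real.sq_sqrt (by norm_num)]; simp
  have h3 : (√2 : ℂ) ≠ 0 := by
    intro h; rw [h] at h2; norm_num at h2
  have hpi : (π : ℂ) ≠ 0 := by exact_mod_cast Real.pi_ne_zero
  have e : (π / (2 * π * om) : ℂ) = (kap⁻¹ * (√2 : ℂ)⁻¹) ^ 2 := by
    rw [mul_pow, inv_pow, inv_pow, h2, om]; field_simp
  rw [e, one_div]
  apply Complex.sq_cpow_two_inv
  rw [← Complex.ofReal_inv, Complex.re_mul_ofReal, Complex.inv_re]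
  have := kap_re
  have hn : 0 < Complex.normSq kap := Complex.normSq_pos.mpr kap_ne
  positivity

lemma lhs1 (m : ℕ) {x : ℝ} (hx : 0 < x) :
    HasSum (fun p : ℕ × ℕ => ((p.1 : ℂ) + 1) ^ (2 * m) *
      (exp (-(2 * π * om) * (2 * √(((p.2 : ℝ) + 1) * (((p.1 : ℝ) + 1) * x)) : ℝ)) *
        (kap⁻¹ * (√2 : ℂ)⁻¹ / (2 * √((p.2 : ℝ) + 1)))))
      (∫ v in Ioi (0:ℝ), GG 0 (om * (v ^ 2 : ℝ)) * GG m (om * (x / v ^ 2 : ℝ))) := by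
  have hc : 0 < (2 * π * om).re := by
    rw [show (2 * π * om : ℂ) = ((2 * π : ℝ) : ℂ) * om by push_cast; ring, Complex.re_ofReal_mul]
    have := om_re_pos
    positivity
  set F : ℕ × ℕ → ℝ → ℂ := fun p v => ((p.1 : ℂ) + 1) ^ (2 * m) *
    exp (-(2 * π * om) * ((((p.2 : ℝ) + 1 : ℝ) : ℂ) * v ^ 2 + ((((p.1 : ℝ) + 1) * x : ℝ) : ℂ) / v ^ 2)) with hF
  have hE : ∀ k : ℕ, (0:ℝ) < (k : ℝ) + 1 := fun k => by positivity
  have hD : ∀ k : ℕ, (0:ℝ) < ((k : ℝ) + 1) * x := fun k => by positivity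
  have h_intg : ∀ p, Integrable (F p) (volume.restrict (Ioi 0)) := fun p =>
    (gl2 hc (hE p.2) (hD p.1)).1.const_mul _
  have hval : ∀ p, ∫ v in Ioi (0:ℝ), F p v = ((p.1 : ℂ) + 1) ^ (2 * m) *
      (exp (-(2 * π * om) * (2 * √(((p.2 : ℝ) + 1) * (((p.1 : ℝ) + 1) * x)) : ℝ)) *
        (kap⁻¹ * (√2 : ℂ)⁻¹ / (2 * √((p.2 : ℝ) + 1)))) := by
    intro p
    rw [integral_const_mul, (gl2 hc (hE p.2) (hD p.1)).2, sqrt_half_om]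
  have hnorm : ∀ p, ∫ v in Ioi (0:ℝ), ‖F p v‖ = ((p.1 : ℝ) + 1) ^ (2 * m) *
      (Real.exp (-(2 * π * om).re * (2 * √(((p.2 : ℝ) + 1) * (((p.1 : ℝ) + 1) * x)))) *
      (√(π / (2 * π * om).re) / (2 * √((p.2 : ℝ) + 1)))) := by
    intro p
    simp only [hF, norm_mul]
    rw [integral_const_mul, gl3 hc (hE p.2) (hD p.1)]
    congr 1
    rw [norm_pow, show ((p.1 : ℂ) + 1) = ((p.1 + 1 : ℕ) : ℂ) by push_cast; ring, Complex.norm_natCast]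
    push_cast; rfl
  have hsum : Summable (fun p => ∫ v in Ioi (0:ℝ), ‖F p v‖) := by
    have hs := (summ_lhs m (q := (2 * π * om).re * (2 * √x)) (by positivity)).mul_right (√(π / (2 * π * om).re))
    refine Summable.of_nonneg_of_le (fun p => by positivity) (fun p => ?_) hs
    rw [hnorm, mul_assoc]
    have h1 : (1:ℝ) ≤ √((p.2 : ℝ) + 1) := by
      rw [Real.one_le_sqrt]; linarith [(Nat.cast_nonneg p.2 : (0:ℝ) ≤ p.2)]
    have h2 : √(((p.2 : ℝ) + 1) * (((p.1 : ℝ) + 1) * x)) = √x * √(((p.2 : ℝ) + 1) * ((p.1 : ℝ) + 1)) := by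
      rw [← Real.sqrt_mul hx.le]; congr 1; ring
    rw [h2, mul_assoc]
    gcongr ?_ * (?_ * ?_)
    · apply le_of_eq; congr 1; ring
    · exact div_le_self (by positivity) (by linarith)
  have hmain := hasSum_integral_of_summable_integral_norm h_intg hsum
  refine hs_of hmain hval ?_
  refine setIntegral_congr_fun measurableSet_Ioi fun v hv => ?_
  have hv : (0:ℝ) < v := hv
  have ho := om_re_pos
  have r1 : 0 < (om * (v ^ 2 : ℝ)).re := by rw [Complex.re_mul_ofReal]; positivity
  have r2 : 0 < (om * (x / v ^ 2 : ℝ)).re := by rw [Complex.re_mul_ofReal]; positivity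
  rw [mul_comm (GG 0 _), GG, GG, tsum_mul_tsum_of_summable_norm (GG_summable_norm m r2) (GG_summable_norm 0 r1)]
  refine tsum_congr fun p => ?_
  simp only [hF]
  rw [mul_zero, pow_zero, one_mul, mul_assoc (_ ^ (2 * m)), ← Complex.exp_add]
  congr 2
  push_cast
  ring

lemma regroup (F : ℕ → ℕ → ℂ) {S : ℂ} (h : HasSum (fun p : ℕ × ℕ => F (p.1 + 1) (p.2 + 1)) S) :
    HasSum (fun n : ℕ => ∑ p ∈ (n + 1).divisorsAntidiagonal, F p.1 p.2) S := by
  have h1 : HasSum (fun p : ℕ+ × ℕ+ => F p.1 p.2) S := by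
    rw [← (Equiv.prodCongr Equiv.pnatEquivNat Equiv.pnatEquivNat).symm.hasSum_iff]
    refine hs_of h (fun p => ?_) rfl
    simp [Equiv.pnatEquivNat]
  rw [← sigmaAntidiagonalEquivProd.hasSum_iff] at h1
  have h2 := h1.sigma (fun n => hasSum_fintype _)
  rw [← Equiv.pnatEquivNat.symm.hasSum_iff] at h2
  refine hs_of h2 (fun n => ?_) rfl
  simp only [Function.comp_apply, sigmaAntidiagonalEquivProd, divisorsAntidiagonalFactors]
  simp only [Equiv.coe_fn_mk, PNat.mk_coe]
  rw [Finset.sum_coe_sort (Nat.divisorsAntidiagonal (((Equiv.pnatEquivNat.symm n : ℕ+) : ℕ))) (fun p : ℕ × ℕ => F p.1 p.2)]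
  rfl

lemma regroup_sigma (r : ℝ) (H : ℕ → ℂ)  {S : ℂ}
    (h : HasSum (fun p : ℕ × ℕ => ((((p.1 : ℝ) + 1) ^ r : ℝ) : ℂ) * H ((p.1 + 1) * (p.2 + 1))) S) :
    HasSum (fun n : ℕ => (rsigma r (n + 1) : ℂ) * H (n + 1)) S := by
  have := regroup (fun d e => (((d : ℝ) ^ r : ℝ) : ℂ) * H (d * e)) (S := S) (by push_cast; simpa using h)
  refine hs_of this (fun n => ?_) rfl
  rw [rsigma, ← Nat.map_div_right_divisors]
  push_cast
  rw [Finset.sum_mul]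
  rw [Finset.sum_map]
  refine Finset.sum_congr rfl fun d hd => ?_
  change (((d : ℝ) ^ r : ℝ) : ℂ) * H (d * ((n + 1) / d)) = _
  rw [Nat.mul_div_cancel' (Nat.dvd_of_mem_divisors hd)]

lemma sin_term (θ : ℝ) : Real.exp (-(√2 * θ)) * Real.sin (π / 4 + √2 * θ) =
    -(om⁻¹ * exp (-(om * (2 * θ : ℝ)))).im := by
  have h2 : √2 ^ 2 = 2 := Real.sq_sqrt (by norm_num)
  have hom : om⁻¹ = exp (((-(π / 4) : ℝ) : ℂ) * I) := by
    have : om = exp ((π / 4 : ℝ) * I) := by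
      rw [om, kap, ← Complex.exp_nat_mul]
      congr 1; push_cast; ring
    rw [this, ← Complex.exp_neg]; congr 1; push_cast; ring
  have e : om⁻¹ * exp (-(om * (2 * θ : ℝ))) =
      ((Real.exp (-(√2 * θ)) : ℝ) : ℂ) * exp (((-(π / 4 + √2 * θ) : ℝ) : ℂ) * I) := by
    rw [hom, Complex.ofReal_exp, ← Complex.exp_add, ← Complex.exp_add, om_eq]
    congr 1; push_cast; ring
  rw [e, Complex.im_ofReal_mul, Complex.exp_ofReal_mul_I_im, Real.sin_neg]
  ring

lemma lhs_final (m : ℕ) {x : ℝ} (hx : 0 < x) :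
    (∑' n : ℕ, ((rsigma (2 * m + 1 / 2) (n + 1) / Real.sqrt ((n : ℝ) + 1) *
        Real.exp (-(2 * π * Real.sqrt (2 * ((n : ℝ) + 1) * x))) *
        Real.sin (π / 4 + 2 * π * Real.sqrt (2 * ((n : ℝ) + 1) * x)) : ℝ) : ℂ)) =
    ((-(2 * √2) * (kap⁻¹ * ∫ v in Ioi (0:ℝ), GG 0 (om * (v ^ 2 : ℝ)) * GG m (om * (x / v ^ 2 : ℝ))).im : ℝ) : ℂ) := by
  have h1 := Complex.hasSum_ofReal.mpr ((Complex.hasSum_im ((lhs1 m hx).mul_left (kap⁻¹))).mul_left (-(2 * √2)))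
  have h2 := regroup_sigma (2 * m + 1 / 2) (fun n => (((√(n : ℝ))⁻¹ *
        Real.exp (-(2 * π * Real.sqrt (2 * (n : ℝ) * x))) *
        Real.sin (π / 4 + 2 * π * Real.sqrt (2 * (n : ℝ) * x)) : ℝ) : ℂ)) (hs_of h1 (fun p => ?_) rfl)
  · rw [← h2.tsum_eq]
    refine tsum_congr fun n => ?_
    push_cast
    ring
  · rw [← Complex.ofReal_mul]
    congr 1
    set D : ℝ := (p.1 : ℝ) + 1 with hD
    set E : ℝ := (p.2 : ℝ) + 1 with hE
    have hD0 : 0 < D := by positivity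
    have hE0 : 0 < E := by positivity
    have c1 : (p.1 : ℂ) + 1 = (D : ℂ) := by rw [hD]; push_cast; ring
    have c3 : (((p.1 + 1) * (p.2 + 1) : ℕ) : ℝ) = D * E := by rw [hD, hE]; push_cast; ring
    have h2 : √2 ^ 2 = 2 := Real.sq_sqrt (by norm_num)
    rw [c1, c3]
    have hθ : 2 * π * √(2 * (D * E) * x) = √2 * (2 * π * √(E * (D * x))) := by
      rw [show 2 * (D * E) * x = 2 * (E * (D * x)) by ring, Real.sqrt_mul (by norm_num)]; ring
    rw [hθ, mul_assoc (√(D * E))⁻¹, sin_term]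
    have e : kap⁻¹ * ((D : ℂ) ^ (2 * m) * (exp (-(2 * π * om) * (2 * √(E * (D * x)) : ℝ)) *
        (kap⁻¹ * (√2 : ℂ)⁻¹ / (2 * √E)))) = ((D ^ (2 * m) * ((√2)⁻¹ / (2 * √E)) : ℝ) : ℂ) *
        (om⁻¹ * exp (-(om * (2 * (2 * π * √(E * (D * x))) : ℝ)))) := by
      have : (-(2 * π * om) * (2 * √(E * (D * x)) : ℝ) : ℂ) = -(om * (2 * (2 * π * √(E * (D * x))) : ℝ)) := by
        push_cast; ring
      rw [this, om]
      push_cast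
      rw [show (kap ^ 2)⁻¹ = kap⁻¹ * kap⁻¹ by rw [sq, mul_inv]]
      ring
    rw [e, Complex.im_ofReal_mul]
    have hp : D ^ (2 * (m : ℝ) + 1 / 2) = D ^ (2 * m) * √D := by
      rw [Real.rpow_add hD0, Real.sqrt_eq_rpow, ← Real.rpow_natCast]; push_cast; rfl
    rw [hp, Real.sqrt_mul hD0.le]
    have a1 : √D ≠ 0 := by positivity
    have a2 : √E ≠ 0 := by positivity
    field_simp

end Coal
end

noncomputable section

namespace Coal

open MeasureTheory Set Filter Topology


lemma gint {a r : ℂ} (ha : 0 < a.re) (hr : 0 < r.re) :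
    IntegrableOn (fun t : ℝ => (t : ℂ) ^ (a - 1) * exp (-r * t)) (Ioi 0) := by
  have h1 := integrableOn_rpow_mul_exp_neg_mul_rpow (p := 1) (s := a.re - 1) (b := r.re) (by linarith) one_pos hr
  refine Integrable.mono' h1 ?_ ?_
  · apply ContinuousOn.aestronglyMeasurable _ measurableSet_Ioi
    refine ContinuousOn.mul ?_ (by fun_prop)
    intro t ht
    exact (Complex.continuousAt_ofReal_cpow_const _ _ (Or.inr (ne_of_gt ht))).continuousWithinAt
  · filter_upwards [ae_restrict_mem measurableSet_Ioi] with t ht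
    rw [norm_mul, Complex.norm_cpow_eq_rpow_re_of_pos ht, Complex.norm_exp, Real.rpow_one, Complex.re_mul_ofReal]
    simp

lemma gamma_rot {a r : ℂ} (ha : 0 < a.re) (hr : 0 < r.re) :
    ∫ t in Ioi (0:ℝ), (t : ℂ) ^ (a - 1) * exp (-r * t) = (1 / r) ^ a * Gamma a := by
  have hmeas : ∀ (b r : ℂ), AEStronglyMeasurable (fun t : ℝ => (t : ℂ) ^ b * exp (-r * t)) (volume.restrict (Ioi 0)) := by
    intro b r
    apply ContinuousOn.aestronglyMeasurable _ measurableSet_Ioi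
    refine ContinuousOn.mul ?_ (by fun_prop)
    intro t ht
    exact (Complex.continuousAt_ofReal_cpow_const _ _ (Or.inr (ne_of_gt ht))).continuousWithinAt
  set U : Set ℂ := {z | 0 < z.re} with hU
  have hUo : IsOpen U := isOpen_lt continuous_const Complex.continuous_re
  have hUc : IsPreconnected U := (convex_halfSpace_re_gt 0).isPreconnected
  have hd1 : DifferentiableOn ℂ (fun r : ℂ => ∫ t in Ioi (0:ℝ), (t : ℂ) ^ (a - 1) * exp (-r * t)) U := by
    intro z hz
    have hz : 0 < z.re := hz
    have hb := integrableOn_rpow_mul_exp_neg_mul_rpow (p := 1) (s := a.re) (b := z.re / 2) (by linarith) one_pos (by linarith)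
    have := hasDerivAt_integral_of_dominated_loc_of_deriv_le (𝕜 := ℂ) (μ := volume.restrict (Ioi (0:ℝ)))
      (F := fun (r : ℂ) (t : ℝ) => (t : ℂ) ^ (a - 1) * exp (-r * t))
      (F' := fun (r : ℂ) (t : ℝ) => -((t : ℂ) ^ a * exp (-r * t))) (x₀ := z)
      (s := Metric.ball z (z.re / 2)) (bound := fun t : ℝ => t ^ a.re * Real.exp (-(z.re / 2) * t ^ (1:ℝ)))
      (Metric.ball_mem_nhds z (by linarith)) (Eventually.of_forall fun r => hmeas _ r)
      (gint ha hz) ((hmeas a z).neg) ?_ hb ?_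
    · exact this.2.differentiableAt.differentiableWithinAt
    · filter_upwards [ae_restrict_mem measurableSet_Ioi] with t ht w hw
      have ht : (0:ℝ) < t := ht
      rw [norm_neg, norm_mul, Complex.norm_cpow_eq_rpow_re_of_pos ht, Complex.norm_exp, Real.rpow_one, Complex.re_mul_ofReal]
      have h1 : |(w - z).re| ≤ ‖w - z‖ := Complex.abs_re_le_norm _
      have h2 : ‖w - z‖ < z.re / 2 := by simpa [dist_eq_norm] using hw
      have h3 := neg_abs_le (w - z).re
      have h4 : z.re / 2 ≤ w.re := by rw [Complex.sub_re] at h3 h1; linarith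
      gcongr
      simpa using h4
    · filter_upwards [ae_restrict_mem measurableSet_Ioi] with t ht w hw
      have ht : (0:ℝ) < t := ht
      have htc : (t : ℂ) ≠ 0 := by exact_mod_cast ht.ne'
      have h1 : HasDerivAt (fun r : ℂ => exp (-r * t)) (exp (-w * t) * (-1 * t)) w :=
        ((hasDerivAt_id w).neg.mul_const (t : ℂ)).cexp
      refine (h1.const_mul ((t : ℂ) ^ (a - 1))).congr_deriv ?_
      rw [show (t : ℂ) ^ a = (t : ℂ) ^ (a - 1) * t by
        rw [Complex.cpow_sub _ _ htc, Complex.cpow_one]; field_simp]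
      ring
  have hd2 : DifferentiableOn ℂ (fun r : ℂ => (1 / r) ^ a * Gamma a) U := by
    intro z hz
    have hz : 0 < z.re := hz
    have hz0 : z ≠ 0 := by rintro rfl; simp at hz
    have : (1 / z) ∈ slitPlane := by
      left; rw [one_div, Complex.inv_re]; have := Complex.normSq_pos.mpr hz0; positivity
    apply DifferentiableAt.differentiableWithinAt
    apply DifferentiableAt.mul_const
    exact DifferentiableAt.cpow (by fun_prop (disch := assumption)) (by fun_prop) this
  have hone : (1 : ℂ) ∈ U := by simp [hU]
  refine (hd1.analyticOnNhd hUo).eqOn_of_preconnected_of_frequently_eq (hd2.analyticOnNhd hUo) hUc hone ?_ hr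
  have hreal : ∀ q : ℝ, 0 < q → (∫ t in Ioi (0:ℝ), (t : ℂ) ^ (a - 1) * exp (-(q:ℂ) * t)) = (1 / (q:ℂ)) ^ a * Gamma a := by
    intro q hq
    rw [← Complex.integral_cpow_mul_exp_neg_mul_Ioi ha hq]
    simp only [neg_mul]
  have ht : Tendsto (fun n : ℕ => (((1 + 1 / ((n : ℝ) + 1) : ℝ)) : ℂ)) atTop (𝓝[≠] 1) := by
    apply tendsto_nhdsWithin_of_tendsto_nhds_of_eventually_within
    · have := (tendsto_one_div_add_atTop_nhds_zero_nat (𝕜 := ℝ)).const_add 1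
      have h2 := (Complex.continuous_ofReal.tendsto _).comp this
      simpa [Function.comp_def] using h2
    · filter_upwards with n
      intro h
      have h : (((1 + 1 / ((n : ℝ) + 1) : ℝ)) : ℂ) = ((1 : ℝ) : ℂ) := by simpa using h
      have h := Complex.ofReal_injective h
      have : 0 < 1 / ((n : ℝ) + 1) := by positivity
      linarith
  exact ht.frequently (Eventually.of_forall fun n => hreal _ (by positivity)).frequently

lemma GG_norm_le (m : ℕ) : ∃ C : ℝ, ∀ τ : ℝ, 1 ≤ τ → ‖GG m (om * τ)‖ ≤ C * Real.exp (-(π * om.re) * τ) := by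
  have ho := om_re_pos
  have hs := GG_summable_norm m (u := ((om.re / 2 : ℝ) : ℂ)) (by rw [Complex.ofReal_re]; positivity)
  refine ⟨∑' d : ℕ, ‖((d : ℂ) + 1) ^ (2 * m) * exp (-(2 * π * ((d : ℂ) + 1) * ((om.re / 2 : ℝ) : ℂ)))‖, fun τ hτ => ?_⟩
  have hs1 := GG_summable_norm m (u := om * τ) (by rw [Complex.re_mul_ofReal]; positivity)
  rw [GG, ← tsum_mul_right]
  refine (norm_tsum_le_tsum_norm hs1).trans (hs1.tsum_le_tsum (fun d => ?_) (hs.mul_right _))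
  rw [norm_mul, norm_mul, mul_assoc ‖((d : ℂ) + 1) ^ (2 * m)‖]
  gcongr ‖((d : ℂ) + 1) ^ (2 * m)‖ * ?_
  rw [Complex.norm_exp, Complex.norm_exp, ← Real.exp_add, Real.exp_le_exp]
  have e1 : (-(2 * π * ((d : ℂ) + 1) * (om * τ))).re = -(2 * π * ((d : ℝ) + 1) * om.re * τ) := by
    rw [show (-(2 * π * ((d : ℂ) + 1) * (om * τ))) = ((-(2 * π * ((d : ℝ) + 1) * τ) : ℝ) : ℂ) * om by push_cast; ring,
      Complex.re_ofReal_mul]; ring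
  have e2 : (-(2 * π * ((d : ℂ) + 1) * ((om.re / 2 : ℝ) : ℂ))).re = -(2 * π * ((d : ℝ) + 1) * (om.re / 2)) := by
    rw [show (-(2 * π * ((d : ℂ) + 1) * ((om.re / 2 : ℝ) : ℂ))) = ((-(2 * π * ((d : ℝ) + 1) * (om.re / 2)) : ℝ) : ℂ) by push_cast; ring,
      Complex.ofReal_re]
  rw [e1, e2]
  have hd : (0:ℝ) ≤ d := Nat.cast_nonneg d
  have : 0 < π * om.re := by positivity
  nlinarith [mul_nonneg (mul_nonneg this.le hd) (by linarith : 0 ≤ τ - 1), mul_nonneg this.le hd]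

lemma GG_contOn (m : ℕ) : ContinuousOn (fun τ : ℝ => GG m (om * τ)) (Ioi 0) := by
  have ho := om_re_pos
  intro τ hτ
  have hτ : (0:ℝ) < τ := hτ
  have hs := GG_summable_norm m (u := om * ((τ / 2 : ℝ) : ℂ)) (by rw [Complex.re_mul_ofReal]; positivity)
  have : ContinuousOn (fun τ : ℝ => GG m (om * τ)) (Ioi (τ / 2)) := by
    unfold GG
    refine continuousOn_tsum (fun d => by fun_prop) hs ?_
    intro d t ht
    have ht : τ / 2 < t := ht
    rw [norm_mul, norm_mul]
    gcongr
    rw [Complex.norm_exp, Complex.norm_exp, Real.exp_le_exp]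
    have e1 : ∀ τ : ℝ, (-(2 * π * ((d : ℂ) + 1) * (om * τ))).re = -(2 * π * ((d : ℝ) + 1) * om.re * τ) := by
      intro τ
      rw [show (-(2 * π * ((d : ℂ) + 1) * (om * τ))) = ((-(2 * π * ((d : ℝ) + 1) * τ) : ℝ) : ℂ) * om by push_cast; ring,
        Complex.re_ofReal_mul]; ring
    rw [e1, e1]
    gcongr
  exact (this.continuousAt (Ioi_mem_nhds (by linarith))).continuousWithinAt

lemma GT_bound (m : ℕ) : ∃ C : ℝ, 0 ≤ C ∧ ∀ τ : ℝ, 0 < τ →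
    ‖GG m (om * τ) - P0 m - CC m * ((om * τ)⁻¹) ^ (2 * m + 1)‖ ≤ C * AA τ := by
  have ho := om_re_pos
  have hs : Summable (fun j : ℕ => ((j : ℝ) + 1) ^ (-(5 / 4) : ℝ)) := by
    have := (summable_nat_add_iff 1).mpr (Real.summable_nat_rpow.mpr (by norm_num : (-(5/4) : ℝ) < -1))
    simpa using this
  refine ⟨∑' j : ℕ, ‖CC m‖ * KK m * ((j : ℝ) + 1) ^ (-(5 / 4) : ℝ), ?_, fun τ hτ => ?_⟩
  · have := KK_nonneg m
    positivity
  have h := GG_expand m (u := om * τ) (by rw [Complex.re_mul_ofReal]; positivity)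
  rw [← h.tsum_eq, ← tsum_mul_right]
  refine tsum_of_norm_bounded ((hs.mul_left (‖CC m‖ * KK m)).mul_right (AA τ)).hasSum fun j => ?_
  rw [norm_mul]
  have := PP_bound m (y := (j : ℝ) + 1) (by linarith [(Nat.cast_nonneg j : (0:ℝ) ≤ j)]) hτ
  calc _ ≤ ‖CC m‖ * (KK m * ((j : ℝ) + 1) ^ (-(5 / 4) : ℝ) * AA τ) := by gcongr
    _ = _ := by ring

end Coal
end

noncomputable section

namespace Coal

open MeasureTheory Set Filter Topology


def Phi (m : ℕ) (s : ℂ) : ℂ := (1 / (2 * π * om)) ^ s * Gamma s * riemannZeta (s - 2 * m)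

lemma cpow_scale {q : ℝ} (hq : 0 < q) {z : ℂ} (hz : z ≠ 0) (s : ℂ) :
    ((q : ℂ) * z) ^ s = (q : ℂ) ^ s * z ^ s := by
  have hqc : (q : ℂ) ≠ 0 := by exact_mod_cast hq.ne'
  rw [Complex.cpow_def_of_ne_zero (mul_ne_zero hqc hz), Complex.cpow_def_of_ne_zero hqc,
    Complex.cpow_def_of_ne_zero hz, Complex.log_ofReal_mul hq hz, ← Complex.exp_add,
    ← Complex.ofReal_log hq.le]
  congr 1; ring

lemma rate_re (d : ℕ) : 0 < (2 * π * ((d : ℂ) + 1) * om).re := by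
  have ho := om_re_pos
  rw [show (2 * π * ((d : ℂ) + 1) * om) = ((2 * π * ((d : ℝ) + 1) : ℝ) : ℂ) * om by push_cast; ring,
    Complex.re_ofReal_mul]
  positivity

lemma mellA (m : ℕ) {s : ℂ} (hs : (2 * m + 1 : ℝ) < s.re) :
    mellin (fun t : ℝ => GG m (om * t)) s = Phi m s := by
  have hs0 : 0 < s.re := lt_trans (by positivity) hs
  have ho := om_re_pos
  have hpi : (π : ℂ) ≠ 0 := by exact_mod_cast Real.pi_ne_zero
  set F : ℕ → ℝ → ℂ := fun d t => ((d : ℂ) + 1) ^ (2 * m) *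
    ((t : ℂ) ^ (s - 1) * exp (-(2 * π * ((d : ℂ) + 1) * om) * t)) with hF
  have h_intg : ∀ d, Integrable (F d) (volume.restrict (Ioi 0)) := fun d =>
    (gint hs0 (rate_re d)).const_mul _
  have hval : ∀ d, ∫ t in Ioi (0:ℝ), F d t = (1 / ((d : ℂ) + 1) ^ (s - 2 * m)) * ((1 / (2 * π * om)) ^ s * Gamma s) := by
    intro d
    rw [integral_const_mul, gamma_rot hs0 (rate_re d)]
    have hd : (0:ℝ) < (d : ℝ) + 1 := by positivity
    have hdc : ((d : ℂ) + 1) ≠ 0 := by exact_mod_cast hd.ne'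
    have e : (1 / (2 * π * ((d : ℂ) + 1) * om)) = (((((d : ℝ) + 1)⁻¹ : ℝ)) : ℂ) * (1 / (2 * π * om)) := by
      have := om_ne
      push_cast; field_simp
    rw [e, cpow_scale (by positivity) (one_div_ne_zero (mul_ne_zero (mul_ne_zero two_ne_zero hpi) om_ne))]
    have e2 : (((((d : ℝ) + 1)⁻¹ : ℝ)) : ℂ) ^ s = (((d : ℂ) + 1) ^ s)⁻¹ := by
      rw [Complex.ofReal_inv, Complex.inv_cpow]
      · push_cast; rfl
      · rw [Complex.arg_ofReal_of_nonneg hd.le]; exact Real.pi_pos.ne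
    rw [e2, Complex.cpow_sub _ _ hdc, one_div_div]
    have e3 : ((d : ℂ) + 1) ^ (2 * (m : ℂ)) = ((d : ℂ) + 1) ^ (2 * m) := by
      rw [← Complex.cpow_natCast]; push_cast; rfl
    rw [e3]; ring
  have hnorm : ∀ d, ∫ t in Ioi (0:ℝ), ‖F d t‖ = (((d : ℝ) + 1) ^ (2 * m - s.re)) * ((1 / (2 * π * om.re)) ^ s.re * Real.Gamma s.re) := by
    intro d
    have hd : (0:ℝ) < (d : ℝ) + 1 := by positivity
    have e : ∀ t ∈ Ioi (0:ℝ), ‖F d t‖ = ((d : ℝ) + 1) ^ (2 * m) * (t ^ (s.re - 1) * Real.exp (-((2 * π * ((d : ℝ) + 1) * om.re) * t))) := by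
      intro t ht
      have ht : (0:ℝ) < t := ht
      simp only [hF]
      rw [norm_mul, norm_mul, Complex.norm_cpow_eq_rpow_re_of_pos ht, Complex.norm_exp, Complex.re_mul_ofReal, norm_pow,
        show ((d : ℂ) + 1) = ((d + 1 : ℕ) : ℂ) by push_cast; ring, Complex.norm_natCast,
        show -(2 * π * ((d + 1 : ℕ) : ℂ) * om) = ((-(2 * π * ((d : ℝ) + 1)) : ℝ) : ℂ) * om by push_cast; ring,
        Complex.re_ofReal_mul]
      push_cast
      congr 3
      simp
    rw [setIntegral_congr_fun measurableSet_Ioi e, integral_const_mul,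
      Real.integral_rpow_mul_exp_neg_mul_Ioi hs0 (by positivity)]
    rw [show 1 / (2 * π * ((d : ℝ) + 1) * om.re) = ((d : ℝ) + 1)⁻¹ * (1 / (2 * π * om.re)) by field_simp,
      Real.mul_rpow (by positivity) (by positivity), Real.inv_rpow hd.le, Real.rpow_sub hd,
      show ((d : ℝ) + 1) ^ (2 * (m : ℝ)) = ((d : ℝ) + 1) ^ (2 * m) by rw [← Real.rpow_natCast]; push_cast; rfl]
    ring
  have hsum : Summable (fun d => ∫ t in Ioi (0:ℝ), ‖F d t‖) := by
    simp only [hnorm]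
    apply Summable.mul_right
    have := (summable_nat_add_iff 1).mpr (Real.summable_nat_rpow.mpr (by linarith : (2 * m - s.re : ℝ) < -1))
    simpa using this
  have hmain := hasSum_integral_of_summable_integral_norm h_intg hsum
  have h1 : mellin (fun t : ℝ => GG m (om * t)) s = ∫ t in Ioi (0:ℝ), ∑' d, F d t := by
    rw [mellin]
    refine setIntegral_congr_fun measurableSet_Ioi fun t ht => ?_
    simp only [smul_eq_mul, GG, hF]
    rw [← tsum_mul_left]
    refine tsum_congr fun d => ?_
    rw [show -(2 * π * ((d : ℂ) + 1) * om) * t = -(2 * π * ((d : ℂ) + 1) * (om * t)) by ring]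
    ring
  rw [h1, ← hmain.tsum_eq]
  simp only [hval]
  rw [tsum_mul_right, Phi, zeta_eq_tsum_one_div_nat_add_one_cpow]
  · ring
  · simp; linarith

lemma Phi_diff (m : ℕ) {s : ℂ} (hs : 0 < s.re) (hs1 : s ≠ 2 * m + 1) : DifferentiableAt ℂ (Phi m) s := by
  have hpi : (π : ℂ) ≠ 0 := by exact_mod_cast Real.pi_ne_zero
  have hom := om_ne
  unfold Phi
  refine DifferentiableAt.mul (DifferentiableAt.mul ?_ ?_) ?_
  · exact DifferentiableAt.const_cpow (by fun_prop) (Or.inl (one_div_ne_zero (mul_ne_zero (mul_ne_zero two_ne_zero hpi) om_ne)))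
  · apply Complex.differentiableAt_Gamma
    intro n hn
    rw [hn] at hs
    simp at hs
    linarith [(Nat.cast_nonneg n : (0:ℝ) ≤ n)]
  · exact DifferentiableAt.comp (f := fun s : ℂ => s - 2 * m) (g := riemannZeta) s
      (differentiableAt_riemannZeta (by intro h; apply hs1; linear_combination h)) (by fun_prop)

def pC (m : ℕ) : ℂ := CC m * (om⁻¹) ^ (2 * m + 1)

def f1 (m : ℕ) (t : ℝ) : ℂ := GG m (om * t) -
  pC m * indicator (Ioc 0 1) (fun t : ℝ => (t : ℂ) ^ (-(2 * m + 1) : ℂ)) t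

lemma p_eq (m : ℕ) {t : ℝ} (_ht : 0 < t) : CC m * ((om * t)⁻¹) ^ (2 * m + 1) = pC m * (t : ℂ) ^ (-(2 * m + 1) : ℂ) := by
  rw [pC, mul_inv, mul_pow, Complex.cpow_neg, show (2 * m + 1 : ℂ) = ((2 * m + 1 : ℕ) : ℂ) by push_cast; ring,
    Complex.cpow_natCast, inv_pow (t : ℂ)]; ring

lemma f1_meas (m : ℕ) : LocallyIntegrableOn (f1 m) (Ioi 0) := by
  apply LocallyIntegrableOn.sub
  · exact (GG_contOn m).locallyIntegrableOn measurableSet_Ioi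
  · have hc : ContinuousOn (fun t : ℝ => pC m * (t : ℂ) ^ (-(2 * m + 1) : ℂ)) (Ioi 0) := by
      refine ContinuousOn.mul (by fun_prop) ?_
      intro t ht
      exact (Complex.continuousAt_ofReal_cpow_const _ _ (Or.inr (ne_of_gt ht))).continuousWithinAt
    have h1 := hc.locallyIntegrableOn (μ := volume) measurableSet_Ioi
    have : (fun t : ℝ => pC m * indicator (Ioc 0 1) (fun t : ℝ => (t : ℂ) ^ (-(2 * m + 1) : ℂ)) t) =
        indicator (Ioc 0 1) (fun t : ℝ => pC m * (t : ℂ) ^ (-(2 * m + 1) : ℂ)) := by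
      ext t; by_cases h : t ∈ Ioc (0:ℝ) 1 <;> simp [h]
    rw [this]
    intro t ht
    obtain ⟨s, hs, hi⟩ := h1 t ht
    exact ⟨s, hs, hi.indicator measurableSet_Ioc⟩

lemma f1_top (m : ℕ) : f1 m =O[atTop] fun t => Real.exp (-(π * om.re) * t) := by
  obtain ⟨C, hC⟩ := GG_norm_le m
  apply Asymptotics.IsBigO.of_bound C
  filter_upwards [eventually_gt_atTop (1:ℝ)] with t ht
  rw [f1, indicator_of_notMem (by simp [ht]), mul_zero, sub_zero, Real.norm_of_nonneg (Real.exp_nonneg _)]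
  exact hC t ht.le

lemma f1_zero (m : ℕ) : f1 m =O[𝓝[>] 0] fun t => t ^ (-(0:ℝ)) := by
  obtain ⟨C, hC0, hC⟩ := GT_bound m
  apply Asymptotics.IsBigO.of_bound (C + ‖P0 m‖)
  filter_upwards [Ioc_mem_nhdsGT (zero_lt_one' ℝ)] with t ht
  rw [f1, indicator_of_mem ht, ← p_eq m ht.1]
  simp only [neg_zero, Real.rpow_zero, norm_one, mul_one]
  have h := hC t ht.1
  have h2 : AA t ≤ 1 := (min_le_left _ _).trans ht.2
  calc _ = ‖(GG m (om * t) - P0 m - CC m * ((om * t)⁻¹) ^ (2 * m + 1)) + P0 m‖ := by congr 1; ring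
    _ ≤ _ := norm_add_le _ _
    _ ≤ C * AA t + ‖P0 m‖ := by gcongr
    _ ≤ _ := by nlinarith

lemma f1_conv (m : ℕ) {s : ℂ} (hs : 0 < s.re) : MellinConvergent (f1 m) s :=
  mellinConvergent_of_isBigO_rpow_exp (a := π * om.re) (by have := om_re_pos; positivity) (f1_meas m)
    (f1_top m) (f1_zero m) hs

lemma f1_diff (m : ℕ) {s : ℂ} (hs : 0 < s.re) : DifferentiableAt ℂ (mellin (f1 m)) s :=
  mellin_differentiableAt_of_isBigO_rpow_exp (a := π * om.re) (by have := om_re_pos; positivity) (f1_meas m)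
    (f1_top m) (f1_zero m) hs

lemma f1_big (m : ℕ) {s : ℂ} (hs : (2 * m + 1 : ℝ) < s.re) :
    MellinConvergent (fun t : ℝ => GG m (om * t)) s ∧ mellin (f1 m) s = Phi m s - pC m * (1 / (s - (2 * m + 1))) := by
  have hs0 : 0 < s.re := lt_trans (by positivity) hs
  have h1 := hasMellin_cpow_Ioc (-(2 * m + 1) : ℂ) (s := s) (by simp; linarith)
  have h2 : HasMellin (fun t => pC m • indicator (Ioc 0 1) (fun t : ℝ => (t : ℂ) ^ (-(2 * m + 1) : ℂ)) t) s
      (pC m • (1 / (s + -(2 * m + 1)))) :=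
    ⟨h1.1.const_smul (pC m), by rw [mellin_const_smul, h1.2]⟩
  have h3 := hasMellin_add (f1_conv m hs0) h2.1
  have e : (fun t => f1 m t + pC m • indicator (Ioc 0 1) (fun t : ℝ => (t : ℂ) ^ (-(2 * m + 1) : ℂ)) t) =
      fun t : ℝ => GG m (om * t) := by
    ext t; rw [f1, smul_eq_mul]; ring
  rw [e] at h3
  refine ⟨h3.1, ?_⟩
  have h4 := h3.2
  rw [mellA m hs, h2.2, smul_eq_mul] at h4
  rw [h4, ← sub_eq_add_neg]; ring

lemma f1_upper (m : ℕ) : EqOn (mellin (f1 m)) (fun s => Phi m s - pC m * (1 / (s - (2 * m + 1))))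
    {s : ℂ | 0 < s.re ∧ 0 < s.im} := by
  have hne : ∀ s : ℂ, 0 < s.im → s ≠ 2 * m + 1 := by
    rintro s hs rfl; simp at hs
  set U := {s : ℂ | 0 < s.re ∧ 0 < s.im}
  have hUo : IsOpen U := (isOpen_lt continuous_const Complex.continuous_re).inter (isOpen_lt continuous_const Complex.continuous_im)
  have hUc : IsPreconnected U := ((convex_halfSpace_re_gt 0).inter (convex_halfSpace_im_gt 0)).isPreconnected
  have d1 : DifferentiableOn ℂ (mellin (f1 m)) U := fun s hs => (f1_diff m hs.1).differentiableWithinAt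
  have d2 : DifferentiableOn ℂ (fun s => Phi m s - pC m * (1 / (s - (2 * m + 1)))) U := fun s hs => by
    apply DifferentiableAt.differentiableWithinAt
    have h0 : s - (2 * m + 1) ≠ 0 := sub_ne_zero.mpr (hne s hs.2)
    exact (Phi_diff m hs.1 (hne s hs.2)).sub (by fun_prop (disch := assumption))
  refine (d1.analyticOnNhd hUo).eqOn_of_preconnected_of_eventuallyEq (d2.analyticOnNhd hUo) hUc
    (z₀ := ((2 * m + 2 : ℝ) : ℂ) + I) ⟨by simp; positivity, by simp⟩ ?_
  have : {s : ℂ | (2 * m + 1 : ℝ) < s.re} ∈ 𝓝 (((2 * m + 2 : ℝ) : ℂ) + I) := by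
    apply (isOpen_lt continuous_const Complex.continuous_re).mem_nhds
    simp
  filter_upwards [this] with s hs
  exact (f1_big m hs).2

lemma f1_half (m : ℕ) : mellin (f1 m) (1 / 2) = Phi m (1 / 2) - pC m * (1 / ((1 / 2 : ℂ) - (2 * m + 1))) := by
  have hne : (1 / 2 : ℂ) ≠ 2 * m + 1 := by
    intro h
    have := congrArg Complex.re h
    simp at this
    have : (0:ℝ) ≤ m := Nat.cast_nonneg m
    linarith
  have c1 : ContinuousAt (mellin (f1 m)) (1 / 2) := (f1_diff m (by simp)).continuousAt
  have c2 : ContinuousAt (fun s => Phi m s - pC m * (1 / (s - (2 * m + 1)))) (1 / 2) := by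
    have h0 : (1 / 2 : ℂ) - (2 * m + 1) ≠ 0 := sub_ne_zero.mpr hne
    exact ((Phi_diff m (by simp) hne).sub (by fun_prop (disch := assumption))).continuousAt
  have ht : Tendsto (fun n : ℕ => (1 / 2 : ℂ) + ((1 / ((n : ℝ) + 1) : ℝ) : ℂ) * I) atTop (𝓝 (1 / 2)) := by
    have := (tendsto_one_div_add_atTop_nhds_zero_nat (𝕜 := ℝ))
    have h2 := (((Complex.continuous_ofReal.tendsto _).comp this).mul_const I).const_add (1 / 2 : ℂ)
    simpa [Function.comp_def] using h2
  refine tendsto_nhds_unique (c1.tendsto.comp ht) ((c2.tendsto.comp ht).congr fun n => ?_)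
  have : (0:ℝ) < 1 / ((n : ℝ) + 1) := by positivity
  refine (f1_upper m ⟨?_, ?_⟩).symm
  · rw [Complex.add_re, Complex.re_ofReal_mul]; simp
  · rw [Complex.add_im, Complex.im_ofReal_mul]; simp; positivity

lemma mellB (m : ℕ) : HasMellin (fun t : ℝ => GG m (om * t) - CC m * ((om * t)⁻¹) ^ (2 * m + 1)) (1 / 2) (Phi m (1 / 2)) := by
  have hm : (0:ℝ) ≤ m := Nat.cast_nonneg m
  have hre : ((1 / 2 : ℂ) - 1 + (-(2 * m + 1))).re < -1 := by simp; linarith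
  have hi := integrableOn_Ioi_cpow_of_lt hre one_pos
  have hI := integral_Ioi_cpow_of_lt hre one_pos
  have key : ∀ t ∈ Ioi (0:ℝ), (t : ℂ) ^ ((1 / 2 : ℂ) - 1) • indicator (Ioi 1) (fun t : ℝ => (t : ℂ) ^ (-(2 * m + 1) : ℂ)) t =
      indicator (Ioi 1) (fun t : ℝ => (t : ℂ) ^ ((1 / 2 : ℂ) - 1 + (-(2 * m + 1)))) t := by
    intro t ht
    have htc : (t : ℂ) ≠ 0 := by exact_mod_cast (ne_of_gt ht)
    by_cases h : t ∈ Ioi (1:ℝ)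
    · rw [indicator_of_mem h, indicator_of_mem h, Complex.cpow_add _ _ htc, smul_eq_mul]
    · rw [indicator_of_notMem h, indicator_of_notMem h, smul_zero]
  have hsub : Ioi (1:ℝ) ⊆ Ioi 0 := Ioi_subset_Ioi zero_le_one
  have h1 : HasMellin (indicator (Ioi 1) (fun t : ℝ => (t : ℂ) ^ (-(2 * m + 1) : ℂ))) (1 / 2)
      (-(1 / ((1 / 2 : ℂ) - (2 * m + 1)))) := by
    constructor
    · refine IntegrableOn.congr_fun ?_ (fun t ht => (key t ht).symm) measurableSet_Ioi
      exact ((integrable_indicator_iff measurableSet_Ioi).mpr hi).integrableOn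
    · rw [mellin, setIntegral_congr_fun measurableSet_Ioi key, setIntegral_indicator measurableSet_Ioi,
        inter_eq_self_of_subset_right hsub, hI]
      simp only [Complex.ofReal_one, Complex.one_cpow]
      rw [← neg_div]
      congr 1; ring
  have h2 : HasMellin (fun t => pC m • indicator (Ioi 1) (fun t : ℝ => (t : ℂ) ^ (-(2 * m + 1) : ℂ)) t) (1 / 2)
      (pC m • (-(1 / ((1 / 2 : ℂ) - (2 * m + 1))))) :=
    ⟨h1.1.const_smul (pC m), by rw [mellin_const_smul, h1.2]⟩
  have h3 := hasMellin_sub (f1_conv m (s := 1 / 2) (by simp)) h2.1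
  rw [h2.2, f1_half m] at h3
  have e : EqOn (fun t => f1 m t - pC m • indicator (Ioi 1) (fun t : ℝ => (t : ℂ) ^ (-(2 * m + 1) : ℂ)) t)
      (fun t : ℝ => GG m (om * t) - CC m * ((om * t)⁻¹) ^ (2 * m + 1)) (Ioi 0) := by
    intro t ht
    have ht : (0:ℝ) < t := ht
    simp only [f1, p_eq m ht, smul_eq_mul]
    by_cases h : t ≤ 1
    · rw [indicator_of_mem (show t ∈ Ioc (0:ℝ) 1 from ⟨ht, h⟩), indicator_of_notMem (by simpa using h)]; ring
    · rw [indicator_of_notMem (by simp [h]), indicator_of_mem (by simpa using h)]; ring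
  constructor
  · refine IntegrableOn.congr_fun h3.1 (fun t ht => ?_) measurableSet_Ioi
    have := e ht
    simp only at this ⊢
    rw [← this]
  · have h5 := h3.2
    rw [mellin] at h5 ⊢
    rw [setIntegral_congr_fun measurableSet_Ioi (g := fun t : ℝ => (t : ℂ) ^ ((1 / 2 : ℂ) - 1) • (f1 m t - pC m • indicator (Ioi 1) (fun t : ℝ => (t : ℂ) ^ (-(2 * m + 1) : ℂ)) t)), ]
    · refine h5.trans ?_
      rw [smul_eq_mul]; ring
    · intro t ht
      have := e ht
      simp only at this ⊢
      rw [← this]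

end Coal
end

noncomputable section

namespace Coal

open MeasureTheory Set Filter Topology


lemma mel2 {f : ℝ → ℂ} {s M : ℂ} {p : ℝ} (hp : p ≠ 0) (h : HasMellin f s M) :
    HasMellin (fun t => f (t ^ p)) (s * p) (|p|⁻¹ • M) := by
  have hpc : (p : ℂ) ≠ 0 := by exact_mod_cast hp
  constructor
  · rw [MellinConvergent.comp_rpow hp, mul_div_cancel_right₀ _ hpc]; exact h.1
  · rw [mellin_comp_rpow, mul_div_cancel_right₀ _ hpc, h.2]

lemma hm_congr {f g : ℝ → ℂ} {s M : ℂ} (h : HasMellin f s M)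
    (e : ∀ t : ℝ, 0 < t → (t : ℂ) ^ (s - 1) * f t = g t) :
    IntegrableOn g (Ioi 0) ∧ ∫ v in Ioi (0:ℝ), g v = M := by
  constructor
  · refine IntegrableOn.congr_fun h.1 (fun t ht => ?_) measurableSet_Ioi
    exact e t ht
  · rw [← h.2, mellin]
    refine setIntegral_congr_fun measurableSet_Ioi (fun t ht => ?_)
    exact (e t ht).symm

lemma rp2 {v : ℝ} : v ^ (2:ℝ) = v ^ 2 := by
  rw [← Real.rpow_natCast]; norm_num

lemma T1 (m : ℕ) {x : ℝ} (hx : 0 < x) :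
    IntegrableOn (fun v : ℝ => GG 0 (om * (v ^ 2 : ℝ)) * (CC m * ((om * (x / v ^ 2 : ℝ))⁻¹) ^ (2 * m + 1))) (Ioi 0) ∧
    ∫ v in Ioi (0:ℝ), GG 0 (om * (v ^ 2 : ℝ)) * (CC m * ((om * (x / v ^ 2 : ℝ))⁻¹) ^ (2 * m + 1))
      = CC m * ((om * x)⁻¹) ^ (2 * m + 1) * (1 / 2 * Phi 0 (2 * m + 3 / 2)) := by
  have hre : ((2 * m + 3 / 2 : ℂ)).re = 2 * m + 3 / 2 := by
    simp
  have hs : ((2 * (0:ℕ) + 1 : ℝ)) < ((2 * m + 3 / 2 : ℂ)).re := by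
    rw [hre]; have : (0:ℝ) ≤ m := by positivity
    push_cast; linarith
  have h1 : HasMellin (fun t : ℝ => GG 0 (om * t)) (2 * m + 3 / 2) (Phi 0 (2 * m + 3 / 2)) :=
    ⟨(f1_big 0 hs).1, mellA 0 hs⟩
  have h2 := mel2 (p := 2) two_ne_zero h1
  have h3 := hasMellin_const_smul h2.1 (CC m * ((om * x)⁻¹) ^ (2 * m + 1))
  rw [h2.2] at h3
  have := hm_congr (g := (fun v : ℝ => GG 0 (om * (v ^ 2 : ℝ)) * (CC m * ((om * (x / v ^ 2 : ℝ))⁻¹) ^ (2 * m + 1)))) h3 ?_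
  · refine ⟨this.1, this.2.trans ?_⟩
    rw [Complex.real_smul, abs_of_pos two_pos, smul_eq_mul]; push_cast; ring
  · intro t ht
    have htc : (t : ℂ) ≠ 0 := by exact_mod_cast ht.ne'
    have e : ((2 * m + 3 / 2 : ℂ)) * ((2:ℝ):ℂ) - 1 = ((2 * (2 * m + 1) : ℕ) : ℂ) := by push_cast; ring
    simp only [rp2, smul_eq_mul]
    rw [e, Complex.cpow_natCast, pow_mul]
    have e2 : ((om * (x / t ^ 2 : ℝ))⁻¹) = (om * x)⁻¹ * (t:ℂ) ^ 2 := by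
      push_cast; field_simp
    rw [e2, mul_pow ((om * x)⁻¹)]
    ring

lemma T2 (m : ℕ) :
    IntegrableOn (fun v : ℝ => (GG 0 (om * (v ^ 2 : ℝ)) - CC 0 * ((om * (v ^ 2 : ℝ))⁻¹) ^ (2 * 0 + 1)) * P0 m) (Ioi 0) ∧
    ∫ v in Ioi (0:ℝ), (GG 0 (om * (v ^ 2 : ℝ)) - CC 0 * ((om * (v ^ 2 : ℝ))⁻¹) ^ (2 * 0 + 1)) * P0 m
      = P0 m * (1 / 2 * Phi 0 (1 / 2)) := by
  have h2 := mel2 (p := 2) two_ne_zero (mellB 0)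
  have h3 := hasMellin_const_smul h2.1 (P0 m)
  rw [h2.2] at h3
  have := hm_congr (g := (fun v : ℝ => (GG 0 (om * (v ^ 2 : ℝ)) - CC 0 * ((om * (v ^ 2 : ℝ))⁻¹) ^ (2 * 0 + 1)) * P0 m)) h3 ?_
  · refine ⟨this.1, this.2.trans ?_⟩
    rw [Complex.real_smul, abs_of_pos two_pos, smul_eq_mul]; push_cast; ring
  · intro t ht
    have e : ((1 / 2 : ℂ)) * ((2:ℝ):ℂ) - 1 = 0 := by push_cast; ring
    simp only [rp2, smul_eq_mul]
    rw [e, Complex.cpow_zero]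
    ring

lemma T3 (m : ℕ) {x : ℝ} (hx : 0 < x) :
    IntegrableOn (fun v : ℝ => CC 0 * ((om * (v ^ 2 : ℝ))⁻¹) ^ (2 * 0 + 1) *
      (GG m (om * (x / v ^ 2 : ℝ)) - CC m * ((om * (x / v ^ 2 : ℝ))⁻¹) ^ (2 * m + 1))) (Ioi 0) ∧
    ∫ v in Ioi (0:ℝ), CC 0 * ((om * (v ^ 2 : ℝ))⁻¹) ^ (2 * 0 + 1) *
      (GG m (om * (x / v ^ 2 : ℝ)) - CC m * ((om * (x / v ^ 2 : ℝ))⁻¹) ^ (2 * m + 1))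
      = CC 0 * om⁻¹ * (1 / 2 * ((x : ℂ) ^ (-(1 / 2) : ℂ) * Phi m (1 / 2))) := by
  have h1 : HasMellin (fun t : ℝ => (fun t : ℝ => GG m (om * t) - CC m * ((om * t)⁻¹) ^ (2 * m + 1)) (x * t)) (1 / 2)
      ((x : ℂ) ^ (-(1 / 2) : ℂ) • Phi m (1 / 2)) :=
    ⟨(MellinConvergent.comp_mul_left hx).mpr (mellB m).1, by rw [mellin_comp_mul_left (fun t : ℝ => GG m (om * t) - CC m * ((om * t)⁻¹) ^ (2 * m + 1)) _ hx, (mellB m).2]⟩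
  have h2 := mel2 (p := -2) (by norm_num) h1
  have h3 := hasMellin_const_smul h2.1 (CC 0 * om⁻¹)
  rw [h2.2] at h3
  have := hm_congr (g := (fun v : ℝ => CC 0 * ((om * (v ^ 2 : ℝ))⁻¹) ^ (2 * 0 + 1) *
      (GG m (om * (x / v ^ 2 : ℝ)) - CC m * ((om * (x / v ^ 2 : ℝ))⁻¹) ^ (2 * m + 1)))) h3 ?_
  · refine ⟨this.1, this.2.trans ?_⟩
    rw [Complex.real_smul, abs_neg, abs_of_pos two_pos, smul_eq_mul, smul_eq_mul]; push_cast; ring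
  · intro t ht
    have htc : (t : ℂ) ≠ 0 := by exact_mod_cast ht.ne'
    have e : ((1 / 2 : ℂ)) * ((-2:ℝ):ℂ) - 1 = ((-2 : ℤ) : ℂ) := by push_cast; ring
    have e1 : t ^ (-2:ℝ) = (t ^ 2)⁻¹ := by rw [Real.rpow_neg ht.le, rp2]
    simp only [e1, smul_eq_mul]
    rw [e, Complex.cpow_intCast, ← div_eq_mul_inv x]
    have e3 : (om * ((t ^ 2 : ℝ) : ℂ))⁻¹ = om⁻¹ * (t : ℂ) ^ (-2 : ℤ) := by
      rw [mul_inv]; push_cast; rw [zpow_neg]; norm_cast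
    rw [e3]; ring

def VV (z : ℂ) : ℂ := ((-(2 * √2) * (kap⁻¹ * z).im : ℝ) : ℂ)

lemma zeta_real {s : ℂ} (h : s.im = 0) : ∃ r : ℝ, riemannZeta s = r := by
  have hs : (starRingEnd ℂ) s = s := Complex.conj_eq_iff_im.mpr h
  have := riemannZeta_conj s
  rw [hs] at this
  exact ⟨(riemannZeta s).re, (Complex.conj_eq_iff_re.mp this.symm).symm⟩

lemma half_pow : (1 / (2 * π * om)) ^ (1 / 2 : ℂ) = kap⁻¹ * (√2 : ℂ)⁻¹ * (√π : ℂ)⁻¹ := by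
  have hpi : (π : ℂ) ≠ 0 := by exact_mod_cast Real.pi_ne_zero
  have hsp : (√π : ℂ) ≠ 0 := by
    have : (0:ℝ) < √π := by have := Real.pi_pos; positivity
    exact_mod_cast this.ne'
  have h := cpow_scale Real.pi_pos (one_div_ne_zero (mul_ne_zero (mul_ne_zero two_ne_zero hpi) om_ne)) (1 / 2)
  have e : (π : ℂ) * (1 / (2 * π * om)) = π / (2 * π * om) := by ring
  rw [e, sqrt_half_om] at h
  have e2 : (π : ℂ) ^ (1 / 2 : ℂ) = √π := by
    rw [Real.sqrt_eq_rpow, Complex.ofReal_cpow Real.pi_pos.le]; push_cast; rfl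
  rw [e2] at h
  rw [h]; field_simp

lemma Phi_half (m : ℕ) : Phi m (1 / 2) = kap⁻¹ * (√2 : ℂ)⁻¹ * riemannZeta (1 / 2 - 2 * m) := by
  have hsp : (√π : ℂ) ≠ 0 := by
    have : (0:ℝ) < √π := by have := Real.pi_pos; positivity
    exact_mod_cast this.ne'
  have e2 : (π : ℂ) ^ (1 / 2 : ℂ) = √π := by
    rw [Real.sqrt_eq_rpow, Complex.ofReal_cpow Real.pi_pos.le]; push_cast; rfl
  rw [Phi, half_pow, Complex.Gamma_one_half_eq, e2]
  field_simp

lemma om_inv : om⁻¹ = ((√2 / 2 : ℝ) : ℂ) * (1 - I) := by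
  have h2 : ((√2:ℝ):ℂ) ^ 2 = 2 := by
    rw [← Complex.ofReal_pow, Real.sq_sqrt (by norm_num)]; norm_num
  have : om * (((√2 / 2 : ℝ) : ℂ) * (1 - I)) = 1 := by
    rw [om_eq]; push_cast
    linear_combination (1/2 : ℂ) * h2 - (√2:ℂ)^2/4 * Complex.I_sq
  exact inv_eq_of_mul_eq_one_right this

lemma kap_inv_sq : kap⁻¹ * kap⁻¹ = om⁻¹ := by rw [om, pow_two, mul_inv]

lemma V2 (m : ℕ) : VV (P0 m * (1 / 2 * Phi 0 (1 / 2))) = (1 / (√2 : ℂ)) * riemannZeta (1 / 2) * riemannZeta (-2 * m) := by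
  obtain ⟨r, hr⟩ := zeta_real (s := 1 / 2) (by norm_num)
  obtain ⟨q, hq⟩ := zeta_real (s := -2 * m) (by simp)
  have h2 : √2 ^ 2 = 2 := Real.sq_sqrt (by norm_num)
  have hs : (0:ℝ) < √2 := by positivity
  rw [P0_eq, Phi_half, Nat.cast_zero, mul_zero, sub_zero, hr, hq]
  rw [VV, show kap⁻¹ * (q * (1 / 2 * (kap⁻¹ * (√2 : ℂ)⁻¹ * r))) = ((q * r / 2 * (√2)⁻¹ * (√2 / 2) : ℝ) : ℂ) * (1 - I) by
    push_cast
    rw [show ∀ a b c d : ℂ, a * (b * (1 / 2 * (a * c * d))) = (a * a) * (b * d * c / 2) by intros; ring, kap_inv_sq, om_inv]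
    push_cast; ring, Complex.im_ofReal_mul]
  rw [← Complex.ofReal_one, ← Complex.ofReal_div, ← Complex.ofReal_mul, ← Complex.ofReal_mul]
  congr 1
  simp
  field_simp
  try linear_combination (q * r) * h2

lemma V3 (m : ℕ) {x : ℝ} (hx : 0 < x) : VV (CC 0 * om⁻¹ * (1 / 2 * ((x : ℂ) ^ (-(1 / 2) : ℂ) * Phi m (1 / 2)))) =
    riemannZeta (1 / 2 - 2 * m) / (2 * (π : ℂ) * (Real.sqrt x : ℂ)) := by
  obtain ⟨r, hr⟩ := zeta_real (s := 1 / 2 - 2 * m) (by simp)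
  have hs : (0:ℝ) < √2 := by positivity
  have hx2 : (0:ℝ) < √x := by positivity
  have hpi := Real.pi_pos
  have e2 : (x : ℂ) ^ (-(1 / 2) : ℂ) = ((√x)⁻¹ : ℝ) := by
    rw [Real.sqrt_eq_rpow, Complex.cpow_neg, Complex.ofReal_inv, Complex.ofReal_cpow hx.le]; push_cast; rfl
  have ho : om⁻¹ * om⁻¹ = -I := by rw [← mul_inv, ← pow_two, om_sq, Complex.inv_I]
  rw [Phi_half, hr, e2, show CC 0 = ((1 / (2 * π) : ℝ) : ℂ) by simp [CC]]
  rw [VV, show kap⁻¹ * (((1 / (2 * π) : ℝ) : ℂ) * om⁻¹ * (1 / 2 * ((((√x)⁻¹ : ℝ) : ℂ) * (kap⁻¹ * (√2 : ℂ)⁻¹ * r)))) =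
     ((1 / (2 * π) * (1 / 2) * (√x)⁻¹ * (√2)⁻¹ * r : ℝ) : ℂ) * (-I) by
    rw [← ho, ← kap_inv_sq]
    push_cast
    ring, Complex.im_ofReal_mul]
  rw [show (2 * (π : ℂ) * (√x : ℂ)) = ((2 * π * √x : ℝ) : ℂ) by push_cast; ring, ← Complex.ofReal_div]
  congr 1
  simp
  field_simp

lemma V1 (m : ℕ) {x : ℝ} (hx : 0 < x) : VV (CC m * ((om * x)⁻¹) ^ (2 * m + 1) * (1 / 2 * Phi 0 (2 * m + 3 / 2))) =
    - (((Nat.factorial (2 * m) : ℂ) * riemannZeta (-1 / 2 - 2 * m)) /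
          ((Real.sqrt 2 : ℂ) * (((2 * π * x) ^ (2 * m + 1) : ℝ) : ℂ))) := by
  have hpi := Real.pi_pos
  have hpic : (π : ℂ) ≠ 0 := by exact_mod_cast Real.pi_ne_zero
  have hs : (0:ℝ) < √2 := by positivity
  have hs2 : √2 ^ 2 = 2 := Real.sq_sqrt (by norm_num)
  have hsp : (0:ℝ) < √π := by positivity
  obtain ⟨r, hr⟩ := zeta_real (s := 2 * m + 3 / 2) (by simp)
  have hre : ((2 * m + 3 / 2 : ℂ)).re = 2 * m + 3 / 2 := by simp
  have hm0 : (0:ℝ) ≤ m := by positivity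
  have hg : Gamma (2 * m + 3 / 2) = (Real.Gamma (2 * m + 3 / 2) : ℝ) := by
    rw [← Complex.Gamma_ofReal]; push_cast; rfl
  set g : ℝ := Real.Gamma (2 * m + 3 / 2)
  have hz := riemannZeta_one_sub (s := (2 * m + 3 / 2 : ℂ)) (by
      intro n h
      have := congrArg Complex.re h
      rw [hre] at this
      simp at this
      have : (0:ℝ) ≤ n := by positivity
      linarith) (by
      intro h
      have := congrArg Complex.re h
      rw [hre] at this
      simp at this
      linarith)
  have hcos : Complex.cos (π * (2 * m + 3 / 2) / 2) = ((-(-1) ^ m * (√2 / 2) : ℝ) : ℂ) := by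
    rw [show ((π : ℂ) * (2 * m + 3 / 2) / 2) = ((π - π / 4 + (m : ℤ) * π : ℝ) : ℂ) by push_cast; ring, ← Complex.ofReal_cos,
      Real.cos_add_int_mul_pi, Real.cos_pi_sub, Real.cos_pi_div_four]
    congr 1
    simp
  have hpw : ((2 * π : ℂ)) ^ (-(2 * m + 3 / 2) : ℂ) = (((2 * π) ^ (2 * m + 1) * (√2 * √π) : ℝ) : ℂ)⁻¹ := by
    rw [Complex.cpow_neg]
    congr 1
    rw [show (2 * m + 3 / 2 : ℂ) = ((2 * m + 1 : ℕ) : ℂ) + 1 / 2 by push_cast; ring,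
      Complex.cpow_add _ _ (mul_ne_zero two_ne_zero hpic), Complex.cpow_natCast]
    push_cast
    congr 1
    rw [← Complex.ofReal_mul, ← Real.sqrt_mul (by norm_num), Real.sqrt_eq_rpow, Complex.ofReal_cpow (by positivity)]
    push_cast; rfl
  have hP : Phi 0 (2 * m + 3 / 2) = ((1 / (2 * π)) ^ (2 * m + 1) : ℝ) * (om⁻¹) ^ (2 * m + 1) * (kap⁻¹ * (√2 : ℂ)⁻¹ * (√π : ℂ)⁻¹) * g * r := by
    rw [Phi, Nat.cast_zero, mul_zero, sub_zero, hr, hg]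
    congr 2
    rw [show (2 * m + 3 / 2 : ℂ) = ((2 * m + 1 : ℕ) : ℂ) + 1 / 2 by push_cast; ring,
      Complex.cpow_add _ _ (one_div_ne_zero (mul_ne_zero (mul_ne_zero two_ne_zero hpic) om_ne)), Complex.cpow_natCast, half_pow]
    congr 1
    push_cast
    rw [← mul_pow]; congr 1; field_simp
  rw [show 1 - (2 * m + 3 / 2 : ℂ) = -1 / 2 - 2 * m by ring, hr, hg, hcos, hpw] at hz
  have ho : (om⁻¹) ^ (2 * m + 1) * (om⁻¹) ^ (2 * m + 1) = (-1) ^ m * (-I) := by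
    rw [← mul_pow, ← mul_inv, ← pow_two, om_sq, Complex.inv_I, pow_succ, pow_mul]; simp
  rw [hP, hz, CC, VV]
  rw [show kap⁻¹ * (((2 * m).factorial : ℂ) / (2 * π) ^ (2 * m + 1) * ((om * x)⁻¹) ^ (2 * m + 1) * (1 / 2 *
     (((1 / (2 * π)) ^ (2 * m + 1) : ℝ) * (om⁻¹) ^ (2 * m + 1) * (kap⁻¹ * (√2 : ℂ)⁻¹ * (√π : ℂ)⁻¹) * g * r))) =
     ((((2 * m).factorial : ℝ) / (2 * π * x) ^ (2 * m + 1) * (1 / 2) * (1 / (2 * π)) ^ (2 * m + 1) * (√2)⁻¹ * (√π)⁻¹ * g * r * (√2 / 2) * (-1) ^ m : ℝ) : ℂ) * ((-I) * (1 - I)) by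
    have hxc : (x : ℂ) ≠ 0 := by exact_mod_cast hx.ne'
    rw [mul_inv om, mul_pow om⁻¹]
    have e1 : ((-1 : ℂ)) ^ m * (((√2 / 2 : ℝ) : ℂ)) * ((-I) * (1 - I)) = (om⁻¹) ^ (2 * m + 1) * (om⁻¹) ^ (2 * m + 1) * (kap⁻¹ * kap⁻¹) := by
      rw [ho, kap_inv_sq, om_inv]; ring
    push_cast at e1 ⊢
    rw [mul_pow (2 * (π:ℂ)) x]
    generalize (om⁻¹) ^ (2 * m + 1) = w at *
    linear_combination (-(((2 * m).factorial : ℂ) / ((2 * π) ^ (2 * m + 1) * x ^ (2 * m + 1)) * (1 / 2) * (1 / (2 * π)) ^ (2 * m + 1) * (√2:ℂ)⁻¹ * (√π:ℂ)⁻¹ * g * r)) * e1,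
    Complex.im_ofReal_mul]
  rw [show -(((2 * m).factorial : ℂ) * (2 * (((2 * π) ^ (2 * m + 1) * (√2 * √π) : ℝ) : ℂ)⁻¹ * (g : ℂ) * ((-(-1) ^ m * (√2 / 2) : ℝ) : ℂ) * (r : ℂ)) /
        ((√2 : ℂ) * (((2 * π * x) ^ (2 * m + 1) : ℝ) : ℂ))) =
      ((-(((2 * m).factorial : ℝ) * (2 * ((2 * π) ^ (2 * m + 1) * (√2 * √π))⁻¹ * g * (-(-1) ^ m * (√2 / 2)) * r) /
        (√2 * (2 * π * x) ^ (2 * m + 1))) : ℝ) : ℂ) by push_cast; ring]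
  congr 1
  simp
  have hm1 : (1 / (2 * π)) ^ (2 * m + 1) * (2 * π) ^ (2 * m + 1) = 1 := by
    rw [← mul_pow, one_div_mul_cancel (by positivity), one_pow]
  field_simp
  linear_combination (√2 ^ 2 * g * r) * hm1 + g * r * hs2

end Coal
end

noncomputable section

namespace Coal

open MeasureTheory Set Filter Topology


lemma basic_int {w : ℂ} (hw : 0 < w.re) :
    IntegrableOn (fun v : ℝ => ((v : ℂ) ^ 2 + w ^ 2)⁻¹) (Ioi 0) ∧
    ∫ v in Ioi (0:ℝ), ((v : ℂ) ^ 2 + w ^ 2)⁻¹ = π / (2 * w) := by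
  have hw0 : w ≠ 0 := by intro h; rw [h] at hw; simp at hw
  have hf1 : ∀ v : ℝ, 0 < ((w : ℂ) - I * v).re := fun v => by simpa using hw
  have hf2 : ∀ v : ℝ, 0 < ((w : ℂ) + I * v).re := fun v => by simpa using hw
  have n1 : ∀ v : ℝ, ((w : ℂ) - I * v) ≠ 0 := fun v h => by have := hf1 v; rw [h] at this; simp at this
  have n2 : ∀ v : ℝ, ((w : ℂ) + I * v) ≠ 0 := fun v h => by have := hf2 v; rw [h] at this; simp at this
  have hfac : ∀ v : ℝ, (v : ℂ) ^ 2 + w ^ 2 = (w - I * v) * (w + I * v) := fun v => by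
    linear_combination (v : ℂ) ^ 2 * Complex.I_sq
  have n3 : ∀ v : ℝ, (v : ℂ) ^ 2 + w ^ 2 ≠ 0 := fun v => by rw [hfac]; exact mul_ne_zero (n1 v) (n2 v)
  set F : ℝ → ℂ := fun v => (1 / (2 * I * w)) * (Complex.log (w + I * v) - Complex.log (w - I * v)) with hF
  have hd : ∀ v : ℝ, HasDerivAt F (((v : ℂ) ^ 2 + w ^ 2)⁻¹) v := by
    intro v
    have hv : HasDerivAt (fun v : ℝ => (v : ℂ)) 1 v := Complex.ofRealCLM.hasDerivAt
    have h1 : HasDerivAt (fun v : ℝ => w + I * (v:ℂ)) I v := ((hv.const_mul I).const_add w).congr_deriv (by ring)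
    have h2 : HasDerivAt (fun v : ℝ => w - I * (v:ℂ)) (-I) v := ((hv.const_mul I).const_sub w).congr_deriv (by ring)
    have h3 := h1.clog_real (Or.inl (hf2 v))
    have h4 := h2.clog_real (Or.inl (hf1 v))
    refine ((h3.sub h4).const_mul (1 / (2 * I * w))).congr_deriv ?_
    rw [hfac]
    have := n1 v; have := n2 v
    have := Complex.I_ne_zero
    field_simp; ring
  have hcont : Continuous (fun v : ℝ => ((v : ℂ) ^ 2 + w ^ 2)⁻¹) := by
    apply Continuous.inv₀ (by fun_prop) n3
  have h_intg : IntegrableOn (fun v : ℝ => ((v : ℂ) ^ 2 + w ^ 2)⁻¹) (Ioi 0) := by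
    set M : ℝ := 2 + (1 + 2 * w.im ^ 2) / w.re ^ 2 with hM
    have hMp : 0 < M := by positivity
    have key : ∀ a : ℝ, 1 + a ^ 2 + 2 * w.im ^ 2 * 0 ≤ M * (w.re ^ 2 + (a - w.im) ^ 2) := by
      intro a
      have e : M * (w.re ^ 2 + (a - w.im) ^ 2) = 2 * w.re ^ 2 + 2 * (a - w.im) ^ 2 + (1 + 2 * w.im ^ 2) + (1 + 2 * w.im ^ 2) / w.re ^ 2 * (a - w.im) ^ 2 := by
        rw [hM]; field_simp; ring
      have : 0 ≤ (1 + 2 * w.im ^ 2) / w.re ^ 2 * (a - w.im) ^ 2 := by positivity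
      rw [e]; nlinarith [sq_nonneg (a - 2 * w.im), sq_nonneg w.re]
    have hb : ∀ v : ℝ, ‖((v : ℂ) ^ 2 + w ^ 2)⁻¹‖ ≤ M * (1 + v ^ 2)⁻¹ := by
      intro v
      have k1 := key v
      have k2 := key (-v)
      have s1 : ‖w - I * v‖ ^ 2 = w.re ^ 2 + (v - w.im) ^ 2 := by
        rw [← Complex.normSq_eq_norm_sq, Complex.normSq_apply]; simp; ring
      have s2 : ‖w + I * v‖ ^ 2 = w.re ^ 2 + (-v - w.im) ^ 2 := by
        rw [← Complex.normSq_eq_norm_sq, Complex.normSq_apply]; simp; ring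
      rw [← s1] at k1
      rw [← s2] at k2
      have hv1 : (0:ℝ) < 1 + v ^ 2 := by positivity
      have : (1 + v ^ 2) ≤ M * ‖(v : ℂ) ^ 2 + w ^ 2‖ := by
        apply le_of_sq_le_sq _ (by positivity)
        rw [hfac, norm_mul, mul_pow, mul_pow]
        have := mul_le_mul k1 k2 (by positivity) (by positivity)
        nlinarith
      rw [norm_inv, ← div_eq_mul_inv, le_div_iff₀ hv1, inv_mul_le_iff₀ (norm_pos_iff.mpr (n3 v))]
      linarith
    exact (Integrable.mono' (integrable_inv_one_add_sq.const_mul M) hcont.aestronglyMeasurable (ae_of_all _ hb)).integrableOn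
  refine ⟨h_intg, ?_⟩
  have hlim : Tendsto F atTop (𝓝 ((1 / (2 * I * w)) * (Complex.log I - Complex.log (-I)))) := by
    have e : F =ᶠ[atTop] fun v => (1 / (2 * I * w)) * (Complex.log (w * ((v⁻¹ : ℝ) : ℂ) + I) - Complex.log (w * ((v⁻¹ : ℝ) : ℂ) - I)) := by
      filter_upwards [eventually_gt_atTop 0] with v hv
      have hvc : (v : ℂ) ≠ 0 := by exact_mod_cast hv.ne'
      have e1 : w + I * v = v * (w * ((v⁻¹ : ℝ) : ℂ) + I) := by push_cast; field_simp
      have e2 : w - I * v = v * (w * ((v⁻¹ : ℝ) : ℂ) - I) := by push_cast; field_simp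
      have m1 : (w * ((v⁻¹ : ℝ) : ℂ) + I) ≠ 0 := by
        intro h; apply n2 v; rw [e1, h, mul_zero]
      have m2 : (w * ((v⁻¹ : ℝ) : ℂ) - I) ≠ 0 := by
        intro h; apply n1 v; rw [e2, h, mul_zero]
      simp only [hF]
      rw [e1, e2, Complex.log_ofReal_mul hv m1, Complex.log_ofReal_mul hv m2]
      ring
    rw [tendsto_congr' e]
    have h0 : Tendsto (fun v : ℝ => w * ((v⁻¹ : ℝ) : ℂ)) atTop (𝓝 0) := by
      have := (Complex.continuous_ofReal.tendsto 0).comp tendsto_inv_atTop_zero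
      have := this.const_mul w
      simpa using this
    have t1 : Tendsto (fun v : ℝ => w * ((v⁻¹ : ℝ) : ℂ) + I) atTop (𝓝 I) := by simpa using h0.add_const I
    have t2 : Tendsto (fun v : ℝ => w * ((v⁻¹ : ℝ) : ℂ) - I) atTop (𝓝 (-I)) := by simpa using h0.sub_const I
    refine Tendsto.const_mul _ (Tendsto.sub (t1.clog ?_) (t2.clog ?_))
    · right; simp
    · right; simp
  rw [integral_Ioi_of_hasDerivAt_of_tendsto' (fun v _ => hd v) h_intg hlim]
  simp only [hF, Complex.log_I, Complex.log_neg_I]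
  have := Complex.I_ne_zero
  simp
  field_simp
  ring_nf
  rw [Complex.I_sq]; norm_num

lemma quart {w1 w2 : ℂ} (h1 : 0 < w1.re) (h2 : 0 < w2.re) (h : w1 ^ 2 = - w2 ^ 2) :
    (IntegrableOn (fun v : ℝ => ((v : ℂ) ^ 4 - w2 ^ 4)⁻¹) (Ioi 0) ∧
    ∫ v in Ioi (0:ℝ), ((v : ℂ) ^ 4 - w2 ^ 4)⁻¹ = 1 / (2 * w2 ^ 2) * (π / (2 * w1) - π / (2 * w2))) ∧
    ∫ v in Ioi (0:ℝ), (v : ℂ) ^ 2 * ((v : ℂ) ^ 4 - w2 ^ 4)⁻¹ = 1 / 2 * (π / (2 * w1) + π / (2 * w2)) := by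
  have b1 := basic_int h1
  have b2 := basic_int h2
  have hw0 : w2 ≠ 0 := by intro h; rw [h] at h2; simp at h2
  have n : ∀ {w : ℂ}, 0 < w.re → ∀ v : ℝ, (v : ℂ) ^ 2 + w ^ 2 ≠ 0 := by
    intro w hw v hh
    have e : (v : ℂ) ^ 2 + w ^ 2 = (w - I * v) * (w + I * v) := by
      linear_combination (v : ℂ) ^ 2 * Complex.I_sq
    rw [e, mul_eq_zero] at hh
    rcases hh with hh | hh <;> have := congrArg Complex.re hh <;> simp at this <;> linarith
  have e0 : ∀ v : ℝ, (v : ℂ) ^ 4 - w2 ^ 4 = ((v : ℂ) ^ 2 + w1 ^ 2) * ((v : ℂ) ^ 2 + w2 ^ 2) := fun v => by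
    rw [h]; ring
  have e1 : (fun v : ℝ => ((v : ℂ) ^ 4 - w2 ^ 4)⁻¹) = fun v : ℝ => 1 / (2 * w2 ^ 2) * (((v : ℂ) ^ 2 + w1 ^ 2)⁻¹ - ((v : ℂ) ^ 2 + w2 ^ 2)⁻¹) := by
    ext v
    have m1 := n h1 v
    have m2 := n h2 v
    rw [e0]; field_simp; rw [h]; ring
  have e2 : (fun v : ℝ => (v : ℂ) ^ 2 * ((v : ℂ) ^ 4 - w2 ^ 4)⁻¹) = fun v : ℝ => 1 / 2 * (((v : ℂ) ^ 2 + w1 ^ 2)⁻¹ + ((v : ℂ) ^ 2 + w2 ^ 2)⁻¹) := by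
    ext v
    have m1 := n h1 v
    have m2 := n h2 v
    rw [e0]; field_simp; rw [h]; ring
  rw [e1, e2]
  refine ⟨⟨(b1.1.sub b2.1).const_mul _, ?_⟩, ?_⟩
  · rw [integral_const_mul, integral_sub b1.1 b2.1, b1.2, b2.2]
  · rw [integral_const_mul, integral_add b1.1 b2.1, b1.2, b2.2]

lemma kap_8 : kap ^ 8 = -1 := by
  rw [show (8:ℕ) = 4 * 2 by norm_num, pow_mul, kap_pow4, Complex.I_sq]

lemma kap2_eq : (1 : ℂ) + I = √2 * kap ^ 2 := by
  have := om_eq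
  rw [om] at this
  have h2 : ((√2:ℝ):ℂ) ^ 2 = 2 := by
    rw [← Complex.ofReal_pow, Real.sq_sqrt (by norm_num)]; norm_num
  rw [this]; push_cast
  linear_combination (-(1 + I) / 2) * h2

lemma q_main : IntegrableOn (fun v : ℝ => ((v : ℂ) ^ 4 - I)⁻¹) (Ioi 0) ∧
    ∫ v in Ioi (0:ℝ), ((v : ℂ) ^ 4 - I)⁻¹ = (π * √2 / 4 : ℝ) * kap ^ 3 := by
  have h := (quart (w1 := -I * kap) (w2 := kap) (by simpa using kap_im) kap_re (by
    rw [mul_pow]; simp)).1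
  rw [kap_pow4] at h
  refine ⟨h.1, h.2.trans ?_⟩
  have hk := kap_ne
  have hI := Complex.I_ne_zero
  have e : (1 : ℂ) + I = √2 * kap ^ 2 := kap2_eq
  push_cast
  field_simp
  linear_combination -4 * e - 4 * √2 * kap ^ 2 * I * kap_pow4 - 4 * √2 * kap ^ 2 * Complex.I_sq

lemma q_r {r : ℝ} (hr : 0 < r) : (IntegrableOn (fun v : ℝ => ((v : ℂ) ^ 4 + I * r ^ 2)⁻¹) (Ioi 0) ∧
    ∫ v in Ioi (0:ℝ), ((v : ℂ) ^ 4 + I * r ^ 2)⁻¹ = (π * √2 / 4 / (r * √r) : ℝ) * kap⁻¹ ^ 3) ∧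
    ∫ v in Ioi (0:ℝ), (v : ℂ) ^ 2 * ((v : ℂ) ^ 4 + I * r ^ 2)⁻¹ = (π * √2 / 4 / √r : ℝ) * kap⁻¹ := by
  have hs : 0 < √r := by positivity
  have hss : ((√r : ℝ) : ℂ) ^ 2 = r := by rw [← Complex.ofReal_pow, Real.sq_sqrt hr.le]
  have hki : kap⁻¹ = (starRingEnd ℂ) kap := by
    rw [Complex.inv_def, Complex.normSq_eq_norm_sq, norm_kap]; simp
  have hk4 : kap⁻¹ ^ 4 = -I := by rw [inv_pow, kap_pow4, Complex.inv_I]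
  have h := (quart (w1 := √r * (I * kap⁻¹)) (w2 := √r * kap⁻¹) (by
    rw [Complex.re_ofReal_mul, hki]; have := mul_pos hs kap_im; simpa using this) (by
    rw [Complex.re_ofReal_mul, hki]; have := mul_pos hs kap_re; simpa using this) (by
    rw [mul_pow, mul_pow I]; simp; ring))
  rw [show (((√r : ℝ) : ℂ) * kap⁻¹) ^ 4 = -(I * (r:ℂ) ^ 2) by rw [mul_pow, hk4, ← hss]; ring] at h
  simp only [sub_neg_eq_add] at h
  refine ⟨⟨h.1.1, h.1.2.trans ?_⟩, h.2.trans ?_⟩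
  · have hk := kap_ne
    have hI := Complex.I_ne_zero
    have hsc : ((√r : ℝ) : ℂ) ≠ 0 := by exact_mod_cast hs.ne'
    push_cast; rw [← hss]
    field_simp
    linear_combination 4 * kap ^ 2 * (1 - I) * kap_pow4 - 4 * kap ^ 2 * Complex.I_sq + 4 * kap ^ 2 * kap2_eq + 4 * √2 * kap_pow4
  · have hk := kap_ne
    have hI := Complex.I_ne_zero
    have hsc : ((√r : ℝ) : ℂ) ≠ 0 := by exact_mod_cast hs.ne'
    push_cast
    field_simp
    linear_combination 4 * kap ^ 2 * kap2_eq + 4 * √2 * kap_pow4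

lemma DD_deriv (p : ℕ) {y : ℝ} {w : ℂ} (h1 : (y : ℂ) + I * w ≠ 0) (h2 : (y : ℂ) - I * w ≠ 0) :
    HasDerivAt (fun y : ℝ => DD p y w) (DD (p + 1) y w) y := by
  have hv : HasDerivAt (fun v : ℝ => (v : ℂ)) 1 y := Complex.ofRealCLM.hasDerivAt
  have a1 : HasDerivAt (fun v : ℝ => ((v:ℂ) + I * w)) 1 y := hv.add_const _
  have a2 : HasDerivAt (fun v : ℝ => ((v:ℂ) - I * w)) 1 y := hv.sub_const _
  have b1 := (a1.fun_inv h1).fun_pow (p + 1)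
  have b2 := (a2.fun_inv h2).fun_pow (p + 1)
  refine ((b1.sub b2).const_mul (I * ((-1) ^ p * (p.factorial : ℂ)))).congr_deriv ?_
  rw [DD, Nat.factorial_succ]
  push_cast
  simp only [Nat.add_sub_cancel, div_eq_mul_inv, ← inv_pow]
  ring

lemma dom_bound {a x v y : ℝ} (ha : 0 < a) (hay : a ≤ y) (hx : 0 < x) (hv : 0 < v) :
    (x / v ^ 2) / ‖(y : ℂ) ^ 2 + I * (x / v ^ 2 : ℝ) ^ 2‖ ≤ (1 / a ^ 2 + 1 + x / a ^ 2) * (1 + v ^ 2)⁻¹ := by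
  have h3 := den3 y (x / v ^ 2)
  have h4 := den4 y (x / v ^ 2)
  set B := ‖(y : ℂ) ^ 2 + I * (x / v ^ 2 : ℝ) ^ 2‖
  have hρ : 0 < x / v ^ 2 := by positivity
  have hya : a ^ 2 ≤ y ^ 2 := by gcongr
  have hB : a ^ 2 ≤ B := hya.trans h3
  have hBp : 0 < B := lt_of_lt_of_le (by positivity) hB
  have hxv : x / v ^ 2 * v ^ 2 = x := by field_simp
  generalize x / v ^ 2 = ρ at *
  rw [← div_eq_mul_inv, div_le_div_iff₀ hBp (by positivity)]
  have e1 : ρ * (1 + v ^ 2) = ρ + x := by linear_combination hxv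
  rw [e1]
  have e2 : 1 ≤ 1 / a ^ 2 * B := by rw [one_div, ← div_eq_inv_mul, le_div_iff₀ (by positivity)]; linarith
  have e3 : x ≤ x / a ^ 2 * B := by
    have := mul_le_mul_of_nonneg_left e2 hx.le
    calc x = x * 1 := by ring
      _ ≤ _ := this
      _ = _ := by ring
  nlinarith [sq_nonneg (ρ - 1)]

/-- the parameter integral -/
def JJ (K : ℝ → ℂ) (x : ℝ) (p : ℕ) (y : ℝ) : ℂ := ∫ v in Ioi (0:ℝ), K v * DD p y (om * (x / v ^ 2 : ℝ))

lemma DD_bound2 (p : ℕ) {a x v y : ℝ} (ha : 0 < a) (hay : a ≤ y) (hx : 0 < x) (hv : 0 < v) :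
    ‖DD p y (om * (x / v ^ 2 : ℝ))‖ ≤ p.factorial * ((p + 1) * (√2 / a) ^ p * (2 * ((1 / a ^ 2 + 1 + x / a ^ 2) * (1 + v ^ 2)⁻¹))) := by
  have hy : 0 < y := by linarith
  refine (DD_bound p hy (ρ := x / v ^ 2) (by positivity)).trans ?_
  have := dom_bound ha hay hx hv
  gcongr

lemma DD_meas (p : ℕ) (x y : ℝ) : Measurable (fun v : ℝ => DD p y (om * (x / v ^ 2 : ℝ))) := by
  unfold DD; fun_prop

lemma JJ_deriv {K : ℝ → ℂ} {B x : ℝ} (hK : Measurable K) (hB : ∀ v, ‖K v‖ ≤ B) (hx : 0 < x) (p : ℕ) {y : ℝ} (hy : 0 < y) :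
    IntegrableOn (fun v : ℝ => K v * DD p y (om * (x / v ^ 2 : ℝ))) (Ioi 0) ∧
    HasDerivAt (JJ K x p) (JJ K x (p + 1) y) y := by
  have hB0 : 0 ≤ B := (norm_nonneg _).trans (hB 0)
  have hmeas : ∀ q z, AEStronglyMeasurable (fun v : ℝ => K v * DD q z (om * (x / v ^ 2 : ℝ))) (volume.restrict (Ioi 0)) :=
    fun q z => (hK.mul (DD_meas q x z)).aestronglyMeasurable
  have hb : ∀ q z, y / 2 ≤ z → ∀ v : ℝ, 0 < v → ‖K v * DD q z (om * (x / v ^ 2 : ℝ))‖ ≤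
      B * (q.factorial * ((q + 1) * (√2 / (y / 2)) ^ q * (2 * ((1 / (y / 2) ^ 2 + 1 + x / (y / 2) ^ 2) * (1 + v ^ 2)⁻¹)))) := by
    intro q z hz v hv
    rw [norm_mul]
    exact mul_le_mul (hB v) (DD_bound2 q (by positivity) hz hx hv) (norm_nonneg _) hB0
  have hbi : ∀ q : ℕ, IntegrableOn (fun v : ℝ => B * (q.factorial * ((q + 1) * (√2 / (y / 2)) ^ q * (2 * ((1 / (y / 2) ^ 2 + 1 + x / (y / 2) ^ 2) * (1 + v ^ 2)⁻¹))))) (Ioi 0) := by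
    intro q
    exact ((((integrable_inv_one_add_sq.const_mul _).const_mul _).const_mul _).const_mul _).const_mul _ |>.integrableOn
  have hi : ∀ q, IntegrableOn (fun v : ℝ => K v * DD q y (om * (x / v ^ 2 : ℝ))) (Ioi 0) := by
    intro q
    refine Integrable.mono' (hbi q) (hmeas q y) ?_
    rw [ae_restrict_iff' measurableSet_Ioi]
    exact ae_of_all _ fun v hv => hb q y (by linarith) v hv
  refine ⟨hi p, ?_⟩
  refine (hasDerivAt_integral_of_dominated_loc_of_deriv_le (s := Set.Ioi (y / 2)) (x₀ := y)
    (F := fun z v => K v * DD p z (om * (x / v ^ 2 : ℝ)))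
    (F' := fun z v => K v * DD (p + 1) z (om * (x / v ^ 2 : ℝ)))
    (bound := fun v : ℝ => B * ((p+1).factorial * (((p+1:ℕ) + 1) * (√2 / (y / 2)) ^ (p+1) * (2 * ((1 / (y / 2) ^ 2 + 1 + x / (y / 2) ^ 2) * (1 + v ^ 2)⁻¹)))))
    (Ioi_mem_nhds (by linarith)) (Eventually.of_forall fun z => hmeas p z) (hi p) (hmeas (p+1) y) ?_ (hbi (p+1)) ?_).2
  · rw [ae_restrict_iff' measurableSet_Ioi]
    exact ae_of_all _ fun v hv z hz => hb (p+1) z (le_of_lt hz) v hv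
  · rw [ae_restrict_iff' measurableSet_Ioi]
    refine ae_of_all _ fun v hv z hz => ?_
    have hv : (0:ℝ) < v := hv
    have hz : y / 2 < z := hz
    have hz0 : 0 < z := by linarith
    exact (DD_deriv p (den1_ne hz0 (by positivity)) (den2_ne hz0 (by positivity))).const_mul _

end Coal
end

noncomputable section

namespace Coal

open MeasureTheory Set Filter Topology


lemma uniq {f g : ℕ → ℝ → ℂ} {U : Set ℝ} (hU : IsOpen U) (h0 : ∀ y ∈ U, f 0 y = g 0 y)
    (hf : ∀ p, ∀ y ∈ U, HasDerivAt (f p) (f (p + 1) y) y)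
    (hg : ∀ p, ∀ y ∈ U, HasDerivAt (g p) (g (p + 1) y) y) : ∀ p, ∀ y ∈ U, f p y = g p y := by
  intro p
  induction p with
  | zero => exact h0
  | succ p ih =>
    intro y hy
    have e : f p =ᶠ[𝓝 y] g p := by
      filter_upwards [hU.mem_nhds hy] with z hz using ih z hz
    exact (hf p y hy).unique ((hg p y hy).congr_of_eventuallyEq e)

/-- descending product -/
def dp (p : ℕ) (a : ℝ) : ℝ := ∏ i ∈ Finset.range p, (a - i)

lemma dp_succ (p : ℕ) (a : ℝ) : dp (p + 1) a = dp p a * (a - p) := by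
  rw [dp, Finset.prod_range_succ]; rfl

lemma dp_shift (p : ℕ) (a : ℝ) : dp p (a + 1) * (a + 1 - p) = (a + 1) * dp p a := by
  rw [← dp_succ, dp, Finset.prod_range_succ', mul_comm]
  congr 1
  · simp
  · rw [dp]; refine Finset.prod_congr rfl fun i _ => ?_
    push_cast; ring

lemma dp_shift2 (p : ℕ) (a : ℝ) : dp p (a + 2) * ((a + 2 - p) * (a + 1 - p)) = (a + 2) * (a + 1) * dp p a := by
  have h1 := dp_shift p (a + 1)
  have h2 := dp_shift p a
  rw [show a + 1 + 1 = a + 2 by ring] at h1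
  linear_combination (a + 1 - p) * h1 + (a + 2) * h2

lemma dp_bound (p l : ℕ) {E : ℝ} (β : ℝ) (hE : |E| ≤ 2) : |dp p (E * l + β)| ≤ ((2 + |β| + p) * (l + 1)) ^ p := by
  rw [dp, Finset.abs_prod]
  calc ∏ i ∈ Finset.range p, |E * l + β - i| ≤ ∏ i ∈ Finset.range p, ((2 + |β| + p) * (l + 1)) := by
        refine Finset.prod_le_prod (fun _ _ => abs_nonneg _) fun i hi => ?_
        have hi : (i : ℝ) ≤ p := by exact_mod_cast (Finset.mem_range.mp hi).le
        have h0 : (0:ℝ) ≤ i := by positivity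
        have hl : (0:ℝ) ≤ l := by positivity
        have e1 : |E * l + β - i| ≤ |E| * l + |β| + i := by
          calc |E * l + β - i| ≤ |E * l + β| + |(i:ℝ)| := abs_sub _ _
            _ ≤ |E * l| + |β| + |(i:ℝ)| := by gcongr; exact abs_add_le _ _
            _ = _ := by rw [abs_mul, abs_of_nonneg hl, abs_of_nonneg h0]
        have := abs_nonneg β
        nlinarith [mul_le_mul_of_nonneg_right hE hl, mul_nonneg this hl, mul_nonneg (h0.trans hi) hl]
    _ = _ := by simp

def tm (q E β : ℝ) (p l : ℕ) (y : ℝ) : ℝ := q ^ l * dp p (E * l + β) * y ^ (E * l + β - p)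

def SS (q E β : ℝ) (p : ℕ) (y : ℝ) : ℝ := ∑' l : ℕ, tm q E β p l y

lemma tm_eq (q E β : ℝ) (p l : ℕ) {y : ℝ} (hy : 0 < y) : tm q E β p l y = dp p (E * l + β) * (q * y ^ E) ^ l * y ^ (β - p) := by
  rw [tm, mul_pow, ← Real.rpow_mul_natCast hy.le, show E * l + β - p = E * l + (β - p) by ring, Real.rpow_add hy]; ring

lemma tm_deriv (q E β : ℝ) (p l : ℕ) {y : ℝ} (hy : 0 < y) : HasDerivAt (tm q E β p l) (tm q E β (p + 1) l y) y := by
  have := (Real.hasDerivAt_rpow_const (p := E * l + β - p) (Or.inl hy.ne')).const_mul (q ^ l * dp p (E * l + β))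
  refine this.congr_deriv ?_
  rw [tm, dp_succ]; push_cast
  rw [show E * l + β - (p + 1) = E * l + β - p - 1 by ring]; ring

lemma tm_dom (q β : ℝ) {E : ℝ} (hE : |E| ≤ 2) (p : ℕ) {y₀ : ℝ} (hy : 0 < y₀) (hq : |q| * y₀ ^ E < 1) :
    ∃ ε > 0, ∃ u : ℕ → ℝ, Summable u ∧ ∀ l, ∀ y ∈ Metric.ball y₀ ε, 0 < y ∧ |tm q E β p l y| ≤ u l := by
  obtain ⟨ρ, h1, h2⟩ := exists_between hq
  have hρ0 : 0 < ρ := lt_of_le_of_lt (by positivity) h1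
  have c1 : ContinuousAt (fun y : ℝ => |q| * y ^ E) y₀ :=
    (Real.continuousAt_rpow_const _ _ (Or.inl hy.ne')).const_mul _
  have c2 : ContinuousAt (fun y : ℝ => y ^ (β - p)) y₀ :=
    (Real.continuousAt_rpow_const _ _ (Or.inl hy.ne'))
  have ev := ((c1.eventually (gt_mem_nhds h1)).and (c2.eventually (gt_mem_nhds (lt_add_one (y₀ ^ (β - p)))))).and (lt_mem_nhds hy)
  obtain ⟨ε, hε, hb⟩ := Metric.eventually_nhds_iff_ball.mp ev
  refine ⟨ε, hε, fun l => ((2 + |β| + p) * (l + 1)) ^ p * ρ ^ l * (y₀ ^ (β - p) + 1), ?_, fun l y hyb => ?_⟩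
  · apply Summable.mul_right
    have := (summable_nat_add_iff 1).mpr (summable_pow_mul_geometric_of_norm_lt_one p (r := ρ) (by rwa [Real.norm_of_nonneg hρ0.le]))
    have := this.mul_left ((2 + |β| + p) ^ p * ρ⁻¹)
    refine this.congr fun l => ?_
    rw [mul_pow, pow_succ]; push_cast; field_simp
  · obtain ⟨⟨b1, b2⟩, b3⟩ := hb y hyb
    refine ⟨b3, ?_⟩
    rw [tm_eq _ _ _ _ _ b3, abs_mul, abs_mul, abs_pow, abs_mul, abs_of_pos (Real.rpow_pos_of_pos b3 E),
      abs_of_pos (Real.rpow_pos_of_pos b3 (β - p))]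
    have := dp_bound p l β hE
    have hp3 := Real.rpow_pos_of_pos b3 E
    have hp4 := Real.rpow_pos_of_pos b3 (β - p)
    refine mul_le_mul (mul_le_mul this (pow_le_pow_left₀ (by positivity) b1.le _) (by positivity) (by positivity)) b2.le hp4.le (by positivity)

lemma tm_summable (q β : ℝ) {E : ℝ} (hE : |E| ≤ 2) (p : ℕ) {y₀ : ℝ} (hy : 0 < y₀) (hq : |q| * y₀ ^ E < 1) :
    Summable (fun l => tm q E β p l y₀) := by
  obtain ⟨ε, hε, u, hu, hb⟩ := tm_dom q β hE p hy hq
  exact Summable.of_norm_bounded hu fun l => (hb l y₀ (Metric.mem_ball_self hε)).2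

lemma SS_deriv (q β : ℝ) {E : ℝ} (hE : |E| ≤ 2) (p : ℕ) {y₀ : ℝ} (hy : 0 < y₀) (hq : |q| * y₀ ^ E < 1) :
    HasDerivAt (SS q E β p) (SS q E β (p + 1) y₀) y₀ := by
  obtain ⟨ε, hε, u, hu, hb⟩ := tm_dom q β hE (p + 1) hy hq
  exact hasDerivAt_tsum_of_isPreconnected hu Metric.isOpen_ball (convex_ball y₀ ε).isPreconnected
    (fun l y hyb => tm_deriv q E β p l (hb l y hyb).1) (fun l y hyb => (hb l y hyb).2)
    (Metric.mem_ball_self hε) (tm_summable q β hE p hy hq) (Metric.mem_ball_self hε)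

lemma SS_zero (q β E : ℝ) {y : ℝ} (hy : 0 < y) (hq : |q| * y ^ E < 1) :
    SS q E β 0 y = y ^ β * (1 - q * y ^ E)⁻¹ := by
  have e : ∀ l, tm q E β 0 l y = y ^ β * (q * y ^ E) ^ l := fun l => by
    rw [tm_eq _ _ _ _ _ hy, dp]; simp; ring
  rw [SS, tsum_congr e, tsum_mul_left, tsum_geometric_of_norm_lt_one]
  rw [Real.norm_eq_abs, abs_mul, abs_of_pos (Real.rpow_pos_of_pos hy E)]; exact hq

/-- main kernel -/
def Km (v : ℝ) : ℂ := PP 0 1 (om * (v ^ 2 : ℝ))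

lemma PP0_eq {y ρ : ℝ} (hy : 0 < y) (hρ : 0 ≤ ρ) : DD 0 y (om * ρ) = 2 * om * ρ / (y ^ 2 + I * ρ ^ 2) := by
  have n1 := den1_ne hy hρ
  have n2 := den2_ne hy hρ
  rw [← den_mul, DD]
  simp only [pow_zero, Nat.factorial_zero, Nat.cast_one, mul_one, zero_add, pow_one]
  rw [inv_sub_inv n1 n2, ← mul_div_assoc]
  congr 1
  linear_combination (-2) * om * ρ * Complex.I_sq

lemma Km_eq (v : ℝ) : Km v = DD 0 1 (om * (v ^ 2 : ℝ)) := by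
  rw [Km, PP_eq]; simp

lemma Km_bound (v : ℝ) : ‖Km v‖ ≤ 2 := by
  rw [Km_eq]
  refine (DD_bound 0 one_pos (by positivity : 0 ≤ v ^ 2)).trans ?_
  have h3 := den3 1 (v ^ 2)
  have h4 := den4 1 (v ^ 2)
  set B := ‖((1:ℝ) : ℂ) ^ 2 + I * (v ^ 2 : ℝ) ^ 2‖
  have : v ^ 2 / B ≤ 1 := by
    rw [div_le_one (by linarith)]
    nlinarith [sq_nonneg (v ^ 2 - 1)]
  simp; linarith

lemma Km_meas : Measurable Km := by unfold Km PP; fun_prop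

lemma JJ_main {x y : ℝ} (hx : 0 < x) (hy : 0 < y) :
    JJ Km x 0 y = (4 * x / (x ^ 2 + y ^ 2) : ℝ) * ((π * √2 / 4 : ℝ) * (kap ^ 3 + (√(x / y) : ℝ) * kap⁻¹ ^ 3)) := by
  have hr : 0 < x / y := by positivity
  have a := q_main
  have b := (q_r hr).1
  have hxy : (0:ℝ) < x ^ 2 + y ^ 2 := by positivity
  have hxyc : (x:ℂ) ^ 2 + y ^ 2 ≠ 0 := by exact_mod_cast hxy.ne'
  have hyc : (y : ℂ) ≠ 0 := by exact_mod_cast hy.ne'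
  have hxc : (x : ℂ) ≠ 0 := by exact_mod_cast hx.ne'
  have e : ∀ v ∈ Ioi (0:ℝ), Km v * DD 0 y (om * (x / v ^ 2 : ℝ)) = (4 * x / (x ^ 2 + y ^ 2) : ℝ) *
      (((v : ℂ) ^ 4 - I)⁻¹ + ((x / y : ℝ) : ℂ) ^ 2 * ((v : ℂ) ^ 4 + I * (x / y : ℝ) ^ 2)⁻¹) := by
    intro v hv
    have hv : (0:ℝ) < v := hv
    have hvc : (v : ℂ) ≠ 0 := by exact_mod_cast hv.ne'
    rw [Km_eq, PP0_eq one_pos (by positivity), PP0_eq hy (by positivity)]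
    have n1 : ((1:ℝ):ℂ) ^ 2 + I * (v ^ 2 : ℝ) ^ 2 ≠ 0 := by
      have := den3 1 (v ^ 2)
      exact norm_pos_iff.mp (by linarith)
    have n2 : ((y:ℝ):ℂ) ^ 2 + I * (x / v ^ 2 : ℝ) ^ 2 ≠ 0 := by
      have := den3 y (x / v ^ 2)
      exact norm_pos_iff.mp (by have : 0 < y ^ 2 := by positivity
                                linarith)
    have n1' : 1 + I * (v:ℂ) ^ 4 ≠ 0 := by
      rw [show 1 + I * (v:ℂ) ^ 4 = ((1:ℝ):ℂ) ^ 2 + I * (v ^ 2 : ℝ) ^ 2 by push_cast; ring]; exact n1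
    have e2 : ((y:ℝ):ℂ) ^ 2 + I * (x / v ^ 2 : ℝ) ^ 2 = (y ^ 2 * v ^ 4 + I * x ^ 2) / (v:ℂ) ^ 4 := by
      push_cast; field_simp
    have n2' : (y:ℂ) ^ 2 * v ^ 4 + I * x ^ 2 ≠ 0 := by
      intro h; apply n2; rw [e2, h, zero_div]
    have e1 : (v : ℂ) ^ 4 - I = -I * (1 + I * (v:ℂ) ^ 4) := by
      linear_combination (v:ℂ)^4 * Complex.I_sq
    have e3 : (v : ℂ) ^ 4 + I * (x / y : ℝ) ^ 2 = (y ^ 2 * v ^ 4 + I * x ^ 2) / y ^ 2 := by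
      push_cast; field_simp
    rw [e1, e2, e3, mul_inv, inv_neg, Complex.inv_I, neg_neg]
    rw [show ((1:ℝ):ℂ) ^ 2 + I * (v ^ 2 : ℝ) ^ 2 = 1 + I * (v:ℂ) ^ 4 by push_cast; ring]
    have h1 : I * (1 + I * (v:ℂ) ^ 4)⁻¹ + ((x / y : ℝ) : ℂ) ^ 2 * ((y ^ 2 * v ^ 4 + I * x ^ 2) / y ^ 2)⁻¹ =
       I * v ^ 4 * (x ^ 2 + y ^ 2) / ((1 + I * (v:ℂ) ^ 4) * (y ^ 2 * v ^ 4 + I * x ^ 2)) := by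
      have hAB : I * (y ^ 2 * v ^ 4 + I * x ^ 2) + x ^ 2 * (1 + I * (v:ℂ) ^ 4) = I * v ^ 4 * (x ^ 2 + y ^ 2) := by
        linear_combination (x:ℂ) ^ 2 * Complex.I_sq
      rw [← hAB]
      push_cast
      clear e1 e2 e3 n1 n2 hAB
      generalize 1 + I * (v:ℂ) ^ 4 = A at *
      generalize (y:ℂ) ^ 2 * v ^ 4 + I * x ^ 2 = B at *
      field_simp
    rw [h1, ← om_sq]
    push_cast
    clear e1 e2 e3 n1 n2 h1
    rw [om_sq]
    generalize 1 + I * (v:ℂ) ^ 4 = A at *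
    generalize (y:ℂ) ^ 2 * v ^ 4 + I * x ^ 2 = B at *
    rw [← om_sq]
    field_simp
    ring
  rw [JJ, setIntegral_congr_fun measurableSet_Ioi e, integral_const_mul, integral_add a.1 (b.1.const_mul _),
    integral_const_mul, a.2, b.2]
  congr 1
  have hs : (0:ℝ) < √(x / y) := by positivity
  have e5 : (π * √2 / 4 / (x / y * √(x / y))) * (x / y) ^ 2 = π * √2 / 4 * √(x / y) := by
    have : √(x / y) ^ 2 = x / y := Real.sq_sqrt hr.le
    generalize x / y = r at *
    field_simp; rw [this]
  have e6 := congrArg (fun t : ℝ => (t : ℂ)) e5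
  simp only [Complex.ofReal_mul (_ / _) (_ ^ 2), Complex.ofReal_mul (_ / _) (√ _)] at e6
  rw [Complex.ofReal_pow] at e6
  linear_combination kap⁻¹ ^ 3 * e6

lemma JJ_one {x y : ℝ} (hx : 0 < x) (hy : 0 < y) :
    JJ (fun _ => 1) x 0 y = (2 * x / y ^ 2 * (π * √2 / 4 / √(x / y)) : ℝ) * kap := by
  have hr : 0 < x / y := by positivity
  have b := (q_r hr).2
  have hyc : (y : ℂ) ≠ 0 := by exact_mod_cast hy.ne'
  have hxc : (x : ℂ) ≠ 0 := by exact_mod_cast hx.ne'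
  have e : ∀ v ∈ Ioi (0:ℝ), 1 * DD 0 y (om * (x / v ^ 2 : ℝ)) = (om * (2 * x / y ^ 2 : ℝ)) *
      ((v : ℂ) ^ 2 * ((v : ℂ) ^ 4 + I * (x / y : ℝ) ^ 2)⁻¹) := by
    intro v hv
    have hv : (0:ℝ) < v := hv
    have hvc : (v : ℂ) ≠ 0 := by exact_mod_cast hv.ne'
    rw [PP0_eq hy (by positivity)]
    have n2 : ((y:ℝ):ℂ) ^ 2 + I * (x / v ^ 2 : ℝ) ^ 2 ≠ 0 := by
      have := den3 y (x / v ^ 2)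
      exact norm_pos_iff.mp (by have : 0 < y ^ 2 := by positivity
                                linarith)
    have e2 : ((y:ℝ):ℂ) ^ 2 + I * (x / v ^ 2 : ℝ) ^ 2 = (y ^ 2 * v ^ 4 + I * x ^ 2) / (v:ℂ) ^ 4 := by
      push_cast; field_simp
    have n2' : (y:ℂ) ^ 2 * v ^ 4 + I * x ^ 2 ≠ 0 := by
      intro h; apply n2; rw [e2, h, zero_div]
    have e3 : (v : ℂ) ^ 4 + I * (x / y : ℝ) ^ 2 = (y ^ 2 * v ^ 4 + I * x ^ 2) / y ^ 2 := by
      push_cast; field_simp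
    rw [e2, e3]
    push_cast
    field_simp
  rw [JJ, setIntegral_congr_fun measurableSet_Ioi e, integral_const_mul, b]
  have hk := kap_ne
  rw [om]; push_cast; field_simp

lemma im_deriv {f : ℝ → ℂ} {f' : ℂ} {y : ℝ} (h : HasDerivAt f f' y) :
    HasDerivAt (fun y => (((kap⁻¹ * f y).im : ℝ) : ℂ)) (((kap⁻¹ * f').im : ℝ) : ℂ) y := by
  have h1 := h.const_mul kap⁻¹
  have h2 := Complex.imCLM.hasFDerivAt.comp_hasDerivAt y h1
  have h3 := Complex.ofRealCLM.hasFDerivAt.comp_hasDerivAt y h2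
  exact h3

lemma JJ_one_im {x : ℝ} (hx : 0 < x) (p : ℕ) {y : ℝ} (hy : 0 < y) : (((kap⁻¹ * JJ (fun _ => 1) x p y).im : ℝ) : ℂ) = 0 := by
  refine uniq (f := fun p y => (((kap⁻¹ * JJ (fun _ => 1) x p y).im : ℝ) : ℂ)) (g := fun _ _ => 0) isOpen_Ioi ?_ ?_ ?_ p y hy
  · intro y hy
    have hk := kap_ne
    change (((kap⁻¹ * JJ (fun _ => 1) x 0 y).im : ℝ) : ℂ) = 0
    rw [JJ_one hx hy, show ∀ a : ℂ, kap⁻¹ * (a * kap) = a by intro a; field_simp, Complex.ofReal_im, Complex.ofReal_zero]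
  · intro p y hy
    exact im_deriv (JJ_deriv measurable_const (B := 1) (fun _ => by simp) hx p hy).2
  · intro p y hy
    exact hasDerivAt_const _ _

def hh (x : ℝ) (p : ℕ) (y : ℝ) : ℂ := (((kap⁻¹ * JJ Km x p y).im : ℝ) : ℂ)

lemma hh_zero {x y : ℝ} (hx : 0 < x) (hy : 0 < y) : hh x 0 y =
    (π / 2) * DD 0 y x - √2 * π * ((x * √x * (y ^ (-(1/2) : ℝ) / (x ^ 2 + y ^ 2)) : ℝ) : ℂ) := by
  have hxy : (0:ℝ) < x ^ 2 + y ^ 2 := by positivity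
  have hxyc : (x:ℂ) ^ 2 + y ^ 2 ≠ 0 := by exact_mod_cast hxy.ne'
  have h2 : √2 ^ 2 = 2 := Real.sq_sqrt (by norm_num)
  have n1 : (y:ℂ) + I * x ≠ 0 := by
    intro h; have := congrArg Complex.re h; simp at this; linarith
  have n2 : (y:ℂ) - I * x ≠ 0 := by
    intro h; have := congrArg Complex.re h; simp at this; linarith
  have hD : DD 0 y x = ((2 * x / (x ^ 2 + y ^ 2) : ℝ) : ℂ) := by
    rw [DD]
    simp only [pow_zero, Nat.factorial_zero, Nat.cast_one, mul_one, zero_add, pow_one]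
    rw [inv_sub_inv n1 n2, ← mul_div_assoc]
    push_cast
    congr 1
    · linear_combination (-2) * x * Complex.I_sq
    · linear_combination (-(x:ℂ) ^ 2) * Complex.I_sq
  have hk := kap_ne
  have e : kap⁻¹ * ((4 * x / (x ^ 2 + y ^ 2) : ℝ) * ((π * √2 / 4 : ℝ) * (kap ^ 3 + (√(x / y) : ℝ) * kap⁻¹ ^ 3))) =
     ((4 * x / (x ^ 2 + y ^ 2) * (π * √2 / 4) : ℝ) : ℂ) * (om + (√(x / y) : ℝ) * (-I)) := by
    have hk4 : kap⁻¹ ^ 4 = -I := by rw [inv_pow, kap_pow4, Complex.inv_I]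
    rw [← hk4, om]; push_cast; field_simp
  rw [hh, JJ_main hx hy, e, Complex.im_ofReal_mul, Complex.add_im, Complex.im_ofReal_mul, om_im, hD]
  simp only [Complex.neg_im, Complex.I_im]
  rw [show √(x / y) = √x * y ^ (-(1/2) : ℝ) by
    rw [Real.sqrt_div hx.le, Real.rpow_neg hy.le, ← Real.sqrt_eq_rpow, div_eq_mul_inv]]
  have : (π / 2 : ℂ) * ((2 * x / (x ^ 2 + y ^ 2) : ℝ) : ℂ) - √2 * π * ((x * √x * (y ^ (-(1/2) : ℝ) / (x ^ 2 + y ^ 2)) : ℝ) : ℂ) =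
    ((π / 2 * (2 * x / (x ^ 2 + y ^ 2)) - √2 * π * (x * √x * (y ^ (-(1/2) : ℝ) / (x ^ 2 + y ^ 2))) : ℝ) : ℂ) := by push_cast; ring
  rw [this]
  congr 1
  field_simp
  linear_combination h2

lemma hh_gen {x : ℝ} (hx : 0 < x) {U : Set ℝ} (hU : IsOpen U) (hU0 : ∀ y ∈ U, 0 < y) {G : ℕ → ℝ → ℝ}
    (h0 : ∀ y ∈ U, G 0 y = y ^ (-(1/2) : ℝ) / (x ^ 2 + y ^ 2)) (hG : ∀ p, ∀ y ∈ U, HasDerivAt (G p) (G (p + 1) y) y)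
    (p : ℕ) (y : ℝ) (hy : y ∈ U) : hh x p y = (π / 2) * DD p y x - √2 * π * ((x * √x * G p y : ℝ) : ℂ) := by
  refine uniq (f := hh x) (g := fun p y => (π / 2) * DD p y x - √2 * π * ((x * √x * G p y : ℝ) : ℂ)) hU ?_ ?_ ?_ p y hy
  · intro y hy
    rw [hh_zero hx (hU0 y hy)]; simp only [h0 y hy]
  · intro p y hy
    exact im_deriv (JJ_deriv Km_meas Km_bound hx p (hU0 y hy)).2
  · intro p y hy
    have hy0 := hU0 y hy
    have n1 : (y:ℂ) + I * x ≠ 0 := by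
      intro h; have := congrArg Complex.re h; simp at this; linarith
    have n2 : (y:ℂ) - I * x ≠ 0 := by
      intro h; have := congrArg Complex.re h; simp at this; linarith
    exact ((DD_deriv p n1 n2).const_mul _).sub ((((hG p y hy).const_mul (x * √x)).ofReal_comp).const_mul _)

end Coal
end

noncomputable section

namespace Coal

open MeasureTheory Set Filter Topology


lemma poch_succ (a : ℂ) (k : ℕ) : poch a (k + 1) = poch a k * (a + k) := by
  rw [poch, Finset.prod_range_succ]; rfl

lemma poch_ne {a : ℂ} {c : ℤ} (h : 4 * a = 2 * c + 1) (k : ℕ) : poch a k ≠ 0 := by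
  rw [poch, Finset.prod_ne_zero_iff]
  intro i _ h0
  have : ((2 * c + 1 + 4 * i : ℤ) : ℂ) = 0 := by push_cast; linear_combination 4 * h0 - h
  have : (2 * c + 1 + 4 * i : ℤ) = 0 := by exact_mod_cast this
  omega

lemma poch_one (k : ℕ) : poch 1 k = (k.factorial : ℂ) := by
  induction k with
  | zero => simp [poch]
  | succ k ih => rw [poch_succ, ih, Nat.factorial_succ]; push_cast; ring

lemma dp_c1 (m l : ℕ) : ((dp (2 * m) (2 * l + -(1/2)) : ℝ) : ℂ) * (poch (1 / 4 - m) l * poch (3 / 4 - m) l) =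
    (dp (2 * m) (-(1/2)) : ℝ) * (poch (1 / 4) l * poch (3 / 4) l) := by
  induction l with
  | zero => simp [poch]
  | succ l ih =>
    have h := congrArg (fun t : ℝ => (t : ℂ)) (dp_shift2 (2 * m) (2 * l + -(1/2)))
    simp only [poch_succ]
    push_cast at h ⊢
    rw [show (2 * ((l : ℝ) + 1) + -(1/2)) = 2 * l + -(1/2) + 2 by ring]
    linear_combination 1/4 * (poch (1 / 4 - m) l * poch (3 / 4 - m) l) * h + (1 / 4 + l) * (3 / 4 + l) * ih

lemma dp_c2 (m l : ℕ) : ((dp (2 * m) (-2 * l + -(1/2)) : ℝ) : ℂ) * (poch (1 / 4) l * poch (3 / 4) l) =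
    (dp (2 * m) (-(1/2)) : ℝ) * (poch (1 / 4 + m) l * poch (3 / 4 + m) l) := by
  induction l with
  | zero => simp [poch]
  | succ l ih =>
    have h := congrArg (fun t : ℝ => (t : ℂ)) (dp_shift2 (2 * m) (-2 * l + -(5/2)))
    rw [show (-2 * (l:ℝ) + -(5/2) + 2) = -2 * l + -(1/2) by ring] at h
    simp only [poch_succ]
    push_cast at h ⊢
    rw [show (-2 * ((l : ℝ) + 1) + -(1/2)) = -2 * l + -(5/2) by ring]
    linear_combination -1/4 * (poch (1 / 4) l * poch (3 / 4) l) * h + (1 / 4 + m + l) * (3 / 4 + m + l) * ih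

lemma dp_gamma (m : ℕ) : Real.Gamma (2 * m + 1 / 2) = dp (2 * m) (-(1/2)) * √π := by
  induction m with
  | zero =>
    have := Real.Gamma_one_half_eq
    simp [dp] at this ⊢
    exact this
  | succ m ih =>
    have e1 : (2 * ((m + 1 : ℕ) : ℝ) + 1 / 2) = (2 * m + 1 / 2 + 1) + 1 := by push_cast; ring
    rw [e1, Real.Gamma_add_one (by positivity), Real.Gamma_add_one (by positivity), ih,
      show 2 * (m + 1) = 2 * m + 1 + 1 by ring, dp_succ, dp_succ]
    push_cast; ring

lemma SS_F (q E : ℝ) (m : ℕ) {y : ℝ} (hy : 0 < y) {a b c d : ℂ} (hc : ∀ l, poch c l ≠ 0) (hd : ∀ l, poch d l ≠ 0)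
    (h : ∀ l : ℕ, ((dp (2 * m) (E * l + -(1/2)) : ℝ) : ℂ) * (poch c l * poch d l) =
    (dp (2 * m) (-(1/2)) : ℝ) * (poch a l * poch b l)) :
    (SS q E (-(1/2)) (2 * m) y : ℂ) = ((y ^ (-(1/2) - 2 * m : ℝ) * dp (2 * m) (-(1/2)) : ℝ) : ℂ) *
      F32 a b 1 c d (q * y ^ E : ℝ) := by
  rw [SS, F32, Complex.ofReal_tsum, ← tsum_mul_left]
  refine tsum_congr fun l => ?_
  rw [tm_eq _ _ _ _ _ hy, poch_one]
  have h1 := hc l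
  have h2 := hd l
  have h3 : (l.factorial : ℂ) ≠ 0 := by exact_mod_cast l.factorial_ne_zero
  have e : ((dp (2 * m) (E * l + -(1/2)) : ℝ) : ℂ) = (dp (2 * m) (-(1/2)) : ℝ) * (poch a l * poch b l) / (poch c l * poch d l) := by
    rw [← h l]; field_simp
  push_cast [e]
  field_simp

lemma SS_step (q β : ℝ) {E : ℝ} (hE : |E| ≤ 2) (p : ℕ) {y : ℝ} (hy : 0 < y) (hq : |q| * y ^ E < 1) :
    SS q E β p y = dp p β * y ^ (β - p) + q * SS q E (β + E) p y := by
  rw [SS, (tm_summable q β hE p hy hq).tsum_eq_zero_add, SS, ← tsum_mul_left]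
  congr 1
  · simp [tm]
  · refine tsum_congr fun l => ?_
    rw [tm, tm, show E * ((l + 1 : ℕ) : ℝ) + β = E * l + (β + E) by push_cast; ring]; ring

lemma hh_value (m n : ℕ) (hn : 0 < n) {x : ℝ} (hx : 0 < x) (hne : x ≠ n) : hh x (2 * m) n =
    (π / 2) * DD (2 * m) n x - √2 * π * (((√x / x) * (n ^ (-(1/2) - 2 * m : ℝ) * dp (2 * m) (-(1/2))) : ℝ) : ℂ) * Wm m n x := by
  have hn0 : (0:ℝ) < n := by exact_mod_cast hn
  have hxc : (x : ℂ) ≠ 0 := by exact_mod_cast hx.ne'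
  have hnc : (n : ℂ) ≠ 0 := by exact_mod_cast hn.ne'
  have p2 : ∀ y : ℝ, y ^ (2:ℝ) = y ^ 2 := fun y => by exact_mod_cast Real.rpow_natCast y 2
  have pm2 : ∀ y : ℝ, 0 < y → y ^ (-2:ℝ) = (y ^ 2)⁻¹ := fun y hy => by rw [Real.rpow_neg hy.le, p2]
  rcases lt_or_gt_of_ne hne with h | h
  · -- x < n
    have hq : ∀ y ∈ Set.Ioi x, |(-x ^ 2)| * y ^ (-2:ℝ) < 1 := by
      intro y hy
      have hy : x < y := hy
      have hy0 := hx.trans hy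
      rw [pm2 y hy0, abs_neg, abs_of_pos (by positivity), ← div_eq_mul_inv, div_lt_one (by positivity)]
      gcongr
    have key := hh_gen hx (U := Set.Ioi x) isOpen_Ioi (fun y hy => hx.trans hy) (G := SS (-x ^ 2) (-2) (-(5/2)))
      (fun y hy => by
        have hy0 : 0 < y := hx.trans hy
        rw [SS_zero _ _ _ hy0 (hq y hy), pm2 y hy0, show (-(5/2) : ℝ) = -(1/2) + -2 by norm_num, Real.rpow_add hy0, pm2 y hy0]
        have : x ^ 2 + y ^ 2 ≠ 0 := by positivity
        have e : 1 - -x ^ 2 * (y ^ 2)⁻¹ = (x ^ 2 + y ^ 2) / y ^ 2 := by field_simp; ring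
        rw [e]; field_simp)
      (fun p y hy => SS_deriv _ _ (by norm_num) p (hx.trans hy) (hq y hy)) (2 * m) n h
    rw [key, Wm, if_neg (not_lt.mpr h.le)]
    have s1 := SS_step (-x ^ 2) (-(1/2)) (E := -2) (by norm_num) (2 * m) hn0 (hq n h)
    have s2 := SS_F (-x ^ 2) (-2) m hn0 (a := 1 / 4 + m) (b := 3 / 4 + m) (poch_ne (a := 1 / 4) (c := 0) (by push_cast; norm_num))
      (poch_ne (a := 3 / 4) (c := 1) (by push_cast; norm_num)) (dp_c2 m)
    rw [show (-(1/2) : ℝ) + -2 = -(5/2) by norm_num] at s1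
    rw [s1, pm2 _ hn0] at s2
    rw [show (-(x:ℂ) ^ 2 / (n:ℂ) ^ 2) = ((-x ^ 2 * ((n:ℝ) ^ 2)⁻¹ : ℝ) : ℂ) by push_cast; ring]
    generalize F32 _ _ _ _ _ _ = F at *
    push_cast at s2 ⊢
    generalize SS _ _ _ _ _ = S at *
    have : (S : ℂ) = ((n:ℝ) ^ (-(1/2) - 2 * m : ℝ) * dp (2 * m) (-(1/2)) : ℝ) * (1 - F) / x ^ 2 := by
      rw [eq_div_iff (by positivity)]
      push_cast
      linear_combination -s2
    rw [this]; push_cast; field_simp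
  · -- n < x
    have hq : ∀ y ∈ Set.Ioo 0 x, |(-(x ^ 2)⁻¹)| * y ^ (2:ℝ) < 1 := by
      intro y hy
      rw [p2 y, abs_neg, abs_of_pos (by positivity), mul_comm, ← div_eq_mul_inv, div_lt_one (by positivity)]
      have := hy.1.le
      have := hy.2
      gcongr
    have key := hh_gen hx (U := Set.Ioo 0 x) isOpen_Ioo (fun y hy => hy.1)
      (G := fun p y => (x ^ 2)⁻¹ * SS (-(x ^ 2)⁻¹) 2 (-(1/2)) p y)
      (fun y hy => by
        have hy0 : 0 < y := hy.1
        rw [SS_zero _ _ _ hy0 (hq y hy), p2 y]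
        have : x ^ 2 + y ^ 2 ≠ 0 := by positivity
        have e : 1 - -(x ^ 2)⁻¹ * y ^ 2 = (x ^ 2 + y ^ 2) / x ^ 2 := by field_simp; ring
        rw [e]; field_simp)
      (fun p y hy => (SS_deriv _ _ (by norm_num) p hy.1 (hq y hy)).const_mul _) (2 * m) n ⟨hn0, h⟩
    rw [key, Wm, if_pos h]
    have s2 := SS_F (-(x ^ 2)⁻¹) 2 m hn0 (a := 1 / 4) (b := 3 / 4) (c := 1 / 4 - m) (d := 3 / 4 - m)
      (poch_ne (c := - 2 * m) (by push_cast; ring))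
      (poch_ne (c := 1 - 2 * m) (by push_cast; ring)) (dp_c1 m)
    rw [p2] at s2
    rw [show (-(n:ℂ) ^ 2 / (x:ℂ) ^ 2) = ((-(x ^ 2)⁻¹ * (n:ℝ) ^ 2 : ℝ) : ℂ) by push_cast; ring]
    generalize F32 _ _ _ _ _ _ = F at *
    push_cast [s2]
    field_simp

end Coal
end

noncomputable section

namespace Coal

open MeasureTheory Set Filter Topology


lemma swap_sum {ι : Type} [Countable ι] {f : ι → ℝ → ℂ} {F : ℝ → ℂ} {c : ι → ℝ} {g : ℝ → ℝ}
    (hm : ∀ i, Measurable (f i)) (hb : ∀ i, ∀ v, 0 < v → ‖f i v‖ ≤ c i * g v) (hc : Summable c)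
    (hg : IntegrableOn g (Set.Ioi 0)) (hF : ∀ v, 0 < v → HasSum (fun i => f i v) (F v)) :
    IntegrableOn F (Set.Ioi 0) ∧ HasSum (fun i => ∫ v in Set.Ioi (0:ℝ), f i v) (∫ v in Set.Ioi (0:ℝ), F v) := by
  constructor
  · have hmF : AEStronglyMeasurable F (volume.restrict (Set.Ioi 0)) := by
      refine aestronglyMeasurable_of_tendsto_ae (u := (atTop : Filter (Finset ι)))
        (f := fun s v => ∑ i ∈ s, f i v) ?_ ?_
      · intro s
        exact (Finset.measurable_fun_sum s fun i _ => hm i).aestronglyMeasurable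
      · filter_upwards [ae_restrict_mem measurableSet_Ioi] with v hv
        exact hF v hv
    refine (hg.const_mul (∑' i, c i)).mono' hmF ?_
    filter_upwards [ae_restrict_mem measurableSet_Ioi] with v hv
    have hs := hc.mul_right (g v)
    have h1 := hF v hv
    rw [← h1.tsum_eq, ← tsum_mul_right]
    exact tsum_of_norm_bounded hs.hasSum (fun i => hb i v hv)
  · refine hasSum_integral_of_dominated_convergence (fun i v => c i * g v) ?_ ?_ ?_ ?_ ?_
    · intro i; exact (hm i).aestronglyMeasurable
    · intro i
      filter_upwards [ae_restrict_mem measurableSet_Ioi] with v hv using hb i v hv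
    · exact Eventually.of_forall fun v => hc.mul_right (g v)
    · simp_rw [tsum_mul_right]
      exact hg.const_mul _
    · filter_upwards [ae_restrict_mem measurableSet_Ioi] with v hv using hF v hv

lemma j_summable : Summable (fun j : ℕ => ((j : ℝ) + 1) ^ (-(5 / 4) : ℝ)) := by
  have := (summable_nat_add_iff 1).mpr (Real.summable_nat_rpow.mpr (by norm_num : (-(5/4) : ℝ) < -1))
  simpa using this

lemma PP_meas (m : ℕ) (y : ℝ) {g : ℝ → ℝ} (hg : Measurable g) : Measurable (fun v : ℝ => PP m y (om * (g v : ℝ))) := by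
  unfold PP; fun_prop

lemma om_re_mul {τ : ℝ} (h : 0 < τ) : 0 < (om * τ).re := by
  have := om_re_pos
  rw [Complex.re_mul_ofReal]; positivity

def GT (m : ℕ) (u : ℂ) : ℂ := GG m u - P0 m - CC m * (u⁻¹) ^ (2 * m + 1)

lemma PP_bound' (m j : ℕ) {ρ : ℝ} (hρ : 0 < ρ) :
    ‖CC m * PP m ((j:ℝ) + 1) (om * ρ)‖ ≤ (‖CC m‖ * KK m * ((j : ℝ) + 1) ^ (-(5 / 4) : ℝ)) * AA ρ := by
  rw [norm_mul, mul_assoc, mul_assoc]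
  gcongr
  rw [← mul_assoc]
  exact PP_bound m (by linarith [(Nat.cast_nonneg j : (0:ℝ) ≤ j)]) hρ

lemma VV_hasSum {ι : Type} {f : ι → ℂ} {S : ℂ} (h : HasSum f S) : HasSum (fun i => VV (f i)) (VV S) := by
  have h1 := Complex.ofRealCLM.hasSum ((Complex.imCLM.hasSum (h.mul_left kap⁻¹)).mul_left (-(2 * √2)))
  exact h1

lemma term4 (m : ℕ) {x : ℝ} (hx : 0 < x) :
    IntegrableOn (fun v : ℝ => P0 0 * GT m (om * (x / v ^ 2 : ℝ))) (Set.Ioi 0) ∧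
    VV (∫ v in Set.Ioi (0:ℝ), P0 0 * GT m (om * (x / v ^ 2 : ℝ))) = 0 := by
  have key := swap_sum (ι := ℕ) (f := fun j v => P0 0 * (CC m * PP m ((j:ℝ) + 1) (om * (x / v ^ 2 : ℝ))))
    (F := fun v => P0 0 * GT m (om * (x / v ^ 2 : ℝ)))
    (c := fun j => ‖P0 0‖ * (‖CC m‖ * KK m * ((j : ℝ) + 1) ^ (-(5 / 4) : ℝ))) (g := fun v => AA (x / v ^ 2))
    (fun j => ((PP_meas m _ (by fun_prop)).const_mul _).const_mul _)
    (fun j v hv => by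
      rw [norm_mul, mul_assoc]
      gcongr
      exact PP_bound' m j (by positivity))
    ((j_summable.mul_left _).mul_left _) (AA_int1 hx)
    (fun v hv => (GG_expand m (om_re_mul (by positivity))).mul_left _)
  refine ⟨key.1, ?_⟩
  have h := VV_hasSum key.2
  refine h.unique ?_
  have : ∀ j : ℕ, VV (∫ v in Set.Ioi (0:ℝ), P0 0 * (CC m * PP m ((j:ℝ) + 1) (om * (x / v ^ 2 : ℝ)))) = 0 := by
    intro j
    have h1 := JJ_one_im hx (2 * m) (y := (j:ℝ) + 1) (by positivity)
    have e : (∫ v in Set.Ioi (0:ℝ), P0 0 * (CC m * PP m ((j:ℝ) + 1) (om * (x / v ^ 2 : ℝ)))) =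
      ((-(1/2) * ((2 * m).factorial / (2 * π) ^ (2 * m + 1)) * ((-1) ^ m / (2 * m).factorial) : ℝ) : ℂ) * JJ (fun _ => 1) x (2 * m) (j + 1) := by
      rw [JJ, ← integral_const_mul]
      congr 1
      ext v
      rw [PP_eq, P0, if_pos rfl, CC]
      push_cast; ring
    rw [VV, e, mul_left_comm, Complex.im_ofReal_mul, show (kap⁻¹ * JJ (fun _ => 1) x (2 * m) ((j:ℝ) + 1)).im = 0 by exact_mod_cast h1]
    simp
  rw [funext this]
  exact hasSum_zero

lemma PP_scale0 {k : ℝ} (hk : 0 < k) (w : ℂ) : PP 0 k (k * w) = (k:ℂ)⁻¹ * PP 0 1 w := by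
  have hkc : (k:ℂ) ≠ 0 := by exact_mod_cast hk.ne'
  rw [PP, PP, show (k:ℂ) * w + I * k = k * (w + I * (1:ℝ)) by push_cast; ring,
    show (k:ℂ) * w - I * k = k * (w - I * (1:ℝ)) by push_cast; ring, mul_inv, mul_inv]
  ring

lemma PP_scale (m : ℕ) {k : ℝ} (hk : 0 < k) (j : ℝ) (w : ℂ) : PP m j (w / k) = (k:ℂ) ^ (2 * m + 1) * PP m (k * j) w := by
  have hkc : (k:ℂ) ≠ 0 := by exact_mod_cast hk.ne'
  rw [PP, PP, show w / (k:ℂ) + I * j = (w + I * ((k * j : ℝ) : ℂ)) / k by push_cast; field_simp,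
    show w / (k:ℂ) - I * j = (w - I * ((k * j : ℝ) : ℂ)) / k by push_cast; field_simp, inv_div, inv_div,
    div_eq_mul_inv, div_eq_mul_inv, mul_pow, mul_pow]
  ring

lemma scale_int (m : ℕ) {x k : ℝ} (hk : 0 < k) (j : ℝ) :
    ∫ v in Set.Ioi (0:ℝ), PP 0 k (om * (v ^ 2 : ℝ)) * PP m j (om * (x / v ^ 2 : ℝ)) =
     ((k ^ (2 * m + 1 / 2 : ℝ) : ℝ) : ℂ) * ((-1) ^ m / (2 * m).factorial * JJ Km x (2 * m) (k * j)) := by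
  have hs : 0 < √k := Real.sqrt_pos.mpr hk
  have hs2 : √k ^ 2 = k := Real.sq_sqrt hk.le
  have hkc : (k:ℂ) ≠ 0 := by exact_mod_cast hk.ne'
  have h := integral_comp_mul_left_Ioi (fun v : ℝ => PP 0 k (om * (v ^ 2 : ℝ)) * PP m j (om * (x / v ^ 2 : ℝ))) 0 hs
  rw [mul_zero] at h
  have e : ∀ v : ℝ, PP 0 k (om * ((√k * v) ^ 2 : ℝ)) * PP m j (om * (x / (√k * v) ^ 2 : ℝ)) =
      ((k:ℂ) ^ (2 * m) * ((-1) ^ m / (2 * m).factorial)) * (Km v * DD (2 * m) (k * j) (om * (x / v ^ 2 : ℝ))) := by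
    intro v
    rw [mul_pow, hs2, show om * ((k * v ^ 2 : ℝ) : ℂ) = k * (om * (v ^ 2 : ℝ)) by push_cast; ring, PP_scale0 hk,
      show om * ((x / (k * v ^ 2) : ℝ) : ℂ) = (om * (x / v ^ 2 : ℝ)) / k by push_cast; field_simp, PP_scale m hk, PP_eq m, Km]
    rw [pow_succ]; field_simp; ring
  simp_rw [e] at h
  rw [integral_const_mul, Complex.real_smul] at h
  have hk2 : ((k ^ (2 * m + 1 / 2 : ℝ) : ℝ) : ℂ) = √k * (k:ℂ) ^ (2 * m) := by
    have : k ^ (2 * m + 1 / 2 : ℝ) = √k * k ^ (2 * m) := by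
      rw [Real.rpow_add hk, ← Real.sqrt_eq_rpow, mul_comm]; congr 1; exact_mod_cast Real.rpow_natCast k (2 * m)
    rw [this]; push_cast; ring
  have hsc : ((√k : ℝ) : ℂ) ≠ 0 := by exact_mod_cast hs.ne'
  rw [hk2, JJ]
  push_cast at h ⊢
  rw [eq_inv_mul_iff_mul_eq₀ hsc] at h
  rw [← h]; ring

lemma GT_sum (m : ℕ) {τ : ℝ} (hτ : 0 < τ) :
    HasSum (fun j : ℕ => CC m * PP m ((j : ℝ) + 1) (om * τ)) (GT m (om * τ)) ∧
    Summable (fun j : ℕ => ‖CC m * PP m ((j : ℝ) + 1) (om * τ)‖) :=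
  ⟨GG_expand m (om_re_mul hτ), Summable.of_nonneg_of_le (fun _ => norm_nonneg _) (fun j => PP_bound' m j hτ)
    ((j_summable.mul_left _).mul_right _)⟩

lemma GT_prod (m : ℕ) {τ τ' : ℝ} (hτ : 0 < τ) (hτ' : 0 < τ') :
    HasSum (fun p : ℕ × ℕ => CC 0 * PP 0 ((p.1 : ℝ) + 1) (om * τ) * (CC m * PP m ((p.2 : ℝ) + 1) (om * τ')))
      (GT 0 (om * τ) * GT m (om * τ')) := by
  have a := GT_sum 0 hτ
  have b := GT_sum m hτ'
  generalize GT 0 (om * τ) = A at *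
  generalize GT m (om * τ') = B at *
  generalize CC 0 = c at *
  generalize CC m = d at *
  have e1 : ∃ f : ℕ → ℂ, f = fun j : ℕ => c * PP 0 ((j : ℝ) + 1) (om * τ) := ⟨_, rfl⟩
  have e2 : ∃ f : ℕ → ℂ, f = fun j : ℕ => d * PP m ((j : ℝ) + 1) (om * τ') := ⟨_, rfl⟩
  obtain ⟨f, hf⟩ := e1
  obtain ⟨g, hg⟩ := e2
  have hf1 : HasSum f A := hf ▸ a.1
  have hg1 : HasSum g B := hg ▸ b.1
  have hf2 : Summable (fun j => ‖f j‖) := by rw [hf]; exact a.2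
  have hg2 : Summable (fun j => ‖g j‖) := by rw [hg]; exact b.2
  have h := hf1.mul hg1 (summable_mul_of_summable_norm hf2 hg2)
  exact hs_of h (fun p => by rw [hf, hg]) rfl

lemma term5 (m : ℕ) {x : ℝ} (hx : 0 < x) :
    IntegrableOn (fun v : ℝ => GT 0 (om * (v ^ 2 : ℝ)) * GT m (om * (x / v ^ 2 : ℝ))) (Set.Ioi 0) ∧
    HasSum (fun n : ℕ => (rsigma (2 * m + 1 / 2) (n + 1) : ℂ) * (CC 0 * CC m * ((-1) ^ m / (2 * m).factorial) * JJ Km x (2 * m) ((n + 1 : ℕ) : ℝ)))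
      (∫ v in Set.Ioi (0:ℝ), GT 0 (om * (v ^ 2 : ℝ)) * GT m (om * (x / v ^ 2 : ℝ))) := by
  have key := swap_sum (ι := ℕ × ℕ) (f := fun p v => CC 0 * PP 0 ((p.1:ℝ) + 1) (om * (v ^ 2 : ℝ)) * (CC m * PP m ((p.2:ℝ) + 1) (om * (x / v ^ 2 : ℝ))))
    (F := fun v => GT 0 (om * (v ^ 2 : ℝ)) * GT m (om * (x / v ^ 2 : ℝ)))
    (c := fun p => (‖CC 0‖ * KK 0 * ((p.1 : ℝ) + 1) ^ (-(5 / 4) : ℝ)) * (‖CC m‖ * KK m * ((p.2 : ℝ) + 1) ^ (-(5 / 4) : ℝ)))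
    (g := fun v => AA (v ^ 2) * AA (x / v ^ 2))
    (fun j => ((PP_meas 0 _ (by fun_prop)).const_mul _).mul ((PP_meas m _ (by fun_prop)).const_mul _))
    (fun p v hv => by
      rw [norm_mul, mul_mul_mul_comm]
      exact mul_le_mul (PP_bound' 0 p.1 (by positivity)) (PP_bound' m p.2 (by positivity)) (norm_nonneg _)
        (mul_nonneg (mul_nonneg (mul_nonneg (norm_nonneg _) (KK_nonneg 0)) (by positivity)) (AA_nonneg (by positivity))))
    (by
      refine Summable.mul_of_nonneg (j_summable.mul_left _) (j_summable.mul_left _) ?_ ?_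
      · intro j; exact mul_nonneg (mul_nonneg (norm_nonneg _) (KK_nonneg 0)) (by positivity)
      · intro j; exact mul_nonneg (mul_nonneg (norm_nonneg _) (KK_nonneg m)) (by positivity))
    (AA_int2 hx)
    (fun v hv => by
      have hv2 : 0 < v ^ 2 := by positivity
      exact GT_prod m hv2 (div_pos hx hv2))
  refine ⟨key.1, ?_⟩
  refine regroup_sigma (2 * m + 1 / 2) (fun n => CC 0 * CC m * ((-1) ^ m / (2 * m).factorial) * JJ Km x (2 * m) (n : ℝ)) (hs_of key.2 (fun p => ?_) rfl)
  have e : ∀ v : ℝ, CC 0 * PP 0 ((p.1:ℝ) + 1) (om * (v ^ 2 : ℝ)) * (CC m * PP m ((p.2:ℝ) + 1) (om * (x / v ^ 2 : ℝ))) =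
     CC 0 * CC m * (PP 0 ((p.1:ℝ) + 1) (om * (v ^ 2 : ℝ)) * PP m ((p.2:ℝ) + 1) (om * (x / v ^ 2 : ℝ))) := fun v => by ring
  simp_rw [e]
  rw [integral_const_mul, scale_int m (by positivity)]
  push_cast
  ring

end Coal
end

noncomputable section

namespace Coal

open MeasureTheory Set Filter Topology


lemma VV_add (a b : ℂ) : VV (a + b) = VV a + VV b := by
  rw [VV, VV, VV, mul_add, Complex.add_im]; push_cast; ring

lemma int5 {f a b c d e : ℝ → ℂ} (ha : IntegrableOn a (Set.Ioi 0)) (hb : IntegrableOn b (Set.Ioi 0))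
    (hc : IntegrableOn c (Set.Ioi 0)) (hd : IntegrableOn d (Set.Ioi 0)) (he : IntegrableOn e (Set.Ioi 0))
    (h : ∀ v, f v = a v + b v + c v + d v + e v) :
    ∫ v in Set.Ioi (0:ℝ), f v = (∫ v in Set.Ioi (0:ℝ), a v) + (∫ v in Set.Ioi (0:ℝ), b v) +
      (∫ v in Set.Ioi (0:ℝ), c v) + (∫ v in Set.Ioi (0:ℝ), d v) + (∫ v in Set.Ioi (0:ℝ), e v) := by
  have hab := ha.add hb
  have habc := hab.add hc
  have habcd := habc.add hd
  rw [funext h]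
  have e1 := integral_add ha hb
  have e2 := integral_add hab hc
  have e3 := integral_add habc hd
  have e4 := integral_add habcd he
  simp only [Pi.add_apply] at e1 e2 e3 e4
  rw [e4, e3, e2, e1]

lemma VV_real (r : ℝ) (z : ℂ) : VV (r * z) = r * VV z := by
  rw [VV, VV, mul_left_comm, Complex.im_ofReal_mul]; push_cast; ring

lemma scalA (m : ℕ) {n x : ℝ} (hn : 0 < n) (hx : 0 < x) :
    √x / π ^ (2 * (m:ℝ) + 1 / 2) * (n ^ (-(2 * (m:ℝ)) - 3 / 2) * (((2 * m).factorial : ℝ) / √π * (n / (2 * x)) ^ (2 * (m:ℝ) + 3 / 2))) =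
    √2 / 2 * ((2 * m).factorial : ℝ) / ((2 * π) ^ (2 * m + 1) * x ^ (2 * m + 1)) := by
  have hpi := Real.pi_pos
  have e : ∀ y : ℝ, 0 < y → y ^ (2 * (m:ℝ) + 1 / 2) = y ^ (2 * m) * √y := fun y hy => by
    rw [Real.rpow_add hy, ← Real.sqrt_eq_rpow]; congr 1; exact_mod_cast Real.rpow_natCast y (2 * m)
  have e3 : ∀ y : ℝ, 0 < y → y ^ (2 * (m:ℝ) + 3 / 2) = y ^ (2 * m) * √y * y := fun y hy => by
    rw [← e y hy, ← Real.rpow_add_one hy.ne']; congr 1; ring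
  rw [show -(2 * (m:ℝ)) - 3 / 2 = - (2 * (m:ℝ) + 3 / 2) by ring, Real.rpow_neg hn.le, e3 n hn, e3 _ (by positivity), e π hpi,
    Real.sqrt_div hn.le, Real.sqrt_mul (by norm_num : (0:ℝ) ≤ 2)]
  have h2 : √2 ^ 2 = 2 := Real.sq_sqrt (by norm_num)
  have h3 : √π ^ 2 = π := Real.sq_sqrt hpi.le
  have : 0 < √n := by positivity
  have : 0 < √x := by positivity
  have : 0 < √π := by positivity
  have : 0 < √2 := by positivity
  rw [div_pow, mul_pow, mul_pow, pow_succ, pow_succ, pow_succ]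
  field_simp
  rw [h3, h2]; ring

lemma scalB (m : ℕ) {n x d : ℝ} (hn : 0 < n) (hx : 0 < x) :
    √x / π ^ (2 * (m:ℝ) + 1 / 2) * (n ^ (-(2 * (m:ℝ)) - 3 / 2) * (n / (2 ^ (2 * m) * π * x) * (d * √π))) =
    2 / (2 * π) ^ (2 * m + 1) * (√x / x * (n ^ (-(1/2) - 2 * (m:ℝ)) * d)) := by
  have hpi := Real.pi_pos
  have e : ∀ y : ℝ, 0 < y → y ^ (2 * (m:ℝ) + 1 / 2) = y ^ (2 * m) * √y := fun y hy => by
    rw [Real.rpow_add hy, ← Real.sqrt_eq_rpow]; congr 1; exact_mod_cast Real.rpow_natCast y (2 * m)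
  have e3 : n ^ (-(1/2) - 2 * (m:ℝ)) = n ^ (-(2 * (m:ℝ)) - 3 / 2) * n := by
    rw [← Real.rpow_add_one hn.ne']; congr 1; ring
  rw [e3, e π hpi]
  have : 0 < √x := by positivity
  have : 0 < √π := by positivity
  rw [pow_succ, mul_pow]
  field_simp

lemma PP_x (m : ℕ) (n : ℕ) {x : ℝ} (hx : 0 < x) : PP m (n + 1 : ℕ) x = ((x:ℂ) ^ (2 * m + 1))⁻¹ *
      ((1 + Complex.I * ((n : ℂ) + 1) / (x : ℂ)) ^ (-(2 * (m : ℤ) + 1)) +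
                  (1 - Complex.I * ((n : ℂ) + 1) / (x : ℂ)) ^ (-(2 * (m : ℤ) + 1))) := by
  have hxc : (x : ℂ) ≠ 0 := by exact_mod_cast hx.ne'
  have z : ∀ a : ℂ, a ^ (-(2 * (m : ℤ) + 1)) = (a⁻¹) ^ (2 * m + 1) := fun a => by
    rw [zpow_neg, ← inv_zpow]; exact_mod_cast zpow_natCast a⁻¹ (2 * m + 1)
  rw [z, z, mul_add, ← inv_pow, ← mul_pow, ← mul_pow, ← mul_inv, ← mul_inv, PP]
  congr 3
  · push_cast; field_simp
  · push_cast; field_simp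

lemma term_match (m n : ℕ) {x : ℝ} (hx : 0 < x) (hne : x ≠ ((n + 1 : ℕ) : ℝ)) :
    VV ((rsigma (2 * m + 1 / 2) (n + 1) : ℂ) * (CC 0 * CC m * ((-1) ^ m / (2 * m).factorial) * JJ Km x (2 * m) ((n + 1 : ℕ) : ℝ))) =
    (Real.sqrt x : ℂ) / (((π : ℝ) ^ (2 * (m : ℝ) + 1 / 2) : ℝ) : ℂ) *
          (((rsigma (2 * m + 1 / 2) (n + 1) : ℝ) : ℂ) *
            ((((n : ℝ) + 1) ^ (-(2 * (m : ℝ)) - 3 / 2) : ℝ) : ℂ) *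
            (-(((Nat.factorial (2 * m) : ℝ) / Real.sqrt π : ℝ) : ℂ) *
                (((((n : ℝ) + 1) / (2 * x)) ^ (2 * (m : ℝ) + 3 / 2) : ℝ) : ℂ) *
                ((1 + Complex.I * ((n : ℂ) + 1) / (x : ℂ)) ^ (-(2 * (m : ℤ) + 1)) +
                  (1 - Complex.I * ((n : ℂ) + 1) / (x : ℂ)) ^ (-(2 * (m : ℤ) + 1)))
              + (-1 : ℂ) ^ m * ((n : ℂ) + 1) /
                  ((((2 : ℝ) ^ (2 * m) : ℝ) : ℂ) * (π : ℂ) * (x : ℂ)) *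
                  ((Real.Gamma (2 * m + 1 / 2) : ℝ) : ℂ) * Wm m (n + 1) x)) := by
  have hn : (0:ℝ) < (n:ℝ) + 1 := by positivity
  have hpi := Real.pi_pos
  have hpic : (π : ℂ) ≠ 0 := by exact_mod_cast hpi.ne'
  have hxc : (x : ℂ) ≠ 0 := by exact_mod_cast hx.ne'
  have hfc : ((2 * m).factorial : ℂ) ≠ 0 := by exact_mod_cast (2 * m).factorial_ne_zero
  have h1 := hh_value m (n + 1) n.succ_pos hx hne
  have hP := PP_eq m ((n + 1 : ℕ) : ℝ) (x : ℂ)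
  have hP2 := PP_x m n hx
  have hs1 : ((-1:ℂ) ^ m) * (-1) ^ m = 1 := by rw [← mul_pow]; simp
  rw [dp_gamma]
  have A := congrArg (fun t : ℝ => (t : ℂ)) (scalA m hn hx)
  have B := congrArg (fun t : ℝ => (t : ℂ)) (scalB m (d := dp (2 * m) (-(1/2))) hn hx)
  set Q := ((1 + Complex.I * ((n : ℂ) + 1) / (x : ℂ)) ^ (-(2 * (m : ℤ) + 1)) +
                  (1 - Complex.I * ((n : ℂ) + 1) / (x : ℂ)) ^ (-(2 * (m : ℤ) + 1))) with hQ
  rw [hP2] at hP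
  have hD : DD (2 * m) ((n + 1 : ℕ) : ℝ) x = (-1) ^ m * (2 * m).factorial * (((x:ℂ) ^ (2 * m + 1))⁻¹ * Q) := by
    rw [hP]; field_simp
    linear_combination (-(DD (2 * m) ((n + 1 : ℕ) : ℝ) x)) * hs1
  rw [VV_real, show CC 0 * CC m * ((-1) ^ m / (2 * m).factorial) * JJ Km x (2 * m) ((n + 1 : ℕ) : ℝ) =
    ((1 / (2 * π) * (1 / (2 * π) ^ (2 * m + 1)) * (-1) ^ m : ℝ) : ℂ) * JJ Km x (2 * m) ((n + 1 : ℕ) : ℝ) by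
      congr 1
      rw [CC, CC]; push_cast; simp; field_simp, VV_real]
  have hV : VV (JJ Km x (2 * m) ((n + 1 : ℕ) : ℝ)) = -(2 * √2) * hh x (2 * m) ((n + 1 : ℕ) : ℝ) := by
    rw [VV, hh]; push_cast; ring
  rw [hV, h1, hD]
  have hs2 : (√2 : ℂ) ^ 2 = 2 := by exact_mod_cast Real.sq_sqrt (by norm_num : (0:ℝ) ≤ 2)
  have hc : (((n + 1 : ℕ) : ℝ)) = (n:ℝ) + 1 := by push_cast; ring
  rw [hc]
  generalize Wm m (n + 1) x = W at *
  generalize rsigma (2 * m + 1 / 2) (n + 1) = σ at *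
  clear_value Q
  simp only [Complex.ofReal_mul, Complex.ofReal_div, Complex.ofReal_pow, Complex.ofReal_add, Complex.ofReal_ofNat, Complex.ofReal_natCast, Complex.ofReal_one, Complex.ofReal_neg] at A B ⊢
  have L : (σ : ℂ) * (1 / (2 * π) * (1 / (2 * π) ^ (2 * m + 1)) * (-1) ^ m *
      (-(2 * √2) * (π / 2 * ((-1) ^ m * ((2 * m).factorial) * (((x:ℂ) ^ (2 * m + 1))⁻¹ * Q)) -
        √2 * π * (√x / x * ((((n:ℝ) + 1) ^ (-(1/2) - 2 * (m:ℝ)) : ℝ) * (dp (2 * m) (-(1/2)) : ℝ))) * W))) =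
      σ * (- (√2 / 2 * ((2 * m).factorial) / ((2 * π) ^ (2 * m + 1) * x ^ (2 * m + 1))) * Q +
       (-1) ^ m * (2 / (2 * π) ^ (2 * m + 1) * (√x / x * ((((n:ℝ) + 1) ^ (-(1/2) - 2 * (m:ℝ)) : ℝ) * (dp (2 * m) (-(1/2)) : ℝ)))) * W) := by
    generalize (√x / x * ((((n:ℝ) + 1) ^ (-(1/2) - 2 * (m:ℝ)) : ℝ) * (dp (2 * m) (-(1/2)) : ℝ)) : ℂ) = Z
    have hp2 : ((2:ℂ) * π) ^ (2 * m + 1) ≠ 0 := by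
      apply pow_ne_zero; simp [Real.pi_ne_zero]
    have hx2 : (x:ℂ) ^ (2 * m + 1) ≠ 0 := pow_ne_zero _ hxc
    generalize ((2:ℂ) * π) ^ (2 * m + 1) = R at *
    generalize (x:ℂ) ^ (2 * m + 1) = X at *
    generalize ((-1:ℂ)) ^ m = s at *
    generalize ((2 * m).factorial : ℂ) = f at *
    field_simp
    linear_combination σ * ((-√2 * f * Q) * hs1 + (2 * s * X * Z * W) * hs2)
  rw [L, ← A, ← B]
  ring

end Coal
end

theorem coalescence_plus (m : ℕ) (x : ℝ) (hx : 0 < x) (hxint : ∀ k : ℤ, x ≠ (k : ℝ)) :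
    (∑' n : ℕ, ((rsigma (2 * m + 1 / 2) (n + 1) / Real.sqrt ((n : ℝ) + 1) *
        Real.exp (-(2 * π * Real.sqrt (2 * ((n : ℝ) + 1) * x))) *
        Real.sin (π / 4 + 2 * π * Real.sqrt (2 * ((n : ℝ) + 1) * x)) : ℝ) : ℂ))
    = riemannZeta (1 / 2 - 2 * m) / (2 * (π : ℂ) * (Real.sqrt x : ℂ))
      - ((Nat.factorial (2 * m) : ℂ) * riemannZeta (-1 / 2 - 2 * m)) /
          ((Real.sqrt 2 : ℂ) * (((2 * π * x) ^ (2 * m + 1) : ℝ) : ℂ))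
      + (1 / (Real.sqrt 2 : ℂ)) * riemannZeta (1 / 2) * riemannZeta (-2 * m)
      + (Real.sqrt x : ℂ) / (((π : ℝ) ^ (2 * (m : ℝ) + 1 / 2) : ℝ) : ℂ) *
        ∑' n : ℕ,
          ((rsigma (2 * m + 1 / 2) (n + 1) : ℝ) : ℂ) *
            ((((n : ℝ) + 1) ^ (-(2 * (m : ℝ)) - 3 / 2) : ℝ) : ℂ) *
            (-(((Nat.factorial (2 * m) : ℝ) / Real.sqrt π : ℝ) : ℂ) *
                (((((n : ℝ) + 1) / (2 * x)) ^ (2 * (m : ℝ) + 3 / 2) : ℝ) : ℂ) *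
                ((1 + Complex.I * ((n : ℂ) + 1) / (x : ℂ)) ^ (-(2 * (m : ℤ) + 1)) +
                  (1 - Complex.I * ((n : ℂ) + 1) / (x : ℂ)) ^ (-(2 * (m : ℤ) + 1)))
              + (-1 : ℂ) ^ m * ((n : ℂ) + 1) /
                  ((((2 : ℝ) ^ (2 * m) : ℝ) : ℂ) * (π : ℂ) * (x : ℂ)) *
                  ((Real.Gamma (2 * m + 1 / 2) : ℝ) : ℂ) * Wm m (n + 1) x) := by
  open Coal MeasureTheory in
  rw [lhs_final m hx, ← tsum_mul_left]
  have hv := VV_hasSum (term5 m hx).2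
  rw [← tsum_congr (fun n => term_match m n hx (by exact_mod_cast hxint ((n + 1 : ℕ) : ℤ))), hv.tsum_eq]
  have t1 := T1 m hx
  have t2 := T2 m
  have t3 := T3 m hx
  have t4 := term4 m hx
  have t5 := term5 m hx
  have hI : (∫ v in Set.Ioi (0:ℝ), GG 0 (om * (v ^ 2 : ℝ)) * GG m (om * (x / v ^ 2 : ℝ))) =
      (∫ v in Set.Ioi (0:ℝ), GG 0 (om * (v ^ 2 : ℝ)) * (CC m * ((om * (x / v ^ 2 : ℝ))⁻¹) ^ (2 * m + 1))) +
      (∫ v in Set.Ioi (0:ℝ), (GG 0 (om * (v ^ 2 : ℝ)) - CC 0 * ((om * (v ^ 2 : ℝ))⁻¹) ^ (2 * 0 + 1)) * P0 m) +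
      (∫ v in Set.Ioi (0:ℝ), CC 0 * ((om * (v ^ 2 : ℝ))⁻¹) ^ (2 * 0 + 1) *
        (GG m (om * (x / v ^ 2 : ℝ)) - CC m * ((om * (x / v ^ 2 : ℝ))⁻¹) ^ (2 * m + 1))) +
      (∫ v in Set.Ioi (0:ℝ), P0 0 * GT m (om * (x / v ^ 2 : ℝ))) +
      (∫ v in Set.Ioi (0:ℝ), GT 0 (om * (v ^ 2 : ℝ)) * GT m (om * (x / v ^ 2 : ℝ))) := by
    refine int5 t1.1 t2.1 t3.1 t4.1 t5.1 (fun v => ?_)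
    simp only [GT]
    ring
  change VV _ = _
  rw [hI, VV_add, VV_add, VV_add, VV_add, t4.2, t1.2, t2.2, t3.2, V1 m hx, V2, V3 m hx]
  ring
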